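/- arXiv:1406.0168 — 2 statements merged into one kernel-verified Lean document; each statement's English description precedes it below -/
import Mathlib

section
/- Let N > 13 be a real number and C₀, C₁, C₂ > 0. Let T > 0, let f : [0,T) × ℝ² × ℝ² → [0,∞) be measurable with f ≤ C₀ almost everywhere and sup_{0 ≤ t < T} ∫_{ℝ²}∫_{ℝ²} p_0 f(t,x,p) dp dx ≤ C₁, and let K : [0,T) × ℝ² → [0,∞) be measurable with sup_{0 ≤ t < T} ( ∫_{ℝ²} K(t,x)² dx )^{1/2} ≤ C₂. Define W_{S,1}(t,x) = ∫₀ᵗ ∫_{|y−x| ≤ t−s} ∫_{ℝ²} K(s,y) f(s,y,p) / ( p_0 √((t−s)² − |y−x|²) ) dp dy ds (the integral dominating the Glassey–Schaeffer term K_{S,1} in two dimensions). Then there exist constants C > 0 and k ≥ 0, depending only on N, C₀, C₁ and C₂ (not on T), such that ‖W_{S,1}‖_{L¹_t([0,T); L^{N+2}_x)}^{N+2} ≤ C (1+T)^k ‖f p_0^N‖_{L^∞_t([0,T); L¹_x L¹_p)}^{(N−4)/(2(N−1))}. -/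
open MeasureTheory Set
open scoped NNReal ENNReal

/-- `p₀ = √(1 + |p|²)` for `p ∈ ℝ²`. -/
noncomputable def pZero (p : EuclideanSpace ℝ (Fin 2)) : ℝ := Real.sqrt (1 + ‖p‖ ^ 2)

/-- The integral
`W_{S,1}(t,x) = ∫₀ᵗ∫_{|y−x|≤t−s}∫ K(s,y) f(s,y,p)/(p₀√((t−s)²−|y−x|²)) dp dy ds`
dominating the Glassey–Schaeffer term `K_{S,1}` in two dimensions. -/
noncomputable def WS1 (K : ℝ → EuclideanSpace ℝ (Fin 2) → ℝ)
    (f : ℝ → EuclideanSpace ℝ (Fin 2) → EuclideanSpace ℝ (Fin 2) → ℝ)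
    (t : ℝ) (x : EuclideanSpace ℝ (Fin 2)) : ℝ≥0∞ :=
  ∫⁻ s in Ioc (0 : ℝ) t, ∫⁻ y in {y | dist y x ≤ t - s},
    ∫⁻ p, ENNReal.ofReal (K s y * f s y p /
      (pZero p * Real.sqrt ((t - s) ^ 2 - dist y x ^ 2)))

/-- The `N`-th moment `∫∫ f(t,x,p) p₀^N dp dx` of `f` at time `t`. -/
noncomputable def momentN (f : ℝ → EuclideanSpace ℝ (Fin 2) → EuclideanSpace ℝ (Fin 2) → ℝ)
    (N : ℝ) (t : ℝ) : ℝ≥0∞ :=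
  ∫⁻ x, ∫⁻ p, ENNReal.ofReal (f t x p * pZero p ^ N)

/-!
Minkowski's inequality in time reduces the estimate to `∫₀ᵀ ‖A_τ (K g)‖_{L^r} dτ` with `r = N + 2`,
where `A_τ` integrates over the ball of radius `τ` against `1 / √(τ² - |x - y|²)` and
`g = ∫ f / p₀ dp`. Cut this kernel into its pieces on annuli of relative width `δ / τ`, `δ` dyadic.
Two annuli of radius `τ` whose centres are at distance `d` meet in area `O(δ √(δτ))` divided by
`min(1, d / √(δτ))`; interpolating this against the trivial bounds gives a fixed-time
`L^q → L^r` estimate that involves the maximal function over all centres of `h^{q/2}`. A `TT*`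
argument in the radius bounds this maximal function in `L²(dτ)`, and the piece at scale `δ` costs
`δ^{1 - (3/2)(1/q - 1/r)}`. With `K ∈ L²` and `g ∈ L³ ∩ L^r`, the exponent `q` can be chosen on both
sides of the borderline `1/q - 1/r = 2/3` precisely when `r > 6`, so the sum over `δ` converges
geometrically. Finally `(∫ φ / p₀ dp)^{a+2} ≲ ∫ φ p₀^a dp` for bounded `φ`: the energy (`a = 1`)
controls `g` in `L³`, and the `N`-th moment (`a = N`) controls it in `L^{N+2}`.
-/

local notation "ℝ²" => EuclideanSpace ℝ (Fin 2)

namespace VlasovMaxwell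

section IntegralInequalities

variable {α β : Type*} [MeasurableSpace α] [MeasurableSpace β] {μ : Measure α} {ν : Measure β}

theorem lintegral_rpow_mul_rpow_mul_rpow_le {f g h : α → ℝ≥0∞} (hf : AEMeasurable f μ)
    (hg : AEMeasurable g μ) (hh : AEMeasurable h μ) {a b c : ℝ} (ha : 0 ≤ a) (hb : 0 ≤ b)
    (hc : 0 ≤ c) (habc : a + b + c = 1) :
    ∫⁻ x, f x ^ a * g x ^ b * h x ^ c ∂μ
      ≤ (∫⁻ x, f x ∂μ) ^ a * (∫⁻ x, g x ∂μ) ^ b * (∫⁻ x, h x ∂μ) ^ c := by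
  have holder := ENNReal.lintegral_prod_norm_pow_le (μ := μ) Finset.univ (f := ![f, g, h])
    (by simp [Fin.forall_fin_succ, hf, hg, hh]) (p := ![a, b, c])
    (by simpa [Fin.sum_univ_three] using habc) (by simp [Fin.forall_fin_succ, ha, hb, hc])
  simpa [Fin.prod_univ_three] using holder

theorem le_of_le_mul_rpow {p q : ℝ} (hpq : p.HolderConjugate q) {I C : ℝ≥0∞} (hI : I ≠ ∞)
    (h : I ≤ C * I ^ (1 / q)) : I ^ (1 / p) ≤ C := by
  rcases eq_or_ne I 0 with rfl | hI0
  · simp [hpq.pos]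
  have split : I ^ (1 / p) * I ^ (1 / q) = I := by
    rw [← ENNReal.rpow_add _ _ hI0 hI, one_div, one_div, hpq.inv_add_inv_eq_one, ENNReal.rpow_one]
  have hq : 0 ≤ 1 / q := one_div_nonneg.2 hpq.symm.nonneg
  have hIq0 : I ^ (1 / q) ≠ 0 := (ENNReal.rpow_pos (pos_iff_ne_zero.2 hI0) hI).ne'
  exact (ENNReal.mul_le_mul_iff_left hIq0 (ENNReal.rpow_ne_top_of_nonneg hq hI)).1
    (split.trans_le h)

-- Testing against powers of truncations of `Z` avoids assuming that `∫ Z ^ p` is finite.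
theorem lintegral_rpow_le_of_forall_lintegral_mul_le [SigmaFinite μ] {p q : ℝ}
    (hpq : p.HolderConjugate q) {Z : α → ℝ≥0∞} (hZ : Measurable Z) {C : ℝ≥0∞}
    (h : ∀ G : α → ℝ≥0∞, Measurable G → ∫⁻ a, Z a * G a ∂μ ≤ C * (∫⁻ a, G a ^ q ∂μ) ^ (1 / q)) :
    (∫⁻ a, Z a ^ p ∂μ) ^ (1 / p) ≤ C := by
  set V : ℕ → α → ℝ≥0∞ := fun n => (spanningSets μ n).indicator fun a => min (Z a) n with hV
  have V_meas (n : ℕ) : Measurable (V n) :=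
    (hZ.min measurable_const).indicator (measurableSet_spanningSets μ n)
  have V_le (n : ℕ) (a : α) : V n a ≤ Z a :=
    indicator_apply_le' (fun _ => min_le_left _ _) fun _ => zero_le
  have V_fin (n : ℕ) : ∫⁻ a, V n a ^ p ∂μ ≠ ∞ := by
    refine ne_top_of_le_ne_top (b := (n : ℝ≥0∞) ^ p * μ (spanningSets μ n)) ?_ ?_
    · exact ENNReal.mul_ne_top (ENNReal.rpow_ne_top_of_nonneg hpq.nonneg (ENNReal.natCast_ne_top n))
        (measure_spanningSets_lt_top μ n).ne
    · rw [← lintegral_indicator_const (measurableSet_spanningSets μ n)]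
      refine lintegral_mono fun a => ?_
      by_cases ha : a ∈ spanningSets μ n
      · simp only [hV, indicator_of_mem ha]
        exact ENNReal.rpow_le_rpow (min_le_right _ _) hpq.nonneg
      · simp [hV, indicator_of_notMem ha, hpq.pos]
  have V_bound (n : ℕ) : (∫⁻ a, V n a ^ p ∂μ) ^ (1 / p) ≤ C := by
    refine le_of_le_mul_rpow hpq (V_fin n) ?_
    calc ∫⁻ a, V n a ^ p ∂μ = ∫⁻ a, V n a * V n a ^ (p - 1) ∂μ := by
          refine lintegral_congr fun a => ?_
          conv_lhs => rw [← add_sub_cancel 1 p]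
          rw [ENNReal.rpow_add_of_nonneg _ _ zero_le_one hpq.sub_one_pos.le, ENNReal.rpow_one]
      _ ≤ ∫⁻ a, Z a * V n a ^ (p - 1) ∂μ := by gcongr with a; exact V_le n a
      _ ≤ C * (∫⁻ a, (V n a ^ (p - 1)) ^ q ∂μ) ^ (1 / q) := h _ ((V_meas n).pow_const _)
      _ = C * (∫⁻ a, V n a ^ p ∂μ) ^ (1 / q) := by
          simp only [← ENNReal.rpow_mul, hpq.sub_one_mul_conj]
  have V_tendsto (a : α) : Filter.Tendsto (fun n => V n a) Filter.atTop (nhds (Z a)) := by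
    have lim : Filter.Tendsto (fun n : ℕ => min (Z a) n) Filter.atTop (nhds (min (Z a) ∞)) :=
      tendsto_const_nhds.min ENNReal.tendsto_nat_nhds_top
    rw [min_top_right] at lim
    refine lim.congr' ?_
    filter_upwards [eventually_mem_spanningSets μ a] with n hn
    simp only [hV, indicator_of_mem hn]
  have V_mono (a : α) : Monotone fun n => V n a := fun n m hnm =>
    (indicator_le_indicator_of_subset (monotone_spanningSets μ hnm) (fun _ => zero_le) a).trans
      (indicator_le_indicator (by gcongr))
  have lim : Filter.Tendsto (fun n => ∫⁻ a, V n a ^ p ∂μ) Filter.atTop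
      (nhds (∫⁻ a, Z a ^ p ∂μ)) :=
    lintegral_tendsto_of_tendsto_of_monotone (fun n => ((V_meas n).pow_const p).aemeasurable)
      (.of_forall fun a _ _ hnm => ENNReal.rpow_le_rpow (V_mono a hnm) hpq.nonneg)
      (.of_forall fun a => (ENNReal.continuous_rpow_const.tendsto _).comp (V_tendsto a))
  exact le_of_tendsto' ((ENNReal.continuous_rpow_const.tendsto _).comp lim) V_bound

theorem lintegral_rpow_lintegral_le [SigmaFinite μ] [SFinite ν] {w : β → α → ℝ≥0∞}
    (hw : Measurable (Function.uncurry w)) {p : ℝ} (hp : 1 < p) :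
    (∫⁻ x, (∫⁻ b, w b x ∂ν) ^ p ∂μ) ^ (1 / p) ≤ ∫⁻ b, (∫⁻ x, w b x ^ p ∂μ) ^ (1 / p) ∂ν := by
  have hpq := Real.HolderConjugate.conjExponent hp
  refine lintegral_rpow_le_of_forall_lintegral_mul_le hpq hw.lintegral_prod_left' fun G hG => ?_
  calc ∫⁻ x, (∫⁻ b, w b x ∂ν) * G x ∂μ = ∫⁻ x, ∫⁻ b, w b x * G x ∂ν ∂μ := by
        refine lintegral_congr fun x => (lintegral_mul_const _ ?_).symm
        exact hw.comp (measurable_id.prodMk measurable_const)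
    _ = ∫⁻ b, ∫⁻ x, w b x * G x ∂μ ∂ν :=
        lintegral_lintegral_swap
          ((hw.comp measurable_swap).mul (hG.comp measurable_fst)).aemeasurable
    _ ≤ ∫⁻ b, (∫⁻ x, w b x ^ p ∂μ) ^ (1 / p) * (∫⁻ x, G x ^ p.conjExponent ∂μ)
          ^ (1 / p.conjExponent) ∂ν := by
        gcongr with b
        exact ENNReal.lintegral_mul_le_Lp_mul_Lq μ hpq
          (hw.comp (measurable_const.prodMk measurable_id)).aemeasurable hG.aemeasurable
    _ = _ := lintegral_mul_const _ ((hw.pow_const p).lintegral_prod_right'.pow_const _)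

theorem lintegral_lintegral_mul_le_of_schur [SFinite μ] {k : α → α → ℝ≥0∞}
    (hk : Measurable (Function.uncurry k)) {B : ℝ≥0∞} (hrow : ∀ a, ∫⁻ b, k a b ∂μ ≤ B)
    (hcolumn : ∀ b, ∫⁻ a, k a b ∂μ ≤ B) {u : α → ℝ≥0∞} (hu : Measurable u) :
    ∫⁻ a, ∫⁻ b, k a b * (u a * u b) ∂μ ∂μ ≤ B * ∫⁻ a, u a ^ 2 ∂μ := by
  have row_meas : Measurable fun z : α × α => k z.1 z.2 * u z.1 ^ 2 :=
    hk.mul ((hu.pow_const 2).comp measurable_fst)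
  have column_meas : Measurable fun z : α × α => k z.1 z.2 * u z.2 ^ 2 :=
    hk.mul ((hu.pow_const 2).comp measurable_snd)
  have row : ∫⁻ z, k z.1 z.2 * u z.1 ^ 2 ∂μ.prod μ ≤ B * ∫⁻ a, u a ^ 2 ∂μ := by
    rw [lintegral_prod _ row_meas.aemeasurable, ← lintegral_const_mul _ (hu.pow_const 2)]
    refine lintegral_mono fun a => ?_
    exact (lintegral_mul_const _ hk.of_uncurry_left).trans_le (mul_le_mul_left (hrow a) _)
  have column : ∫⁻ z, k z.1 z.2 * u z.2 ^ 2 ∂μ.prod μ ≤ B * ∫⁻ a, u a ^ 2 ∂μ := by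
    rw [lintegral_prod_symm _ column_meas.aemeasurable, ← lintegral_const_mul _ (hu.pow_const 2)]
    refine lintegral_mono fun b => ?_
    exact (lintegral_mul_const _ hk.of_uncurry_right).trans_le (mul_le_mul_left (hcolumn b) _)
  have young (s t : ℝ≥0∞) : s * t ≤ 2⁻¹ * s ^ 2 + 2⁻¹ * t ^ 2 := by
    simpa [ENNReal.div_eq_inv_mul] using ENNReal.young_inequality s t Real.HolderConjugate.two_two
  calc ∫⁻ a, ∫⁻ b, k a b * (u a * u b) ∂μ ∂μ = ∫⁻ z, k z.1 z.2 * (u z.1 * u z.2) ∂μ.prod μ :=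
        lintegral_lintegral
          (hk.mul ((hu.comp measurable_fst).mul (hu.comp measurable_snd))).aemeasurable
    _ ≤ ∫⁻ z, 2⁻¹ * (k z.1 z.2 * u z.1 ^ 2) + 2⁻¹ * (k z.1 z.2 * u z.2 ^ 2) ∂μ.prod μ := by
        gcongr with z
        exact (mul_le_mul_right (young _ _) _).trans_eq (by ring)
    _ = 2⁻¹ * (∫⁻ z, k z.1 z.2 * u z.1 ^ 2 ∂μ.prod μ)
          + 2⁻¹ * ∫⁻ z, k z.1 z.2 * u z.2 ^ 2 ∂μ.prod μ := by
        rw [lintegral_add_left (row_meas.const_mul _), lintegral_const_mul _ row_meas,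
          lintegral_const_mul _ column_meas]
    _ ≤ 2⁻¹ * (B * ∫⁻ a, u a ^ 2 ∂μ) + 2⁻¹ * (B * ∫⁻ a, u a ^ 2 ∂μ) := by gcongr
    _ = B * ∫⁻ a, u a ^ 2 ∂μ := by rw [← add_mul, ENNReal.inv_two_add_inv_two, one_mul]

theorem lintegral_sq_lintegral_mul_le_of_gram [SFinite μ] [SFinite ν]
    {k : α → β → ℝ≥0∞} (hk : Measurable (Function.uncurry k)) {B : ℝ≥0∞}
    (hB : ∀ a, ∫⁻ a', ∫⁻ y, k a y * k a' y ∂ν ∂μ ≤ B) {G : α → ℝ≥0∞} (hG : Measurable G) :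
    ∫⁻ y, (∫⁻ a, k a y * G a ∂μ) ^ 2 ∂ν ≤ B * ∫⁻ a, G a ^ 2 ∂μ := by
  have gram_meas : Measurable (Function.uncurry fun a a' => ∫⁻ y, k a y * k a' y ∂ν) :=
    ((hk.comp ((measurable_fst.comp measurable_fst).prodMk measurable_snd)).mul
      (hk.comp ((measurable_snd.comp measurable_fst).prodMk measurable_snd))).lintegral_prod_right'
  have kG_meas : Measurable fun z : β × α => k z.2 z.1 * G z.2 :=
    (hk.comp measurable_swap).mul (hG.comp measurable_snd)
  calc ∫⁻ y, (∫⁻ a, k a y * G a ∂μ) ^ 2 ∂ν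
      = ∫⁻ y, ∫⁻ z, k z.1 y * G z.1 * (k z.2 y * G z.2) ∂μ.prod μ ∂ν := by
        refine lintegral_congr fun y => ?_
        have hy : AEMeasurable (fun a => k a y * G a) μ :=
          (kG_meas.comp measurable_prodMk_left).aemeasurable
        rw [sq, lintegral_prod_mul hy hy]
    _ = ∫⁻ z, ∫⁻ y, k z.1 y * G z.1 * (k z.2 y * G z.2) ∂ν ∂μ.prod μ :=
        lintegral_lintegral_swap ((kG_meas.comp (measurable_fst.prodMk
          (measurable_fst.comp measurable_snd))).mul (kG_meas.comp (measurable_fst.prodMk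
          (measurable_snd.comp measurable_snd)))).aemeasurable
    _ = ∫⁻ z, (∫⁻ y, k z.1 y * k z.2 y ∂ν) * (G z.1 * G z.2) ∂μ.prod μ := by
        refine lintegral_congr fun z => ?_
        simp only [mul_mul_mul_comm (k z.1 _)]
        exact lintegral_mul_const _ (hk.of_uncurry_left.mul hk.of_uncurry_left)
    _ = ∫⁻ a, ∫⁻ a', (∫⁻ y, k a y * k a' y ∂ν) * (G a * G a') ∂μ ∂μ :=
        lintegral_prod _ (gram_meas.mul
          ((hG.comp measurable_fst).mul (hG.comp measurable_snd))).aemeasurable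
    _ ≤ B * ∫⁻ a, G a ^ 2 ∂μ :=
        lintegral_lintegral_mul_le_of_schur gram_meas hB
          (fun b => by simpa only [mul_comm] using hB b) hG

theorem lintegral_sq_lintegral_mul_le_of_adjoint [SigmaFinite μ] [SFinite ν]
    {k : α → β → ℝ≥0∞} (hk : Measurable (Function.uncurry k)) {B : ℝ≥0∞}
    (hB : ∀ G : α → ℝ≥0∞, Measurable G →
      ∫⁻ y, (∫⁻ a, k a y * G a ∂μ) ^ 2 ∂ν ≤ B * ∫⁻ a, G a ^ 2 ∂μ)
    {h : β → ℝ≥0∞} (hh : Measurable h) :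
    ∫⁻ a, (∫⁻ y, k a y * h y ∂ν) ^ 2 ∂μ ≤ B * ∫⁻ y, h y ^ 2 ∂ν := by
  have kh_meas : Measurable fun z : α × β => k z.1 z.2 * h z.2 := hk.mul (hh.comp measurable_snd)
  have duality : (∫⁻ a, (∫⁻ y, k a y * h y ∂ν) ^ (2 : ℝ) ∂μ) ^ (1 / (2 : ℝ))
      ≤ (B * ∫⁻ y, h y ^ 2 ∂ν) ^ (1 / (2 : ℝ)) := by
    refine lintegral_rpow_le_of_forall_lintegral_mul_le .two_two kh_meas.lintegral_prod_right'
      fun G hG => ?_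
    have kG_meas : Measurable fun z : β × α => k z.2 z.1 * G z.2 :=
      (hk.comp measurable_swap).mul (hG.comp measurable_snd)
    calc ∫⁻ a, (∫⁻ y, k a y * h y ∂ν) * G a ∂μ = ∫⁻ a, ∫⁻ y, k a y * h y * G a ∂ν ∂μ := by
          refine lintegral_congr fun a => (lintegral_mul_const _ ?_).symm
          exact kh_meas.comp measurable_prodMk_left
      _ = ∫⁻ y, ∫⁻ a, k a y * h y * G a ∂μ ∂ν :=
          lintegral_lintegral_swap (kh_meas.mul (hG.comp measurable_fst)).aemeasurable
      _ = ∫⁻ y, h y * ∫⁻ a, k a y * G a ∂μ ∂ν := by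
          refine lintegral_congr fun y => ?_
          simp only [mul_comm _ (h y), mul_assoc]
          exact lintegral_const_mul _ (kG_meas.comp measurable_prodMk_left)
      _ ≤ (∫⁻ y, h y ^ (2 : ℝ) ∂ν) ^ (1 / (2 : ℝ))
            * (∫⁻ y, (∫⁻ a, k a y * G a ∂μ) ^ (2 : ℝ) ∂ν) ^ (1 / (2 : ℝ)) :=
          ENNReal.lintegral_mul_le_Lp_mul_Lq ν .two_two hh.aemeasurable
            kG_meas.lintegral_prod_right'.aemeasurable
      _ ≤ (∫⁻ y, h y ^ 2 ∂ν) ^ (1 / (2 : ℝ)) * (B * ∫⁻ a, G a ^ 2 ∂μ) ^ (1 / (2 : ℝ)) := by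
          simp only [ENNReal.rpow_two]
          gcongr
          exact hB G hG
      _ = (B * ∫⁻ y, h y ^ 2 ∂ν) ^ (1 / (2 : ℝ)) * (∫⁻ a, G a ^ (2 : ℝ) ∂μ) ^ (1 / (2 : ℝ)) := by
          simp only [ENNReal.rpow_two]
          rw [← ENNReal.mul_rpow_of_nonneg _ _ (by norm_num),
            ← ENNReal.mul_rpow_of_nonneg _ _ (by norm_num), mul_left_comm, mul_assoc]
  simpa only [ENNReal.rpow_two] using (ENNReal.rpow_le_rpow_iff (by norm_num)).1 duality

theorem lintegral_mul_le_of_weight {m D H : β → ℝ≥0∞} (hm : Measurable m) (hD : Measurable D)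
    (hH : Measurable H) (hD0 : ∀ᵐ b ∂ν, D b ≠ 0 ∧ D b ≠ ∞) {q η θ₁ θ₂ θ₃ : ℝ} (hθ₁ : 0 ≤ θ₁)
    (hθ₂ : 0 ≤ θ₂) (hθ₃ : 0 ≤ θ₃) (hθ : θ₁ + θ₂ + θ₃ = 1) (hq : 0 ≤ q)
    (hHq : q * θ₁ + q / 2 * θ₂ + q * θ₃ = 1) (hη : η * θ₂ = θ₃) :
    ∫⁻ b, m b * H b ∂ν ≤ (∫⁻ b, m b * H b ^ q ∂ν) ^ θ₁
      * (∫⁻ b, m b * (D b ^ (-η) * H b ^ (q / 2)) ∂ν) ^ θ₂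
      * (∫⁻ b, m b * (D b * H b ^ q) ∂ν) ^ θ₃ := by
  have factor (b : β) (hb : D b ≠ 0 ∧ D b ≠ ∞) :
      m b * H b = (m b * H b ^ q) ^ θ₁ * (m b * (D b ^ (-η) * H b ^ (q / 2))) ^ θ₂
        * (m b * (D b * H b ^ q)) ^ θ₃ := by
    have hm1 : m b = m b ^ θ₁ * m b ^ θ₂ * m b ^ θ₃ := by
      rw [← ENNReal.rpow_add_of_nonneg _ _ hθ₁ hθ₂, ← ENNReal.rpow_add_of_nonneg _ _
        (by positivity) hθ₃, hθ, ENNReal.rpow_one]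
    have hH1 : H b = H b ^ (q * θ₁) * H b ^ (q / 2 * θ₂) * H b ^ (q * θ₃) := by
      rw [← ENNReal.rpow_add_of_nonneg _ _ (by positivity) (by positivity),
        ← ENNReal.rpow_add_of_nonneg _ _ (by positivity) (by positivity), hHq, ENNReal.rpow_one]
    have hD1 : D b ^ (-η * θ₂) * D b ^ θ₃ = 1 := by
      rw [← ENNReal.rpow_add _ _ hb.1 hb.2, neg_mul, hη, neg_add_cancel, ENNReal.rpow_zero]
    simp only [ENNReal.mul_rpow_of_nonneg _ _ hθ₁, ENNReal.mul_rpow_of_nonneg _ _ hθ₂,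
      ENNReal.mul_rpow_of_nonneg _ _ hθ₃, ← ENNReal.rpow_mul]
    calc m b * H b = (m b ^ θ₁ * m b ^ θ₂ * m b ^ θ₃)
          * (H b ^ (q * θ₁) * H b ^ (q / 2 * θ₂) * H b ^ (q * θ₃))
          * (D b ^ (-η * θ₂) * D b ^ θ₃) := by rw [hD1, mul_one, ← hm1, ← hH1]
      _ = _ := by ring
  rw [lintegral_congr_ae (hD0.mono factor)]
  exact lintegral_rpow_mul_rpow_mul_rpow_le (by fun_prop) (by fun_prop) (by fun_prop) hθ₁ hθ₂ hθ₃ hθ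

theorem lintegral_rpow_lintegral_mul_le_of_weight [SFinite μ] [SFinite ν] {m : α → β → ℝ≥0∞}
    (hm : Measurable (Function.uncurry m)) {D H : β → ℝ≥0∞} (hD : Measurable D) (hH : Measurable H)
    (hD0 : ∀ᵐ b ∂ν, D b ≠ 0 ∧ D b ≠ ∞) {q η θ₁ θ₂ θ₃ : ℝ} (hθ₁ : 0 ≤ θ₁) (hθ₂ : 0 ≤ θ₂)
    (hθ₃ : 0 < θ₃) (hθ : θ₁ + θ₂ + θ₃ = 1) (hq : 0 ≤ q) (hHq : q * θ₁ + q / 2 * θ₂ + q * θ₃ = 1)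
    (hη : η * θ₂ = θ₃) {A R Q : ℝ≥0∞} (hA : ∀ a, ∫⁻ b, m a b * H b ^ q ∂ν ≤ A)
    (hR : ∀ a, ∫⁻ b, m a b * (D b ^ (-η) * H b ^ (q / 2)) ∂ν ≤ R)
    (hQ : ∀ b, D b * ∫⁻ a, m a b ∂μ ≤ Q) :
    (∫⁻ a, (∫⁻ b, m a b * H b ∂ν) ^ (1 / θ₃) ∂μ) ^ θ₃
      ≤ A ^ θ₁ * R ^ θ₂ * (Q * ∫⁻ b, H b ^ q ∂ν) ^ θ₃ := by
  have weighted_meas : Measurable fun z : α × β => m z.1 z.2 * (D z.2 * H z.2 ^ q) :=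
    hm.mul ((hD.mul (hH.pow_const q)).comp measurable_snd)
  have pointwise (a : α) : (∫⁻ b, m a b * H b ∂ν) ^ (1 / θ₃)
      ≤ (A ^ θ₁ * R ^ θ₂) ^ (1 / θ₃) * ∫⁻ b, m a b * (D b * H b ^ q) ∂ν :=
    calc (∫⁻ b, m a b * H b ∂ν) ^ (1 / θ₃)
        ≤ (A ^ θ₁ * R ^ θ₂ * (∫⁻ b, m a b * (D b * H b ^ q) ∂ν) ^ θ₃) ^ (1 / θ₃) := by
          gcongr
          refine (lintegral_mul_le_of_weight hm.of_uncurry_left hD hH hD0 hθ₁ hθ₂ hθ₃.le hθ hq hHq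
            hη).trans ?_
          gcongr
          · exact hA a
          · exact hR a
      _ = _ := by
          rw [ENNReal.mul_rpow_of_nonneg _ _ (by positivity), ← ENNReal.rpow_mul,
            mul_one_div_cancel hθ₃.ne', ENNReal.rpow_one]
  have total : ∫⁻ a, ∫⁻ b, m a b * (D b * H b ^ q) ∂ν ∂μ ≤ Q * ∫⁻ b, H b ^ q ∂ν := by
    rw [lintegral_lintegral_swap weighted_meas.aemeasurable,
      ← lintegral_const_mul _ (hH.pow_const q)]
    refine lintegral_mono fun b => ?_
    rw [lintegral_mul_const _ hm.of_uncurry_right, ← mul_assoc, mul_comm (∫⁻ a, m a b ∂μ)]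
    exact mul_le_mul_left (hQ b) _
  calc (∫⁻ a, (∫⁻ b, m a b * H b ∂ν) ^ (1 / θ₃) ∂μ) ^ θ₃
      ≤ ((A ^ θ₁ * R ^ θ₂) ^ (1 / θ₃) * (Q * ∫⁻ b, H b ^ q ∂ν)) ^ θ₃ := by
        gcongr
        refine (lintegral_mono pointwise).trans ?_
        rw [lintegral_const_mul _ weighted_meas.lintegral_prod_right']
        gcongr
    _ = A ^ θ₁ * R ^ θ₂ * (Q * ∫⁻ b, H b ^ q ∂ν) ^ θ₃ := by
        rw [ENNReal.mul_rpow_of_nonneg _ _ hθ₃.le, ← ENNReal.rpow_mul,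
          one_div_mul_cancel hθ₃.ne', ENNReal.rpow_one]

end IntegralInequalities

section ArgmaxAndSums

theorem exists_measurable_argmax {α β : Type*} [MeasurableSpace α] [MeasurableSpace β]
    {s : Finset β} (hs : s.Nonempty) {F : α → β → ℝ≥0∞} (hF : Measurable (Function.uncurry F)) :
    ∃ X : α → β, Measurable X ∧ ∀ a, ∀ b ∈ s, F a b ≤ F a (X a) := by
  classical
  induction hs using Finset.Nonempty.cons_induction with
  | singleton b => exact ⟨fun _ => b, measurable_const, by simp⟩
  | cons b s _ _ ih =>
    obtain ⟨X, hX, hmax⟩ := ih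
    have hle : MeasurableSet {a | F a (X a) ≤ F a b} :=
      measurableSet_le (hF.comp (measurable_id.prodMk hX)) hF.of_uncurry_right
    refine ⟨fun a => if F a (X a) ≤ F a b then b else X a, measurable_const.ite hle hX,
      fun a c hc => ?_⟩
    dsimp only
    rcases Finset.mem_cons.1 hc with rfl | hc <;> split_ifs with h
    · exact le_rfl
    · exact (not_le.1 h).le
    · exact (hmax a c hc).trans h
    · exact hmax a c hc

theorem tsum_min_zpow_rpow_le {a : ℝ} (ha : 0 < a) (L : ℝ≥0∞) :
    ∑' j : ℤ, min (((2 : ℝ≥0∞) ^ j * L) ^ a) (((2 : ℝ≥0∞) ^ j * L) ^ (-a))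
      ≤ 2 * (1 - 2 ^ (-a))⁻¹ := by
  rcases eq_or_ne L 0 with rfl | hL0
  · simp [ha, ENNReal.zero_rpow_of_pos]
  rcases eq_or_ne L ∞ with rfl | hL
  · have (j : ℤ) : (2 : ℝ≥0∞) ^ j * ∞ = ∞ :=
      ENNReal.mul_top (ENNReal.zpow_pos two_ne_zero ENNReal.ofNat_ne_top j).ne'
    simp [this, ENNReal.top_rpow_of_neg (neg_neg_of_pos ha)]
  obtain ⟨n, hn⟩ := ENNReal.exists_mem_Ico_zpow hL0 hL ENNReal.one_lt_two ENNReal.ofNat_ne_top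
  have pow_nat (k : ℕ) : ((2 : ℝ≥0∞) ^ k) ^ (-a) = (2 ^ (-a)) ^ k := by
    rw [← ENNReal.rpow_natCast, ← ENNReal.rpow_mul, mul_comm, ENNReal.rpow_mul,
      ENNReal.rpow_natCast]
  have zpow_mul (j k : ℤ) : (2 : ℝ≥0∞) ^ j * 2 ^ k = 2 ^ (j + k) :=
    (ENNReal.zpow_add two_ne_zero ENNReal.ofNat_ne_top j k).symm
  rw [← (Equiv.addRight (-n)).tsum_eq, two_mul]
  simp only [Equiv.coe_addRight]
  rw [tsum_of_nat_of_neg_add_one ENNReal.summable ENNReal.summable, ← ENNReal.tsum_geometric]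
  gcongr with k k
  · refine (min_le_right _ _).trans ?_
    rw [← pow_nat, ENNReal.rpow_neg, ENNReal.rpow_neg]
    gcongr
    calc (2 : ℝ≥0∞) ^ k = 2 ^ ((k : ℤ) + -n) * 2 ^ n := by rw [zpow_mul]; simp
      _ ≤ _ := by gcongr; exact hn.1
  · refine (min_le_left _ _).trans ?_
    rw [← pow_nat, ENNReal.rpow_neg, ← ENNReal.inv_rpow]
    gcongr
    calc (2 : ℝ≥0∞) ^ (-((k : ℤ) + 1) + -n) * L ≤ 2 ^ (-((k : ℤ) + 1) + -n) * 2 ^ (n + 1) := by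
          gcongr; exact hn.2.le
      _ = (2 ^ k)⁻¹ := by rw [zpow_mul, ← zpow_natCast, ← ENNReal.zpow_neg]; ring_nf

end ArgmaxAndSums

section Real

theorem lintegral_comp_abs_eq_two_mul (φ : ℝ → ℝ≥0∞) :
    ∫⁻ a, φ |a| = 2 * ∫⁻ a in Ioi (0 : ℝ), φ a := by
  have right : ∫⁻ a in Ioi (0 : ℝ), φ |a| = ∫⁻ a in Ioi (0 : ℝ), φ a :=
    setLIntegral_congr_fun measurableSet_Ioi fun a ha => by rw [abs_of_pos ha]
  have left : ∫⁻ a in Iio (0 : ℝ), φ |a| = ∫⁻ a in Ioi (0 : ℝ), φ a := by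
    rw [← right, ← (Measure.measurePreserving_neg volume).setLIntegral_comp_preimage_emb
      (Homeomorph.neg ℝ).measurableEmbedding (fun a => φ |a|)]
    simp
  rw [← lintegral_add_compl _ (measurableSet_Ioi (a := (0 : ℝ))), compl_Ioi,
    setLIntegral_congr Iio_ae_eq_Iic.symm, left, right, two_mul]

theorem setLIntegral_Ioo_rpow_neg {β : ℝ} (hβ : β < 1) {ℓ : ℝ} (hℓ : 0 ≤ ℓ) :
    ∫⁻ a in Ioo 0 ℓ, ENNReal.ofReal a ^ (-β) = ENNReal.ofReal (ℓ ^ (1 - β) / (1 - β)) := by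
  have integrable : IntervalIntegrable (fun a : ℝ => a ^ (-β)) volume 0 ℓ :=
    intervalIntegral.intervalIntegrable_rpow' (by linarith)
  calc ∫⁻ a in Ioo 0 ℓ, ENNReal.ofReal a ^ (-β) = ∫⁻ a in Ioc 0 ℓ, ENNReal.ofReal (a ^ (-β)) := by
        rw [setLIntegral_congr Ioo_ae_eq_Ioc]
        exact setLIntegral_congr_fun measurableSet_Ioc fun a ha =>
          ENNReal.ofReal_rpow_of_pos ha.1
    _ = ENNReal.ofReal (∫ a in (0 : ℝ)..ℓ, a ^ (-β)) := by
        rw [intervalIntegral.integral_of_le hℓ, ofReal_integral_eq_lintegral_ofReal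
          ((intervalIntegrable_iff_integrableOn_Ioc_of_le hℓ).1 integrable)
          (ae_restrict_of_forall_mem measurableSet_Ioc fun a ha => Real.rpow_nonneg ha.1.le _)]
    _ = ENNReal.ofReal (ℓ ^ (1 - β) / (1 - β)) := by
        rw [integral_rpow (.inl (by linarith)), Real.zero_rpow (by linarith)]
        ring_nf

theorem setLIntegral_abs_sub_rpow_neg_le {β : ℝ} (hβ0 : 0 ≤ β) (hβ : β < 1) {s : Set ℝ} {ℓ : ℝ}
    (hℓ : 0 < ℓ) (hs : volume s ≤ ENNReal.ofReal ℓ) (c : ℝ) :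
    ∫⁻ a in s, ENNReal.ofReal |a - c| ^ (-β)
      ≤ ENNReal.ofReal ((2 / (1 - β) + 1) * ℓ ^ (1 - β)) := by
  have split (a : ℝ) : ENNReal.ofReal a ^ (-β)
      ≤ (Iio ℓ).indicator (fun a => ENNReal.ofReal a ^ (-β)) a + ENNReal.ofReal (ℓ ^ (-β)) := by
    by_cases ha : a < ℓ
    · simp [ha]
    · rw [← ENNReal.ofReal_rpow_of_pos hℓ, ENNReal.rpow_neg, ENNReal.rpow_neg]
      refine le_add_of_nonneg_of_le zero_le ?_
      gcongr
      exact not_lt.1 ha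
  have near : ∫⁻ a, (Iio ℓ).indicator (fun a => ENNReal.ofReal a ^ (-β)) |a - c|
      = ENNReal.ofReal (2 / (1 - β) * ℓ ^ (1 - β)) := by
    rw [lintegral_sub_right_eq_self
        (fun a => (Iio ℓ).indicator (fun a => ENNReal.ofReal a ^ (-β)) |a|) c,
      lintegral_comp_abs_eq_two_mul, setLIntegral_indicator measurableSet_Iio, Iio_inter_Ioi,
      setLIntegral_Ioo_rpow_neg hβ hℓ.le, ← ENNReal.ofReal_ofNat 2,
      ← ENNReal.ofReal_mul zero_le_two]
    ring_nf
  have scale : ℓ ^ (-β) * ℓ = ℓ ^ (1 - β) := by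
    rw [← Real.rpow_add_one hℓ.ne', neg_add_eq_sub]
  have : 0 ≤ 2 / (1 - β) := div_nonneg zero_le_two (by linarith)
  calc ∫⁻ a in s, ENNReal.ofReal |a - c| ^ (-β)
      ≤ ∫⁻ a in s, (Iio ℓ).indicator (fun a => ENNReal.ofReal a ^ (-β)) |a - c|
          + ENNReal.ofReal (ℓ ^ (-β)) := lintegral_mono fun a => split _
    _ = (∫⁻ a in s, (Iio ℓ).indicator (fun a => ENNReal.ofReal a ^ (-β)) |a - c|)
          + ENNReal.ofReal (ℓ ^ (-β)) * volume s := by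
        rw [lintegral_add_right _ measurable_const, setLIntegral_const]
    _ ≤ ENNReal.ofReal (2 / (1 - β) * ℓ ^ (1 - β))
          + ENNReal.ofReal (ℓ ^ (-β)) * ENNReal.ofReal ℓ := by
        gcongr
        exact (setLIntegral_le_lintegral _ _).trans_eq near
    _ = ENNReal.ofReal ((2 / (1 - β) + 1) * ℓ ^ (1 - β)) := by
        rw [← ENNReal.ofReal_mul (by positivity), scale,
          ← ENNReal.ofReal_add (by positivity) (by positivity)]
        ring_nf

end Real

section Annulus

/-- The thin annulus on which the light-cone denominator `√(τ² - |z|²)` is comparable to `√(δτ)`. It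
is empty for large `δ / τ` and fills a fixed part of the ball when `δ` is comparable to `τ`. -/
def annulus (δ τ : ℝ) : Set ℝ² :=
  {z | τ ^ 2 - ‖z‖ ^ 2 ∈ Ioo (δ * τ / 2) (2 * δ * τ)}

/-- The section `{b | (a, b) ∈ annulus δ τ}` in any orthonormal coordinates of `ℝ²`. -/
def annulusSlice (δ τ a : ℝ) : Set ℝ :=
  {b | τ ^ 2 - (a ^ 2 + b ^ 2) ∈ Ioo (δ * τ / 2) (2 * δ * τ)}

theorem isOpen_annulus (δ τ : ℝ) : IsOpen (annulus δ τ) :=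
  isOpen_Ioo.preimage (by fun_prop : Continuous fun z : ℝ² => τ ^ 2 - ‖z‖ ^ 2)

theorem measurableSet_annulus (δ τ : ℝ) : MeasurableSet (annulus δ τ) :=
  (isOpen_annulus δ τ).measurableSet

theorem annulus_of_nonpos {δ τ : ℝ} (hδ : 0 ≤ δ) (hτ : τ ≤ 0) : annulus δ τ = ∅ := by
  refine eq_empty_of_forall_notMem fun z hz => ?_
  linarith [hz.1.trans hz.2, mul_nonpos_of_nonneg_of_nonpos hδ hτ]

theorem exists_measurePreserving_coordinates {n : ℝ²} (hn : ‖n‖ = 1) :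
    ∃ Φ : ℝ² → ℝ × ℝ, MeasurePreserving Φ ∧ (∀ z, (Φ z).1 = inner ℝ n z) ∧
      ∀ z, ‖z‖ ^ 2 = (Φ z).1 ^ 2 + (Φ z).2 ^ 2 := by
  have orthonormal : Orthonormal ℝ (({0} : Set (Fin 2)).domRestrict fun _ : Fin 2 => n) :=
    ⟨fun _ => hn, fun i j hij => absurd (Subsingleton.elim i j) hij⟩
  obtain ⟨b, hb⟩ := orthonormal.exists_orthonormalBasis_extension_of_card_eq (by simp)
  refine ⟨fun z => MeasurableEquiv.finTwoArrow (WithLp.ofLp (b.repr z)), ?_, fun z => ?_,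
    fun z => ?_⟩
  · exact (volume_preserving_finTwoArrow ℝ).comp
      ((PiLp.volume_preserving_ofLp (Fin 2)).comp b.measurePreserving_repr)
  · simp [MeasurableEquiv.finTwoArrow, MeasurableEquiv.piFinTwo, b.repr_apply_apply, hb 0 rfl]
  · rw [← b.repr.norm_map z, EuclideanSpace.norm_sq_eq]
    simp [MeasurableEquiv.finTwoArrow, MeasurableEquiv.piFinTwo]

theorem setLIntegral_annulus_comp_inner (δ τ : ℝ) {n : ℝ²} (hn : ‖n‖ = 1) {ψ : ℝ → ℝ≥0∞}
    (hψ : Measurable ψ) :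
    ∫⁻ z in annulus δ τ, ψ (inner ℝ n z) = ∫⁻ a, ψ a * volume (annulusSlice δ τ a) := by
  obtain ⟨Φ, hΦ, hΦ1, hΦ2⟩ := exists_measurePreserving_coordinates hn
  let S : Set (ℝ × ℝ) := {q | q.2 ∈ annulusSlice δ τ q.1}
  have hS : MeasurableSet S :=
    (by fun_prop : Measurable fun q : ℝ × ℝ => τ ^ 2 - (q.1 ^ 2 + q.2 ^ 2)) measurableSet_Ioo
  have hψS : Measurable (S.indicator fun q => ψ q.1) := (hψ.comp measurable_fst).indicator hS
  have preimage : annulus δ τ = Φ ⁻¹' S := by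
    ext z
    simp only [annulus, S, annulusSlice, mem_ofPred_eq, mem_preimage, hΦ2]
  calc ∫⁻ z in annulus δ τ, ψ (inner ℝ n z) = ∫⁻ z in Φ ⁻¹' S, ψ (Φ z).1 := by
        simp only [preimage, hΦ1]
    _ = ∫⁻ q in S, ψ q.1 := hΦ.setLIntegral_comp_preimage hS (hψ.comp measurable_fst)
    _ = ∫⁻ a, ∫⁻ b, S.indicator (fun q => ψ q.1) (a, b) := by
        rw [← lintegral_indicator hS, Measure.volume_eq_prod, lintegral_prod _ hψS.aemeasurable]
    _ = ∫⁻ a, ψ a * volume (annulusSlice δ τ a) := by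
        refine lintegral_congr fun a => ?_
        exact lintegral_indicator_const (hS.preimage measurable_prodMk_left) (ψ a)

theorem volume_annulus_inter_inner_mem (δ τ : ℝ) {n : ℝ²} (hn : ‖n‖ = 1) {s : Set ℝ}
    (hs : MeasurableSet s) :
    volume (annulus δ τ ∩ {z | inner ℝ n z ∈ s}) = ∫⁻ a in s, volume (annulusSlice δ τ a) := by
  have preimage_meas : MeasurableSet {z : ℝ² | inner ℝ n z ∈ s} :=
    (by fun_prop : Measurable fun z : ℝ² => inner ℝ n z) hs
  have slicing := setLIntegral_annulus_comp_inner δ τ hn (measurable_one.indicator hs)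
  rw [← lintegral_indicator hs, inter_comm, ← Measure.restrict_apply preimage_meas,
    ← lintegral_indicator_one preimage_meas]
  refine slicing.trans (lintegral_congr fun a => ?_)
  by_cases ha : a ∈ s <;> simp [ha]

theorem volume_annulusSlice_le {δ τ a : ℝ} (hδτ : 0 < δ * τ) (ha : |a| < τ) :
    volume (annulusSlice δ τ a) ≤ ENNReal.ofReal (4 * δ * τ / √(τ ^ 2 - a ^ 2)) := by
  have ha2 : 0 < τ ^ 2 - a ^ 2 := sub_pos.2 (sq_lt_sq.2 (ha.trans_le (le_abs_self τ)))
  set s := √(τ ^ 2 - a ^ 2)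
  have hs : 0 < s := Real.sqrt_pos.2 ha2
  have hs2 : s ^ 2 = τ ^ 2 - a ^ 2 := Real.sq_sqrt ha2.le
  set w := 2 * (δ * τ) / s with hw
  have hw0 : 0 < w := by positivity
  have hws : w * s = 2 * (δ * τ) := div_mul_cancel₀ _ hs.ne'
  have subset : annulusSlice δ τ a ⊆ Icc (-s) (-s + w) ∪ Icc (s - w) s := by
    rintro b ⟨hb1, hb2⟩
    obtain ⟨hbs, hbs'⟩ := abs_lt.1 (abs_lt_of_sq_lt_sq (by linarith : b ^ 2 < s ^ 2) hs.le)
    rcases le_total 0 b with hb | hb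
    · exact .inr ⟨by nlinarith, hbs'.le⟩
    · exact .inl ⟨hbs.le, by nlinarith⟩
  calc volume (annulusSlice δ τ a) ≤ volume (Icc (-s) (-s + w)) + volume (Icc (s - w) s) :=
        (measure_mono subset).trans (measure_union_le _ _)
    _ = ENNReal.ofReal (4 * δ * τ / s) := by
        rw [Real.volume_Icc, Real.volume_Icc, ← ENNReal.ofReal_add (by linarith) (by linarith), hw]
        ring_nf

theorem abs_lt_of_mem_annulusSlice {δ τ a b : ℝ} (hδ : 0 < δ) (hτ : 0 < τ)
    (hb : b ∈ annulusSlice δ τ a) : |a| < τ ∧ |b| < τ := by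
  have := mul_pos hδ hτ
  constructor <;> refine abs_lt_of_sq_lt_sq ?_ hτ.le <;>
    nlinarith [hb.1, sq_nonneg a, sq_nonneg b]

theorem volume_annulusSlice_le_of_abs_le {δ τ a : ℝ} (hδ : 0 < δ) (hτ : 0 < τ)
    (ha : |a| ≤ τ / 2 ∨ |a| ≤ √(δ * τ)) :
    volume (annulusSlice δ τ a) ≤ ENNReal.ofReal (8 * δ) := by
  rcases le_or_gt |a| (τ / 2) with ha' | ha'
  · have hsqrt : τ / 2 ≤ √(τ ^ 2 - a ^ 2) := by
      refine Real.le_sqrt_of_sq_le ?_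
      nlinarith [abs_le.1 ha']
    refine (volume_annulusSlice_le (by positivity) (by linarith)).trans ?_
    gcongr
    rw [div_le_iff₀ (by linarith)]
    nlinarith
  · have hτδ : τ ≤ 4 * δ := by
      have hsq := Real.sq_sqrt (mul_nonneg hδ.le hτ.le)
      nlinarith [ha.resolve_left ha'.not_ge]
    calc volume (annulusSlice δ τ a) ≤ volume (Icc (-τ) τ) :=
          measure_mono fun b hb => abs_le.1 (abs_lt_of_mem_annulusSlice hδ hτ hb).2.le
      _ ≤ ENNReal.ofReal (8 * δ) := by
          rw [Real.volume_Icc]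
          gcongr
          linarith

theorem volume_annulusSlice_le_rpow {δ τ : ℝ} (hδ : 0 < δ) (hτ : 0 < τ) (a : ℝ) :
    volume (annulusSlice δ τ a) ≤ ENNReal.ofReal (4 * δ * √τ)
      * (ENNReal.ofReal |a - τ| ^ (-(1 / 2) : ℝ) + ENNReal.ofReal |a - -τ| ^ (-(1 / 2) : ℝ)) := by
  have key {w : ℝ} (hw : 0 < w) (ha : |a| < τ) (hle : w * τ ≤ τ ^ 2 - a ^ 2) :
      volume (annulusSlice δ τ a)
        ≤ ENNReal.ofReal (4 * δ * √τ) * ENNReal.ofReal w ^ (-(1 / 2) : ℝ) := by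
    refine (volume_annulusSlice_le (by positivity) ha).trans ?_
    rw [ENNReal.ofReal_rpow_of_pos hw, ← ENNReal.ofReal_mul (by positivity),
      Real.rpow_neg hw.le, ← Real.sqrt_eq_rpow]
    refine ENNReal.ofReal_le_ofReal ?_
    have hsqrt : √w * √τ ≤ √(τ ^ 2 - a ^ 2) := by
      rw [← Real.sqrt_mul hw.le]
      exact Real.sqrt_le_sqrt hle
    calc 4 * δ * τ / √(τ ^ 2 - a ^ 2) ≤ 4 * δ * τ / (√w * √τ) := by gcongr
      _ = 4 * δ * √τ * (√w)⁻¹ := by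
          nth_rewrite 1 [← Real.mul_self_sqrt hτ.le]
          field_simp
  rcases (annulusSlice δ τ a).eq_empty_or_nonempty with hempty | ⟨b, hb⟩
  · simp [hempty]
  have ha := (abs_lt_of_mem_annulusSlice hδ hτ hb).1
  obtain ⟨ha1, ha2⟩ := abs_lt.1 ha
  rcases le_total 0 a with h0 | h0
  · refine (key (w := |a - τ|) (abs_pos.2 (by linarith)) ha ?_).trans (by gcongr; exact le_self_add)
    rw [abs_of_neg (by linarith)]
    nlinarith
  · refine (key (w := |a - -τ|) (abs_pos.2 (by linarith)) ha ?_).trans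
      (by gcongr; exact le_add_self)
    rw [abs_of_pos (by linarith)]
    nlinarith

theorem volume_annulus_inter_strip (δ τ : ℝ) {u : ℝ²} (hu : u ≠ 0) (c ℓ : ℝ) :
    volume (annulus δ τ ∩ {z | |inner ℝ u z - c| ≤ ℓ})
      = ∫⁻ a in Icc ((c - ℓ) / ‖u‖) ((c + ℓ) / ‖u‖), volume (annulusSlice δ τ a) := by
  have hu' : 0 < ‖u‖ := norm_pos_iff.2 hu
  have strip : {z : ℝ² | |inner ℝ u z - c| ≤ ℓ}
      = {z | inner ℝ (‖u‖⁻¹ • u) z ∈ Icc ((c - ℓ) / ‖u‖) ((c + ℓ) / ‖u‖)} := by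
    ext z
    rw [mem_ofPred_eq, mem_ofPred_eq, real_inner_smul_left, ← div_eq_inv_mul, mem_Icc,
      div_le_div_iff_of_pos_right hu', div_le_div_iff_of_pos_right hu', abs_le]
    constructor <;> rintro ⟨h1, h2⟩ <;> constructor <;> linarith
  have unit : ‖‖u‖⁻¹ • u‖ = 1 := norm_smul_inv_norm (𝕜 := ℝ) hu
  rw [strip, volume_annulus_inter_inner_mem δ τ unit measurableSet_Icc]

theorem volume_annulus_inter_strip_le {δ τ : ℝ} (hδ : 0 < δ) (hτ : 0 < τ) {u : ℝ²} (hu : u ≠ 0)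
    (c : ℝ) {ℓ : ℝ} (hℓ : 0 < ℓ) :
    volume (annulus δ τ ∩ {z | |inner ℝ u z - c| ≤ ℓ})
      ≤ ENNReal.ofReal (60 * δ * √(τ * ℓ / ‖u‖)) := by
  have hu' : 0 < ‖u‖ := norm_pos_iff.2 hu
  set I := Icc ((c - ℓ) / ‖u‖) ((c + ℓ) / ‖u‖)
  have volume_I : volume I ≤ ENNReal.ofReal (2 * (ℓ / ‖u‖)) := by
    rw [Real.volume_Icc]
    exact ENNReal.ofReal_le_ofReal (by field_simp; linarith)
  have bathtub (d : ℝ) : ∫⁻ a in I, ENNReal.ofReal |a - d| ^ (-(1 / 2) : ℝ)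
      ≤ ENNReal.ofReal (5 * √(2 * (ℓ / ‖u‖))) := by
    have := setLIntegral_abs_sub_rpow_neg_le (by norm_num : (0 : ℝ) ≤ 1 / 2) (by norm_num)
      (by positivity) volume_I d
    rw [Real.sqrt_eq_rpow]
    norm_num at this ⊢
    exact this
  calc volume (annulus δ τ ∩ {z | |inner ℝ u z - c| ≤ ℓ})
      = ∫⁻ a in I, volume (annulusSlice δ τ a) := volume_annulus_inter_strip δ τ hu c ℓ
    _ ≤ ∫⁻ a in I, ENNReal.ofReal (4 * δ * √τ) * (ENNReal.ofReal |a - τ| ^ (-(1 / 2) : ℝ)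
          + ENNReal.ofReal |a - -τ| ^ (-(1 / 2) : ℝ)) :=
        lintegral_mono fun a => volume_annulusSlice_le_rpow hδ hτ a
    _ = ENNReal.ofReal (4 * δ * √τ) * ((∫⁻ a in I, ENNReal.ofReal |a - τ| ^ (-(1 / 2) : ℝ))
          + ∫⁻ a in I, ENNReal.ofReal |a - -τ| ^ (-(1 / 2) : ℝ)) := by
        rw [lintegral_const_mul _ (by fun_prop), lintegral_add_left (by fun_prop)]
    _ ≤ ENNReal.ofReal (4 * δ * √τ) * (ENNReal.ofReal (5 * √(2 * (ℓ / ‖u‖)))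
          + ENNReal.ofReal (5 * √(2 * (ℓ / ‖u‖)))) := by
        gcongr <;> exact bathtub _
    _ = ENNReal.ofReal (40 * √2 * (δ * √(τ * ℓ / ‖u‖))) := by
        rw [← ENNReal.ofReal_add (by positivity) (by positivity),
          ← ENNReal.ofReal_mul (by positivity), mul_div_assoc, Real.sqrt_mul zero_le_two,
          Real.sqrt_mul hτ.le]
        ring_nf
    _ ≤ ENNReal.ofReal (60 * δ * √(τ * ℓ / ‖u‖)) := by
        rw [mul_assoc 60]
        gcongr
        nlinarith [Real.sqrt_nonneg 2, Real.sq_sqrt (zero_le_two (α := ℝ))]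

theorem volume_annulus_inter_strip_le_of_transversal {δ τ : ℝ} (hδ : 0 < δ) (hτ : 0 < τ) {u : ℝ²}
    (hu : u ≠ 0) {c ℓ : ℝ} (hcℓ : |c| + ℓ ≤ ‖u‖ * (τ / 2)) :
    volume (annulus δ τ ∩ {z | |inner ℝ u z - c| ≤ ℓ}) ≤ ENNReal.ofReal (16 * δ * (ℓ / ‖u‖)) := by
  have hu' : 0 < ‖u‖ := norm_pos_iff.2 hu
  rw [volume_annulus_inter_strip δ τ hu]
  calc ∫⁻ a in Icc ((c - ℓ) / ‖u‖) ((c + ℓ) / ‖u‖), volume (annulusSlice δ τ a)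
      ≤ ∫⁻ _ in Icc ((c - ℓ) / ‖u‖) ((c + ℓ) / ‖u‖), ENNReal.ofReal (8 * δ) := by
        refine setLIntegral_mono measurable_const fun a ha => ?_
        refine volume_annulusSlice_le_of_abs_le hδ hτ (.inl (abs_le.2 ⟨?_, ?_⟩))
        · exact le_trans (by rw [le_div_iff₀ hu']; linarith [neg_abs_le c]) ha.1
        · exact ha.2.trans (by rw [div_le_iff₀ hu']; linarith [le_abs_self c])
    _ = ENNReal.ofReal (16 * δ * (ℓ / ‖u‖)) := by
        rw [setLIntegral_const, Real.volume_Icc, ← ENNReal.ofReal_mul (by positivity)]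
        ring_nf

theorem norm_lt_of_mem_annulus {δ τ : ℝ} (hδ : 0 < δ) (hτ : 0 < τ) {z : ℝ²}
    (hz : z ∈ annulus δ τ) : ‖z‖ < τ :=
  lt_of_pow_lt_pow_left₀ 2 hτ.le (by linarith [hz.1, mul_pos hδ hτ])

theorem volume_annulus_le {δ τ : ℝ} (hδ : 0 < δ) (hτ : 0 < τ) :
    volume (annulus δ τ) ≤ ENNReal.ofReal (60 * δ * τ) := by
  obtain ⟨n, hn⟩ : ∃ n : ℝ², ‖n‖ = 1 := exists_norm_eq ℝ² zero_le_one
  have strip := volume_annulus_inter_strip_le hδ hτ (norm_ne_zero_iff.1 (hn ▸ one_ne_zero)) 0 hτ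
  rw [hn, div_one, Real.sqrt_mul_self hτ.le] at strip
  refine le_trans (measure_mono ?_) strip
  refine fun z hz => ⟨hz, ?_⟩
  rw [mem_ofPred_eq, sub_zero]
  calc |inner ℝ n z| ≤ ‖n‖ * ‖z‖ := abs_real_inner_le_norm n z
    _ ≤ τ := by rw [hn, one_mul]; exact (norm_lt_of_mem_annulus hδ hτ hz).le

theorem annulus_inter_preimage_add_subset {δ τ τ' : ℝ} (hδ : 0 ≤ δ) (hτ' : 0 ≤ τ') (hτ : τ' ≤ τ)
    (u : ℝ²) : annulus δ τ' ∩ (· + u) ⁻¹' annulus δ τ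
      ⊆ annulus δ τ' ∩ {z | |inner ℝ u z - (τ ^ 2 - τ' ^ 2 - ‖u‖ ^ 2) / 2| ≤ δ * τ} := by
  rintro z ⟨⟨hz1, hz2⟩, hzu1, hzu2⟩
  refine ⟨⟨hz1, hz2⟩, ?_⟩
  have expand := norm_add_sq_real z u
  rw [real_inner_comm] at expand
  have := mul_nonneg hδ hτ'
  have := mul_le_mul_of_nonneg_left hτ hδ
  rw [mem_ofPred_eq, abs_le]
  constructor <;> linarith

theorem volume_annulus_overlap_le {δ τ : ℝ} (hδ : 0 < δ) (hτ : 0 < τ) (u : ℝ²) :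
    ENNReal.ofReal (min 1 (‖u‖ / √(δ * τ))) * volume (annulus δ τ ∩ (· + u) ⁻¹' annulus δ τ)
      ≤ ENNReal.ofReal (240 * δ * √(δ * τ)) := by
  rcases eq_or_ne u 0 with rfl | hu
  · simp
  set ρ := √(δ * τ)
  have hρ0 : 0 < ρ := by positivity
  have hρ2 : ρ * ρ = δ * τ := Real.mul_self_sqrt (by positivity)
  have hu' : 0 < ‖u‖ := norm_pos_iff.2 hu
  set c := (τ ^ 2 - τ ^ 2 - ‖u‖ ^ 2) / 2 with hc
  have subset := annulus_inter_preimage_add_subset hδ.le hτ.le le_rfl u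
  have of_le {w v : ℝ} (hv : min 1 (‖u‖ / ρ) ≤ w)
      (hvol : volume (annulus δ τ ∩ {z | |inner ℝ u z - c| ≤ δ * τ}) ≤ ENNReal.ofReal v)
      (hwv : w * v ≤ 240 * δ * ρ) :
      ENNReal.ofReal (min 1 (‖u‖ / ρ)) * volume (annulus δ τ ∩ (· + u) ⁻¹' annulus δ τ)
        ≤ ENNReal.ofReal (240 * δ * ρ) :=
    calc _ ≤ ENNReal.ofReal w * ENNReal.ofReal v := by
          gcongr
          exact (measure_mono subset).trans hvol
      _ ≤ _ := by
          rw [← ENNReal.ofReal_mul ((le_min zero_le_one (by positivity)).trans hv)]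
          gcongr
  rcases le_or_gt ‖u‖ (τ / 4) with hfar | hfar
  · rcases le_or_gt (ρ * ρ) (‖u‖ * (τ / 4)) with htrans | htrans
    · refine of_le (min_le_right _ _)
        (volume_annulus_inter_strip_le_of_transversal hδ hτ hu ?_) ?_
      · rw [hc, abs_of_nonpos (by nlinarith)]
        nlinarith
      · rw [← hρ2]
        field_simp
        norm_num
    · refine of_le (min_le_right _ _)
        ((measure_mono inter_subset_left).trans (volume_annulus_le hδ hτ)) ?_
      rw [div_mul_eq_mul_div, div_le_iff₀ hρ0]
      nlinarith
  · refine of_le (min_le_left _ _) (volume_annulus_inter_strip_le hδ hτ hu c (by positivity)) ?_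
    have : √(τ * (δ * τ) / ‖u‖) ≤ 2 * ρ := by
      refine Real.sqrt_le_iff.2 ⟨by positivity, ?_⟩
      rw [div_le_iff₀ hu']
      nlinarith [mul_pos hδ hτ]
    nlinarith

theorem volume_annulus_overlap_le_of_lt {δ τ τ' : ℝ} (hδ : 0 < δ) (hτ' : 0 < τ') (hτ : τ' < τ)
    (u : ℝ²) : volume (annulus δ τ' ∩ (· + u) ⁻¹' annulus δ τ)
      ≤ ENNReal.ofReal (120 * δ * √(δ * τ * τ' / (τ - τ'))) := by
  have hτ0 : 0 < τ := hτ'.trans hτ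
  have gap : 0 < τ - τ' := sub_pos.2 hτ
  rcases le_or_gt ((τ - τ') / 4) ‖u‖ with hu | hu
  · have hu' : 0 < ‖u‖ := by linarith
    refine (measure_mono (annulus_inter_preimage_add_subset hδ.le hτ'.le hτ.le u)).trans
      ((volume_annulus_inter_strip_le hδ hτ' (norm_pos_iff.1 hu') _ (by positivity)).trans ?_)
    refine ENNReal.ofReal_le_ofReal ?_
    have : √(τ' * (δ * τ) / ‖u‖) ≤ 2 * √(δ * τ * τ' / (τ - τ')) := by
      rw [← Real.sqrt_sq zero_le_two, ← Real.sqrt_mul (by positivity)]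
      refine Real.sqrt_le_sqrt ?_
      rw [mul_div_assoc', div_le_div_iff₀ hu' gap]
      have := mul_pos (mul_pos hδ hτ0) hτ'
      nlinarith
    nlinarith
  rcases (annulus δ τ' ∩ (· + u) ⁻¹' annulus δ τ).eq_empty_or_nonempty with hempty | ⟨z, hz, hzu⟩
  · simp [hempty]
  have hgap : τ - τ' ≤ 4 * δ := by
    have hz' := norm_lt_of_mem_annulus hδ hτ' hz
    have : ‖z + u‖ ≤ τ - 3 / 4 * (τ - τ') := by linarith [norm_add_le z u]
    have : τ ^ 2 - (τ - 3 / 4 * (τ - τ')) ^ 2 < 2 * δ * τ := by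
      nlinarith [hzu.2, norm_nonneg (z + u)]
    nlinarith
  refine (measure_mono inter_subset_left).trans ((volume_annulus_le hδ hτ').trans ?_)
  refine ENNReal.ofReal_le_ofReal ?_
  have : τ' / 2 ≤ √(δ * τ * τ' / (τ - τ')) := by
    refine Real.le_sqrt_of_sq_le ?_
    rw [le_div_iff₀ gap]
    nlinarith [mul_pos hτ' hτ', mul_le_mul_of_nonneg_right hτ.le (mul_pos hδ hτ').le]
  nlinarith

end Annulus

section AnnularKernel

theorem exists_unit_inner_eq_zero (v : ℝ²) : ∃ n : ℝ², ‖n‖ = 1 ∧ inner ℝ n v = 0 := by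
  have span_ne_top : Submodule.span ℝ {v} ≠ ⊤ := fun htop => by
    have := finrank_span_le_card (R := ℝ) ({v} : Set ℝ²)
    rw [htop, finrank_top, finrank_euclideanSpace_fin, toFinset_card, Fintype.card_unique] at this
    omega
  obtain ⟨w, hw, hw0⟩ := Submodule.exists_mem_ne_zero_of_ne_bot
    (mt (Submodule.orthogonal_eq_bot_iff).1 span_ne_top)
  refine ⟨‖w‖⁻¹ • w, norm_smul_inv_norm (𝕜 := ℝ) hw0, ?_⟩
  rw [real_inner_smul_left, real_inner_comm,
    Submodule.mem_orthogonal_singleton_iff_inner_right.1 hw, mul_zero]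

theorem setLIntegral_Icc_abs_div_rpow_neg_le {ρ β : ℝ} (hρ : 0 < ρ) (hβ0 : 0 ≤ β) (hβ : β < 1) :
    ∫⁻ a in Icc (-ρ) ρ, ENNReal.ofReal (|a| / ρ) ^ (-β)
      ≤ ENNReal.ofReal (2 * (2 / (1 - β) + 1) * ρ) := by
  have : 0 < 1 - β := sub_pos.2 hβ
  have rescale (a : ℝ) : ENNReal.ofReal (|a| / ρ) ^ (-β)
      = ENNReal.ofReal (ρ ^ β) * ENNReal.ofReal |a - 0| ^ (-β) := by
    rw [sub_zero, div_eq_inv_mul, ENNReal.ofReal_mul (by positivity),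
      ENNReal.mul_rpow_of_ne_top ENNReal.ofReal_ne_top ENNReal.ofReal_ne_top,
      ENNReal.ofReal_rpow_of_pos (inv_pos.2 hρ), Real.inv_rpow hρ.le, Real.rpow_neg hρ.le, inv_inv]
  have volume_Icc : volume (Icc (-ρ) ρ) ≤ ENNReal.ofReal (2 * ρ) := by
    rw [Real.volume_Icc]
    exact ENNReal.ofReal_le_ofReal (by linarith)
  rw [lintegral_congr rescale, lintegral_const_mul _ (by fun_prop)]
  refine (mul_le_mul_right (setLIntegral_abs_sub_rpow_neg_le hβ0 hβ (by positivity)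
    volume_Icc 0) _).trans ?_
  rw [← ENNReal.ofReal_mul (by positivity), Real.mul_rpow zero_le_two hρ.le]
  refine ENNReal.ofReal_le_ofReal ?_
  have hρ1 : ρ ^ β * ρ ^ (1 - β) = ρ := by
    rw [← Real.rpow_add hρ, add_sub_cancel, Real.rpow_one]
  have h2 : (2 : ℝ) ^ (1 - β) ≤ 2 := Real.rpow_le_self_of_one_le one_le_two (by linarith)
  calc ρ ^ β * ((2 / (1 - β) + 1) * (2 ^ (1 - β) * ρ ^ (1 - β)))
      = 2 ^ (1 - β) * (2 / (1 - β) + 1) * (ρ ^ β * ρ ^ (1 - β)) := by ring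
    _ ≤ 2 * (2 / (1 - β) + 1) * ρ := by rw [hρ1]; gcongr

-- Against the unit normal to `v`, a point of the annulus near `v` has a coordinate of size at most
-- its distance to `v`, and the slices through such coordinates have length at most `8 * δ`.
theorem setLIntegral_annulus_inter_ball_rpow_neg_le {δ τ β : ℝ} (hδ : 0 < δ) (hτ : 0 < τ)
    (hβ0 : 0 ≤ β) (hβ : β < 1) (v : ℝ²) :
    ∫⁻ z in annulus δ τ ∩ Metric.ball v √(δ * τ), ENNReal.ofReal (‖z - v‖ / √(δ * τ)) ^ (-β)
      ≤ ENNReal.ofReal (16 * (2 / (1 - β) + 1) * (δ * √(δ * τ))) := by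
  obtain ⟨n, hn, hnv⟩ := exists_unit_inner_eq_zero v
  set ρ := √(δ * τ)
  have hρ : 0 < ρ := by positivity
  set ψ : ℝ → ℝ≥0∞ := (Icc (-ρ) ρ).indicator fun a => ENNReal.ofReal (|a| / ρ) ^ (-β)
    with hψ
  have measurable_ψ : Measurable ψ := by
    refine Measurable.indicator ?_ measurableSet_Icc
    fun_prop
  have weight_le_ψ {z : ℝ²} (hz : z ∈ Metric.ball v ρ) :
      ENNReal.ofReal (‖z - v‖ / ρ) ^ (-β) ≤ ψ (inner ℝ n z) := by
    have inner_le : |inner ℝ n z| ≤ ‖z - v‖ := by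
      have := abs_real_inner_le_norm n (z - v)
      rwa [inner_sub_right, hnv, sub_zero, hn, one_mul] at this
    have hmem : inner ℝ n z ∈ Icc (-ρ) ρ :=
      abs_le.1 (inner_le.trans (mem_ball_iff_norm.1 hz).le)
    calc ENNReal.ofReal (‖z - v‖ / ρ) ^ (-β) ≤ ENNReal.ofReal (|inner ℝ n z| / ρ) ^ (-β) := by
          rw [ENNReal.rpow_neg, ENNReal.rpow_neg]
          gcongr
      _ = ψ (inner ℝ n z) := by rw [hψ, indicator_of_mem hmem]
  calc ∫⁻ z in annulus δ τ ∩ Metric.ball v ρ, ENNReal.ofReal (‖z - v‖ / ρ) ^ (-β)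
      ≤ ∫⁻ z in annulus δ τ ∩ Metric.ball v ρ, ψ (inner ℝ n z) :=
        setLIntegral_mono' ((measurableSet_annulus δ τ).inter measurableSet_ball) fun z hz =>
          weight_le_ψ hz.2
    _ ≤ ∫⁻ z in annulus δ τ, ψ (inner ℝ n z) := lintegral_mono_set inter_subset_left
    _ = ∫⁻ a, ψ a * volume (annulusSlice δ τ a) :=
        setLIntegral_annulus_comp_inner δ τ hn measurable_ψ
    _ ≤ ∫⁻ a, ψ a * ENNReal.ofReal (8 * δ) := by
        refine lintegral_mono fun a => ?_
        by_cases ha : a ∈ Icc (-ρ) ρ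
        · gcongr
          exact volume_annulusSlice_le_of_abs_le hδ hτ (.inr (abs_le.2 ha))
        · simp [ψ, indicator_of_notMem ha]
    _ ≤ ENNReal.ofReal (2 * (2 / (1 - β) + 1) * ρ) * ENNReal.ofReal (8 * δ) := by
        rw [lintegral_mul_const _ measurable_ψ, lintegral_indicator measurableSet_Icc]
        gcongr
        exact setLIntegral_Icc_abs_div_rpow_neg_le hρ hβ0 hβ
    _ = ENNReal.ofReal (16 * (2 / (1 - β) + 1) * (δ * ρ)) := by
        rw [← ENNReal.ofReal_mul (by positivity)]
        ring_nf

/-- The indicator of the annulus, weighted so that `δ ^ (-1/2)` times its sum over dyadic `δ`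
dominates `1 / √(τ² - |z|²)`. -/
noncomputable def annularKernel (δ τ : ℝ) (z : ℝ²) : ℝ≥0∞ :=
  (annulus δ τ).indicator (fun _ => ENNReal.ofReal (√τ)⁻¹) z

theorem annularKernel_le (δ τ : ℝ) (z : ℝ²) : annularKernel δ τ z ≤ ENNReal.ofReal (√τ)⁻¹ :=
  indicator_le_self _ _ z

theorem measurable_annularKernel (δ : ℝ) :
    Measurable (Function.uncurry (annularKernel δ)) := by
  have hS : MeasurableSet {v : ℝ × ℝ² | v.1 ^ 2 - ‖v.2‖ ^ 2 ∈ Ioo (δ * v.1 / 2) (2 * δ * v.1)} := by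
    simp only [mem_Ioo]
    measurability
  exact Measurable.indicator (f := fun v : ℝ × ℝ² => ENNReal.ofReal (√v.1)⁻¹) (by fun_prop) hS

theorem lintegral_annularKernel_mul (δ τ τ' : ℝ) (u : ℝ²) :
    ∫⁻ z, annularKernel δ τ' z * annularKernel δ τ (z + u) = ENNReal.ofReal (√τ' * √τ)⁻¹
      * volume (annulus δ τ' ∩ (· + u) ⁻¹' annulus δ τ) := by
  have hS : MeasurableSet (annulus δ τ' ∩ (· + u) ⁻¹' annulus δ τ) :=
    (measurableSet_annulus δ τ').inter
      ((measurableSet_annulus δ τ).preimage (measurable_add_const u))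
  rw [← lintegral_indicator_const hS]
  refine lintegral_congr fun z => ?_
  by_cases hz : z ∈ annulus δ τ' <;> by_cases hzu : z + u ∈ annulus δ τ <;>
    simp [annularKernel, indicator, hz, hzu, mul_comm, ← ENNReal.ofReal_mul]

theorem lintegral_annularKernel_mul_self_le {δ τ : ℝ} (hδ : 0 < δ) (hτ : 0 < τ) (u : ℝ²) :
    ENNReal.ofReal (min 1 (‖u‖ / √(δ * τ))) * ∫⁻ z, annularKernel δ τ z * annularKernel δ τ (z + u)
      ≤ ENNReal.ofReal (240 * (δ * √δ / √τ)) := by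
  rw [lintegral_annularKernel_mul, mul_left_comm]
  refine (mul_le_mul_right (volume_annulus_overlap_le hδ hτ u) _).trans_eq ?_
  rw [← ENNReal.ofReal_mul (by positivity), Real.sqrt_mul hδ.le]
  congr 1
  field_simp

theorem lintegral_annularKernel_mul_le {δ τ τ' : ℝ} (hδ : 0 < δ) (hτ : 0 < τ) (hτ' : 0 < τ')
    (u : ℝ²) : ∫⁻ z, annularKernel δ τ' z * annularKernel δ τ (z + u)
      ≤ ENNReal.ofReal (120 * (δ * √δ)) * ENNReal.ofReal |τ' - τ| ^ (-(1 / 2) : ℝ) := by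
  have of_lt {σ σ' : ℝ} (hσ' : 0 < σ') (hσ : σ' < σ) (w : ℝ²) :
      ∫⁻ z, annularKernel δ σ' z * annularKernel δ σ (z + w)
        ≤ ENNReal.ofReal (120 * (δ * √δ)) * ENNReal.ofReal |σ' - σ| ^ (-(1 / 2) : ℝ) := by
    have hσ0 : 0 < σ := hσ'.trans hσ
    have gap : 0 < σ - σ' := sub_pos.2 hσ
    rw [lintegral_annularKernel_mul]
    refine (mul_le_mul_right (volume_annulus_overlap_le_of_lt hδ hσ' hσ w) _).trans_eq ?_
    rw [abs_sub_comm, abs_of_pos gap, ENNReal.ofReal_rpow_of_pos gap, Real.rpow_neg gap.le,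
      ← Real.sqrt_eq_rpow, ← ENNReal.ofReal_mul (by positivity),
      ← ENNReal.ofReal_mul (by positivity), Real.sqrt_div (by positivity),
      Real.sqrt_mul (by positivity), Real.sqrt_mul hδ.le]
    congr 1
    field_simp
  rcases lt_trichotomy τ' τ with hlt | rfl | hlt
  · exact of_lt hτ' hlt u
  · rw [sub_self, abs_zero, ENNReal.ofReal_zero, ENNReal.zero_rpow_of_neg (by norm_num),
      ENNReal.mul_top (by positivity)]
    exact le_top
  · rw [← lintegral_add_right_eq_self _ (-u), abs_sub_comm]
    simp only [neg_add_cancel_right, mul_comm (annularKernel δ τ' _)]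
    exact of_lt hτ hlt (-u)

end AnnularKernel

section LowerSemicontinuous

variable {α X : Type*} [MeasurableSpace α] {μ : Measure α} [TopologicalSpace X]

theorem lowerSemicontinuous_lintegral [FirstCountableTopology X] {F : X → α → ℝ≥0∞}
    (hF : ∀ x, Measurable (F x)) (hlsc : ∀ a, LowerSemicontinuous (F · a)) :
    LowerSemicontinuous fun x => ∫⁻ a, F x a ∂μ := by
  intro x c hc
  by_contra hfreq
  obtain ⟨u, hux, hu⟩ := Filter.exists_seq_forall_of_frequently (Filter.not_eventually.1 hfreq)
  refine hc.not_ge ?_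
  calc ∫⁻ a, F x a ∂μ ≤ ∫⁻ a, Filter.liminf (fun n => F (u n) a) Filter.atTop ∂μ :=
        lintegral_mono fun a => (lowerSemicontinuousAt_iff_le_liminf.1 (hlsc a x)).trans
          (Filter.liminf_le_liminf_of_le hux)
    _ ≤ Filter.liminf (fun n => ∫⁻ a, F (u n) a ∂μ) Filter.atTop :=
        lintegral_liminf_le fun n => hF (u n)
    _ ≤ c := Filter.liminf_le_of_frequently_le' (.of_forall fun n => not_lt.1 (hu n))

theorem iSup_eq_iSup_comp_of_denseRange {ι : Type*} {d : ι → X} (hd : DenseRange d)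
    {g : X → ℝ≥0∞} (hg : LowerSemicontinuous g) : ⨆ x, g x = ⨆ i, g (d i) := by
  refine le_antisymm (iSup_le fun x => le_of_forall_lt fun c hc => ?_) (iSup_comp_le g d)
  obtain ⟨i, hi⟩ := hd.exists_mem_open (hg.isOpen_preimage c) ⟨x, hc⟩
  exact hi.trans_le (le_iSup (fun i => g (d i)) i)

variable [TopologicalSpace.SeparableSpace X] [Nonempty X]

theorem measurable_iSup_of_lowerSemicontinuous {F : α → X → ℝ≥0∞}
    (hF : ∀ x, Measurable fun a => F a x) (hlsc : ∀ a, LowerSemicontinuous (F a)) :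
    Measurable fun a => ⨆ x, F a x := by
  simp only [fun a => iSup_eq_iSup_comp_of_denseRange
    (TopologicalSpace.denseRange_denseSeq X) (hlsc a)]
  exact .iSup fun n => hF _

theorem lintegral_iSup_le_of_forall_selection [MeasurableSpace X] {F : α → X → ℝ≥0∞}
    (hF : Measurable (Function.uncurry F)) (hlsc : ∀ a, LowerSemicontinuous (F a)) {B : ℝ≥0∞}
    (hB : ∀ s : α → X, Measurable s → ∫⁻ a, F a (s a) ∂μ ≤ B) :
    ∫⁻ a, ⨆ x, F a x ∂μ ≤ B := by
  classical
  set d := TopologicalSpace.denseSeq X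
  have iSup_eq (a : α) : ⨆ x, F a x = ⨆ n, ⨆ m ≤ n, F a (d m) := by
    rw [iSup_eq_iSup_comp_of_denseRange (TopologicalSpace.denseRange_denseSeq X) (hlsc a)]
    exact le_antisymm (iSup_mono fun n => le_iSup₂_of_le n le_rfl le_rfl)
      (iSup_le fun n => iSup₂_le fun m _ => le_iSup (fun m => F a (d m)) m)
  have sup_meas (n : ℕ) : Measurable fun a => ⨆ m ≤ n, F a (d m) :=
    .biSup _ (to_countable {m | m ≤ n}) fun m _ => hF.of_uncurry_right
  have sup_mono : Monotone fun n a => ⨆ m ≤ n, F a (d m) :=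
    fun n n' hn a => biSup_mono fun m hm => hm.trans hn
  rw [lintegral_congr iSup_eq, lintegral_iSup sup_meas sup_mono]
  refine iSup_le fun n => ?_
  obtain ⟨s, hs, hmax⟩ := exists_measurable_argmax
    (Finset.nonempty_range_add_one (n := n).image d) hF
  refine (lintegral_mono fun a => iSup₂_le fun m hm => hmax a (d m) ?_).trans (hB s hs)
  exact Finset.mem_image_of_mem d (Finset.mem_range_succ_iff.2 hm)

end LowerSemicontinuous

section AnnularMean

/-- The weighted integral of `h` over the annulus centred at `x`: one dyadic piece of the
convolution of `h` with `1 / √(τ² - |z|²)`. -/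
noncomputable def annularMean (δ : ℝ) (h : ℝ² → ℝ≥0∞) (τ : ℝ) (x : ℝ²) : ℝ≥0∞ :=
  ∫⁻ y, annularKernel δ τ (y - x) * h y

/-- The maximal function of `annularMean` over all centres. -/
noncomputable def maximalMean (δ : ℝ) (h : ℝ² → ℝ≥0∞) (τ : ℝ) : ℝ≥0∞ :=
  ⨆ x, annularMean δ h τ x

variable {δ : ℝ} {h : ℝ² → ℝ≥0∞}

theorem measurable_annularMean (δ : ℝ) (hh : Measurable h) :
    Measurable (Function.uncurry (annularMean δ h)) := by
  have kernel_meas : Measurable fun z : (ℝ × ℝ²) × ℝ² => annularKernel δ z.1.1 (z.2 - z.1.2) :=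
    (measurable_annularKernel δ).comp (by fun_prop : Measurable fun z : (ℝ × ℝ²) × ℝ² =>
      (z.1.1, z.2 - z.1.2))
  exact (kernel_meas.mul (hh.comp measurable_snd)).lintegral_prod_right'

theorem lowerSemicontinuous_annularMean (δ : ℝ) (hh : Measurable h) (τ : ℝ) :
    LowerSemicontinuous (annularMean δ h τ) := by
  refine lowerSemicontinuous_lintegral (fun x => ?_) fun y => ?_
  · exact (((measurable_annularKernel δ).of_uncurry_left (x := τ)).comp
      (measurable_sub_const x)).mul hh
  · have kernel_eq : (fun x => annularKernel δ τ (y - x) * h y)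
        = ((y - ·) ⁻¹' annulus δ τ).indicator fun _ => ENNReal.ofReal (√τ)⁻¹ * h y := by
      ext x
      by_cases hx : y - x ∈ annulus δ τ <;> simp [annularKernel, hx]
    rw [kernel_eq]
    exact ((isOpen_annulus δ τ).preimage (by fun_prop)).lowerSemicontinuous_indicator zero_le

theorem annularMean_le_maximalMean (δ : ℝ) (h : ℝ² → ℝ≥0∞) (τ : ℝ) (x : ℝ²) :
    annularMean δ h τ x ≤ maximalMean δ h τ :=
  le_iSup (annularMean δ h τ) x

theorem measurable_maximalMean (δ : ℝ) (hh : Measurable h) : Measurable (maximalMean δ h) :=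
  measurable_iSup_of_lowerSemicontinuous (fun _ => (measurable_annularMean δ hh).of_uncurry_right)
    (lowerSemicontinuous_annularMean δ hh)

theorem lintegral_lintegral_annularKernel_mul_le (hδ : 0 < δ) {T : ℝ} (hT : 0 < T)
    (s : ℝ → ℝ²) (τ : ℝ) :
    ∫⁻ τ' in Ioo 0 T, ∫⁻ y, annularKernel δ τ (y - s τ) * annularKernel δ τ' (y - s τ')
      ≤ ENNReal.ofReal (600 * (δ * √δ) * √T) := by
  rcases le_or_gt τ 0 with hτ | hτ
  · simp [annularKernel, annulus_of_nonpos hδ.le hτ]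
  have translate (τ' : ℝ) :
      ∫⁻ y, annularKernel δ τ (y - s τ) * annularKernel δ τ' (y - s τ')
        = ∫⁻ z, annularKernel δ τ z * annularKernel δ τ' (z + (s τ - s τ')) := by
    rw [← lintegral_add_right_eq_self _ (s τ)]
    simp only [add_sub_cancel_right, add_sub_assoc]
  calc ∫⁻ τ' in Ioo 0 T, ∫⁻ y, annularKernel δ τ (y - s τ) * annularKernel δ τ' (y - s τ')
      ≤ ∫⁻ τ' in Ioo 0 T, ENNReal.ofReal (120 * (δ * √δ))
          * ENNReal.ofReal |τ' - τ| ^ (-(1 / 2) : ℝ) := by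
        refine setLIntegral_mono' measurableSet_Ioo fun τ' hτ' => ?_
        rw [translate, abs_sub_comm]
        exact lintegral_annularKernel_mul_le hδ hτ'.1 hτ _
    _ ≤ ENNReal.ofReal (120 * (δ * √δ)) * ENNReal.ofReal (5 * √T) := by
        rw [lintegral_const_mul _ (by fun_prop), Real.sqrt_eq_rpow T]
        gcongr
        refine (setLIntegral_abs_sub_rpow_neg_le (β := 1 / 2) (by norm_num) (by norm_num) hT
          (by simp) τ).trans_eq ?_
        norm_num
    _ = ENNReal.ofReal (600 * (δ * √δ) * √T) := by
        rw [← ENNReal.ofReal_mul (by positivity)]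
        ring_nf

-- The `TT*` method: after selecting a centre `s τ` for each radius, the bound reduces to the
-- overlaps of annuli with different radii, which decay like `|τ - τ'| ^ (-1/2)`.
theorem setLIntegral_annularMean_selection_sq_le (hδ : 0 < δ) {T : ℝ} (hT : 0 < T)
    (hh : Measurable h) {s : ℝ → ℝ²} (hs : Measurable s) :
    ∫⁻ τ in Ioo 0 T, annularMean δ h τ (s τ) ^ 2
      ≤ ENNReal.ofReal (600 * (δ * √δ) * √T) * ∫⁻ y, h y ^ 2 := by
  have kernel_meas : Measurable (Function.uncurry fun (τ : ℝ) y => annularKernel δ τ (y - s τ)) :=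
    (measurable_annularKernel δ).comp (by fun_prop : Measurable fun z : ℝ × ℝ² =>
      (z.1, z.2 - s z.1))
  exact lintegral_sq_lintegral_mul_le_of_adjoint kernel_meas (fun G hG =>
    lintegral_sq_lintegral_mul_le_of_gram kernel_meas
      (lintegral_lintegral_annularKernel_mul_le hδ hT s) hG) hh

theorem setLIntegral_maximalMean_sq_le (hδ : 0 < δ) {T : ℝ} (hT : 0 < T) (hh : Measurable h) :
    ∫⁻ τ in Ioo 0 T, maximalMean δ h τ ^ 2
      ≤ ENNReal.ofReal (600 * (δ * √δ) * √T) * ∫⁻ y, h y ^ 2 := by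
  simp only [maximalMean, ENNReal.iSup_pow_of_ne_zero two_ne_zero]
  refine lintegral_iSup_le_of_forall_selection ((measurable_annularMean δ hh).pow_const 2)
    (fun τ => ?_) fun s hs => setLIntegral_annularMean_selection_sq_le hδ hT hh hs
  exact (ENNReal.continuous_pow 2).comp_lowerSemicontinuous (lowerSemicontinuous_annularMean δ hh τ)
    (pow_left_mono (M := ℝ≥0∞) 2)

end AnnularMean

section FixedRadius

/-- The singular part, supported where `‖v‖ < ρ`, of the weight `min 1 (‖v‖ / ρ) ^ (-η)`. -/
noncomputable def nearWeight (ρ η : ℝ) (v : ℝ²) : ℝ≥0∞ :=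
  (Metric.ball 0 ρ).indicator (fun v => ENNReal.ofReal (‖v‖ / ρ) ^ (-η)) v

theorem measurable_nearWeight (ρ η : ℝ) : Measurable (nearWeight ρ η) :=
  Measurable.indicator (by fun_prop) measurableSet_ball

theorem nearWeight_neg (ρ η : ℝ) (v : ℝ²) : nearWeight ρ η (-v) = nearWeight ρ η v := by
  simp [nearWeight, indicator]

theorem rpow_neg_le_one_add_nearWeight {ρ : ℝ} (hρ : 0 < ρ) (η : ℝ) (v : ℝ²) :
    ENNReal.ofReal (min 1 (‖v‖ / ρ)) ^ (-η) ≤ 1 + nearWeight ρ η v := by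
  rcases lt_or_ge ‖v‖ ρ with hv | hv
  · rw [min_eq_right ((div_le_one hρ).2 hv.le), nearWeight,
      indicator_of_mem (mem_ball_zero_iff.2 hv)]
    exact le_add_self
  · simp [min_eq_left ((one_le_div hρ).2 hv)]

theorem lintegral_annularKernel_mul_nearWeight_le {δ τ η : ℝ} (hδ : 0 < δ) (hτ : 0 < τ)
    (hη0 : 0 ≤ η) (hη : η < 1) (x y : ℝ²) :
    ∫⁻ y', annularKernel δ τ (y - x) * annularKernel δ τ (y' - x)
        * nearWeight √(δ * τ) η (y' - y)
      ≤ ENNReal.ofReal (16 * (2 / (1 - η) + 1) * (δ * √δ / √τ)) := by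
  set ρ := √(δ * τ) with hρ
  have : 0 < 1 - η := sub_pos.2 hη
  have hS : MeasurableSet (annulus δ τ ∩ Metric.ball (y - x) ρ) :=
    (measurableSet_annulus δ τ).inter measurableSet_ball
  have restrict (z : ℝ²) : annularKernel δ τ z * nearWeight ρ η (z + x - y)
      = ENNReal.ofReal (√τ)⁻¹ * (annulus δ τ ∩ Metric.ball (y - x) ρ).indicator
        (fun z => ENNReal.ofReal (‖z - (y - x)‖ / ρ) ^ (-η)) z := by
    rw [← sub_sub_eq_add_sub z y x]
    by_cases hz : z ∈ annulus δ τ <;>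
      simp [annularKernel, nearWeight, indicator, hz, mem_ball_iff_norm, -Metric.mem_ball]
  calc _ ≤ ∫⁻ y', ENNReal.ofReal (√τ)⁻¹
          * (annularKernel δ τ (y' - x) * nearWeight ρ η (y' - y)) := by
        simp only [mul_assoc]
        gcongr
        exact annularKernel_le δ τ _
    _ = ∫⁻ z, ENNReal.ofReal (√τ)⁻¹ * (annularKernel δ τ z * nearWeight ρ η (z + x - y)) := by
        rw [← lintegral_add_right_eq_self _ x]
        simp only [add_sub_cancel_right]
    _ = ENNReal.ofReal (√τ)⁻¹ * (ENNReal.ofReal (√τ)⁻¹ * ∫⁻ z in annulus δ τ ∩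
          Metric.ball (y - x) ρ, ENNReal.ofReal (‖z - (y - x)‖ / ρ) ^ (-η)) := by
        simp only [restrict]
        rw [lintegral_const_mul' _ _ ENNReal.ofReal_ne_top,
          lintegral_const_mul' _ _ ENNReal.ofReal_ne_top, lintegral_indicator hS]
    _ ≤ ENNReal.ofReal (√τ)⁻¹ * (ENNReal.ofReal (√τ)⁻¹
          * ENNReal.ofReal (16 * (2 / (1 - η) + 1) * (δ * ρ))) := by
        gcongr
        exact setLIntegral_annulus_inter_ball_rpow_neg_le hδ hτ hη0 hη (y - x)
    _ = ENNReal.ofReal (16 * (2 / (1 - η) + 1) * (δ * √δ / √τ)) := by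
        rw [← ENNReal.ofReal_mul (by positivity), ← ENNReal.ofReal_mul (by positivity), hρ,
          Real.sqrt_mul hδ.le]
        congr 1
        field_simp

variable {δ τ : ℝ} {h : ℝ² → ℝ≥0∞}

theorem annularMean_sq_eq_lintegral (δ τ : ℝ) (hh : Measurable h) (x : ℝ²) :
    annularMean δ h τ x ^ 2 = ∫⁻ b : ℝ² × ℝ², annularKernel δ τ (b.1 - x)
      * annularKernel δ τ (b.2 - x) * (h b.1 * h b.2) := by
  have meas : Measurable fun y => annularKernel δ τ (y - x) * h y :=
    ((measurable_annularKernel δ).of_uncurry_left.comp (measurable_sub_const x)).mul hh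
  rw [sq, annularMean, Measure.volume_eq_prod, ← lintegral_prod_mul meas.aemeasurable
    meas.aemeasurable]
  exact lintegral_congr fun b => mul_mul_mul_comm _ _ _ _

theorem lintegral_prod_separation_rpow_neg_le {η : ℝ} (hδ : 0 < δ) (hτ : 0 < τ) (hη0 : 0 ≤ η)
    (hη : η < 1) (hh : Measurable h) (x : ℝ²) :
    ∫⁻ b : ℝ² × ℝ², annularKernel δ τ (b.1 - x) * annularKernel δ τ (b.2 - x)
        * (ENNReal.ofReal (min 1 (‖b.2 - b.1‖ / √(δ * τ))) ^ (-η) * (h b.1 * h b.2))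
      ≤ annularMean δ h τ x ^ 2
        + ENNReal.ofReal (16 * (2 / (1 - η) + 1) * (δ * √δ / √τ)) * ∫⁻ y, h y ^ 2 := by
  set ρ := √(δ * τ)
  have hρ : 0 < ρ := by positivity
  have kernel_meas : Measurable fun y => annularKernel δ τ (y - x) :=
    (measurable_annularKernel δ).of_uncurry_left.comp (measurable_sub_const x)
  have near_meas : Measurable fun b : ℝ² × ℝ² => annularKernel δ τ (b.1 - x)
      * annularKernel δ τ (b.2 - x) * nearWeight ρ η (b.2 - b.1) :=
    ((kernel_meas.comp measurable_fst).mul (kernel_meas.comp measurable_snd)).mul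
      ((measurable_nearWeight ρ η).comp (measurable_snd.sub measurable_fst))
  have hh_meas : Measurable fun b : ℝ² × ℝ² => h b.1 * h b.2 :=
    (hh.comp measurable_fst).mul (hh.comp measurable_snd)
  have product_meas : Measurable fun b : ℝ² × ℝ² => annularKernel δ τ (b.1 - x)
      * annularKernel δ τ (b.2 - x) * nearWeight ρ η (b.2 - b.1) * (h b.1 * h b.2) :=
    near_meas.mul hh_meas
  have near_le := lintegral_annularKernel_mul_nearWeight_le hδ hτ hη0 hη x
  calc _ ≤ ∫⁻ b : ℝ² × ℝ², (annularKernel δ τ (b.1 - x) * annularKernel δ τ (b.2 - x)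
            * (h b.1 * h b.2)
          + annularKernel δ τ (b.1 - x) * annularKernel δ τ (b.2 - x) * nearWeight ρ η (b.2 - b.1)
            * (h b.1 * h b.2)) := by
        refine lintegral_mono fun b => ?_
        rw [mul_assoc _ (nearWeight ρ η _), ← mul_add, ← one_add_mul]
        gcongr
        exact rpow_neg_le_one_add_nearWeight hρ η _
    _ = annularMean δ h τ x ^ 2 + ∫⁻ b : ℝ² × ℝ², annularKernel δ τ (b.1 - x)
          * annularKernel δ τ (b.2 - x) * nearWeight ρ η (b.2 - b.1) * (h b.1 * h b.2) := by
        rw [lintegral_add_right _ product_meas, annularMean_sq_eq_lintegral δ τ hh]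
    _ ≤ _ := by
        gcongr
        rw [Measure.volume_eq_prod, lintegral_prod _ product_meas.aemeasurable]
        refine lintegral_lintegral_mul_le_of_schur near_meas near_le (fun y => ?_) hh
        refine le_trans (le_of_eq (lintegral_congr fun y' => ?_)) (near_le y)
        rw [← nearWeight_neg ρ η (y' - y), neg_sub, mul_comm (annularKernel δ τ (y' - x))]

theorem ae_separation_ne_zero {ρ : ℝ} (hρ : 0 < ρ) :
    ∀ᵐ b : ℝ² × ℝ², ENNReal.ofReal (min 1 (‖b.2 - b.1‖ / ρ)) ≠ 0 := by
  have diagonal_null : ∀ᵐ b : ℝ² × ℝ², b.2 ≠ b.1 :=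
    (Measure.ae_prod_iff_ae_ae (measurableSet_eq_fun measurable_snd measurable_fst).compl).2
      (.of_forall fun y => Measure.ae_ne volume y)
  filter_upwards [diagonal_null] with b hb
  have : 0 < ‖b.2 - b.1‖ := norm_sub_pos_iff.2 hb
  exact (ENNReal.ofReal_pos.2 (by positivity)).ne'

theorem separation_mul_lintegral_annularKernel_mul_le (hδ : 0 < δ) (hτ : 0 < τ) (y y' : ℝ²) :
    ENNReal.ofReal (min 1 (‖y' - y‖ / √(δ * τ)))
        * ∫⁻ x, annularKernel δ τ (y - x) * annularKernel δ τ (y' - x)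
      ≤ ENNReal.ofReal (240 * (δ * √δ / √τ)) := by
  rw [← lintegral_sub_left_eq_self _ y]
  simp only [sub_sub_cancel, sub_sub_eq_add_sub, add_sub_right_comm]
  simpa only [add_comm] using lintegral_annularKernel_mul_self_le hδ hτ (y' - y)

theorem annularMean_le (δ τ : ℝ) (h : ℝ² → ℝ≥0∞) (x : ℝ²) :
    annularMean δ h τ x ≤ ENNReal.ofReal (√τ)⁻¹ * ∫⁻ y, h y := by
  rw [← lintegral_const_mul' _ _ ENNReal.ofReal_ne_top]
  exact lintegral_mono fun y => mul_le_mul_left (annularKernel_le δ τ _) _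

theorem rpow_half_sq (a : ℝ≥0∞) (q : ℝ) : (a ^ (q / 2)) ^ 2 = a ^ q := by
  rw [← ENNReal.rpow_mul_natCast, Nat.cast_two, div_mul_cancel₀ q two_ne_zero]

theorem lintegral_prod_annularKernel_mul_rpow_le {q : ℝ} (hτ : 0 < τ) (hq : 0 ≤ q)
    (hh : Measurable h) (x : ℝ²) :
    ∫⁻ b : ℝ² × ℝ², annularKernel δ τ (b.1 - x) * annularKernel δ τ (b.2 - x) * (h b.1 * h b.2) ^ q
      ≤ ENNReal.ofReal τ⁻¹ * (∫⁻ y, h y ^ q) ^ 2 := by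
  simp only [ENNReal.mul_rpow_of_nonneg _ _ hq]
  rw [← annularMean_sq_eq_lintegral δ τ (hh.pow_const q) x]
  calc _ ≤ (ENNReal.ofReal (√τ)⁻¹ * ∫⁻ y, h y ^ q) ^ 2 := by
        gcongr
        exact annularMean_le δ τ _ x
    _ = _ := by
        rw [mul_pow, ← ENNReal.ofReal_pow (by positivity), inv_pow, Real.sq_sqrt hτ.le]

theorem lintegral_prod_separation_rpow_neg_mul_rpow_le {q η : ℝ} (hδ : 0 < δ) (hτ : 0 < τ)
    (hq : 0 ≤ q) (hη0 : 0 ≤ η) (hη : η < 1) (hh : Measurable h) (x : ℝ²) :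
    ∫⁻ b : ℝ² × ℝ², annularKernel δ τ (b.1 - x) * annularKernel δ τ (b.2 - x)
        * (ENNReal.ofReal (min 1 (‖b.2 - b.1‖ / √(δ * τ))) ^ (-η) * (h b.1 * h b.2) ^ (q / 2))
      ≤ maximalMean δ (fun y => h y ^ (q / 2)) τ ^ 2
        + ENNReal.ofReal (16 * (2 / (1 - η) + 1) * (δ * √δ / √τ)) * ∫⁻ y, h y ^ q := by
  simp only [ENNReal.mul_rpow_of_nonneg _ _ (div_nonneg hq zero_le_two), ← rpow_half_sq _ q]
  refine (lintegral_prod_separation_rpow_neg_le hδ hτ hη0 hη (hh.pow_const _) x).trans ?_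
  gcongr
  exact annularMean_le_maximalMean ..

-- Interpolation with the singularity of the overlap of two annuli placed in the weight
-- `min 1 (‖y' - y‖ / √(δ * τ))`.
theorem lintegral_annularMean_rpow_le {q r : ℝ} (hδ : 0 < δ) (hτ : 0 < τ) (hr : 0 < r)
    (hqr : 1 / 2 + 1 / r ≤ 1 / q) (hqr' : 1 / q + 1 / r < 1) (hh : Measurable h) :
    (∫⁻ x, annularMean δ h τ x ^ r) ^ (2 / r)
      ≤ (ENNReal.ofReal τ⁻¹ * (∫⁻ y, h y ^ q) ^ 2) ^ (2 / q - 1 - 2 / r)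
        * (maximalMean δ (fun y => h y ^ (q / 2)) τ ^ 2
          + ENNReal.ofReal (16 * (2 / (1 - 1 / r / (1 - 1 / q)) + 1) * (δ * √δ / √τ))
            * ∫⁻ y, h y ^ q) ^ (2 - 2 / q)
        * (ENNReal.ofReal (240 * (δ * √δ / √τ)) * (∫⁻ y, h y ^ q) ^ 2) ^ (2 / r) := by
  have hr' : 0 < 1 / r := by positivity
  have hq : 0 < q := one_div_pos.1 (by linarith)
  have hq1 : 0 < 1 - 1 / q := by linarith
  have kernel_meas : Measurable (annularKernel δ τ) := (measurable_annularKernel δ).of_uncurry_left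
  have pair_meas : Measurable fun z : ℝ² × ℝ² × ℝ² =>
      annularKernel δ τ (z.2.1 - z.1) * annularKernel δ τ (z.2.2 - z.1) := by fun_prop
  have bound := lintegral_rpow_lintegral_mul_le_of_weight (μ := volume) (ν := volume)
    (m := fun x (b : ℝ² × ℝ²) => annularKernel δ τ (b.1 - x) * annularKernel δ τ (b.2 - x))
    pair_meas (D := fun b => ENNReal.ofReal (min 1 (‖b.2 - b.1‖ / √(δ * τ))))
    (H := fun b => h b.1 * h b.2) (by fun_prop) (by fun_prop)
    ((ae_separation_ne_zero (by positivity)).mono fun b hb => ⟨hb, ENNReal.ofReal_ne_top⟩)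
    (q := q) (η := 1 / r / (1 - 1 / q)) (θ₁ := 2 / q - 1 - 2 / r) (θ₂ := 2 - 2 / q) (θ₃ := 2 / r)
    (A := ENNReal.ofReal τ⁻¹ * (∫⁻ y, h y ^ q) ^ 2)
    (R := maximalMean δ (fun y => h y ^ (q / 2)) τ ^ 2
      + ENNReal.ofReal (16 * (2 / (1 - 1 / r / (1 - 1 / q)) + 1) * (δ * √δ / √τ)) * ∫⁻ y, h y ^ q)
    (Q := ENNReal.ofReal (240 * (δ * √δ / √τ)))
    (by ring_nf at *; linarith) (by ring_nf at *; linarith) (by positivity) (by ring) hq.le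
    (by field_simp; ring)
    (by rw [show 2 - 2 / q = 2 * (1 - 1 / q) by ring, ← mul_assoc, mul_right_comm,
      div_mul_cancel₀ _ hq1.ne', one_div_mul_eq_div])
    (lintegral_prod_annularKernel_mul_rpow_le hτ hq.le hh)
    (lintegral_prod_separation_rpow_neg_mul_rpow_le hδ hτ hq.le (by positivity)
      ((div_lt_one hq1).2 (by linarith)) hh)
    fun b => separation_mul_lintegral_annularKernel_mul_le hδ hτ b.1 b.2
  simp only [← annularMean_sq_eq_lintegral δ τ hh, ENNReal.mul_rpow_of_nonneg _ _ hq.le] at bound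
  rw [Measure.volume_eq_prod, lintegral_prod_mul (hh.pow_const q).aemeasurable
    (hh.pow_const q).aemeasurable, ← sq] at bound
  convert bound using 4 with x
  rw [← ENNReal.rpow_natCast_mul, Nat.cast_two, one_div_div, mul_div_cancel₀ r two_ne_zero]

end FixedRadius

section TimeIntegral

variable {δ τ T q r : ℝ} {h : ℝ² → ℝ≥0∞}

theorem rpow_half_interpolation_bound {t : ℝ≥0∞} (ht0 : t ≠ 0) (ht : t ≠ ∞) (F R S : ℝ≥0∞)
    {θ₁ θ₂ θ₃ : ℝ} (hθ₁ : 0 ≤ θ₁) (hθ₃ : 0 ≤ θ₃) :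
    ((t ^ (-1 : ℝ) * S ^ 2) ^ θ₁ * R ^ θ₂ * (F * t ^ (-(1 / 2) : ℝ) * S ^ 2) ^ θ₃) ^ (1 / 2 : ℝ)
      = F ^ (θ₃ / 2) * S ^ (θ₁ + θ₃) * (t ^ (-(θ₁ / 2 + θ₃ / 4)) * R ^ (θ₂ / 2)) := by
  have half : (0 : ℝ) ≤ 1 / 2 := by norm_num
  rw [ENNReal.mul_rpow_of_nonneg _ _ half, ENNReal.mul_rpow_of_nonneg _ _ half]
  simp only [← ENNReal.rpow_mul _ _ (1 / 2 : ℝ)]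
  simp only [ENNReal.mul_rpow_of_nonneg _ _ (mul_nonneg hθ₁ half),
    ENNReal.mul_rpow_of_nonneg _ _ (mul_nonneg hθ₃ half), ← ENNReal.rpow_mul,
    ← ENNReal.rpow_natCast_mul]
  rw [ENNReal.rpow_add_of_nonneg _ _ hθ₁ hθ₃, show -(θ₁ / 2 + θ₃ / 4)
    = -1 * (θ₁ * (1 / 2)) + -(1 / 2) * (θ₃ * (1 / 2)) by ring, ENNReal.rpow_add _ _ ht0 ht]
  push_cast
  ring_nf

theorem rpow_lintegral_annularMean_le (hδ : 0 < δ) (hτ : 0 < τ) (hr : 0 < r)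
    (hqr : 1 / 2 + 1 / r ≤ 1 / q) (hqr' : 1 / q + 1 / r < 1) (hh : Measurable h) :
    (∫⁻ x, annularMean δ h τ x ^ r) ^ (1 / r)
      ≤ (240 * ENNReal.ofReal (δ * √δ)) ^ (1 / r) * (∫⁻ y, h y ^ q) ^ (2 / q - 1)
        * ((ENNReal.ofReal τ ^ (-(1 - q * (1 / 2 + 1 / (2 * r))))) ^ (1 / q)
          * (maximalMean δ (fun y => h y ^ (q / 2)) τ ^ 2
            + ENNReal.ofReal (16 * (2 / (1 - 1 / r / (1 - 1 / q)) + 1) * (δ * √δ / √τ))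
              * ∫⁻ y, h y ^ q) ^ (1 - 1 / q)) := by
  have hr' : 0 < 1 / r := by positivity
  have hq : 0 < q := one_div_pos.1 (by linarith)
  have hτ0 : ENNReal.ofReal τ ≠ 0 := (ENNReal.ofReal_pos.2 hτ).ne'
  have overlap : ENNReal.ofReal (240 * (δ * √δ / √τ))
      = 240 * ENNReal.ofReal (δ * √δ) * ENNReal.ofReal τ ^ (-(1 / 2) : ℝ) := by
    rw [ENNReal.ofReal_rpow_of_pos hτ, Real.rpow_neg hτ.le, ← Real.sqrt_eq_rpow,
      ENNReal.ofReal_mul (by norm_num), div_eq_mul_inv, ENNReal.ofReal_mul (by positivity),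
      ENNReal.ofReal_ofNat, mul_assoc]
  have density : ENNReal.ofReal τ⁻¹ = ENNReal.ofReal τ ^ (-1 : ℝ) := by
    rw [ENNReal.ofReal_inv_of_pos hτ, ENNReal.rpow_neg_one]
  have bound := ENNReal.rpow_le_rpow (lintegral_annularMean_rpow_le hδ hτ hr hqr hqr' hh)
    (one_half_pos (α := ℝ)).le
  rw [overlap, density, rpow_half_interpolation_bound hτ0 ENNReal.ofReal_ne_top _ _ _
    (by ring_nf at *; linarith) (by positivity), ← ENNReal.rpow_mul] at bound
  rw [← ENNReal.rpow_mul (ENNReal.ofReal τ)]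
  convert bound using 4
  · ring
  · ring
  · ring
  · field_simp
    ring
  · ring

theorem measurable_maximalMean_sq_add (B : ℝ) (hh : Measurable h) :
    Measurable fun τ => maximalMean δ (fun y => h y ^ (q / 2)) τ ^ 2
      + ENNReal.ofReal (B * (δ * √δ / √τ)) * ∫⁻ y, h y ^ q :=
  ((measurable_maximalMean δ (hh.pow_const _)).pow_const 2).add (by fun_prop)

theorem setLIntegral_maximalMean_sq_add_le {B : ℝ} (hδ : 0 < δ) (hT : 0 < T) (hB : 0 ≤ B)
    (hh : Measurable h) :
    ∫⁻ τ in Ioo 0 T, (maximalMean δ (fun y => h y ^ (q / 2)) τ ^ 2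
        + ENNReal.ofReal (B * (δ * √δ / √τ)) * ∫⁻ y, h y ^ q)
      ≤ ENNReal.ofReal (600 + 2 * B) * ENNReal.ofReal (δ * √δ) * ENNReal.ofReal (1 + T)
        * ∫⁻ y, h y ^ q := by
  have half_meas : Measurable fun y => h y ^ (q / 2) := hh.pow_const _
  have maximal := setLIntegral_maximalMean_sq_le hδ hT half_meas
  simp only [rpow_half_sq] at maximal
  have sqrt_le : √T ≤ 1 + T := Real.sqrt_le_iff.2 ⟨by linarith, by nlinarith⟩
  set S := ∫⁻ y, h y ^ q
  have singular : ∫⁻ τ in Ioo 0 T, ENNReal.ofReal (B * (δ * √δ / √τ)) * S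
      = ENNReal.ofReal (2 * B * (δ * √δ) * √T) * S := by
    have split : ∀ τ ∈ Ioo 0 T, ENNReal.ofReal (B * (δ * √δ / √τ)) * S
        = ENNReal.ofReal (B * (δ * √δ)) * S * ENNReal.ofReal τ ^ (-(1 / 2) : ℝ) := fun τ hτ => by
      rw [ENNReal.ofReal_rpow_of_pos hτ.1, Real.rpow_neg hτ.1.le, ← Real.sqrt_eq_rpow,
        ← mul_div_assoc, div_eq_mul_inv, ENNReal.ofReal_mul (by positivity), mul_right_comm]
    rw [setLIntegral_congr_fun measurableSet_Ioo split, lintegral_const_mul _ (by fun_prop),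
      setLIntegral_Ioo_rpow_neg (by norm_num) hT.le, mul_right_comm,
      ← ENNReal.ofReal_mul (by positivity), Real.sqrt_eq_rpow T]
    congr 2
    ring_nf
  rw [lintegral_add_left ((measurable_maximalMean δ half_meas).pow_const 2), singular]
  calc _ ≤ ENNReal.ofReal (600 * (δ * √δ) * √T) * S
          + ENNReal.ofReal (2 * B * (δ * √δ) * √T) * S := by gcongr
    _ = ENNReal.ofReal (600 + 2 * B) * ENNReal.ofReal (δ * √δ) * ENNReal.ofReal √T * S := by
        rw [← add_mul, ← ENNReal.ofReal_add (by positivity) (by positivity),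
          ← ENNReal.ofReal_mul (by positivity), ← ENNReal.ofReal_mul (by positivity)]
        ring_nf
    _ ≤ _ := by gcongr

theorem setLIntegral_rpow_neg_mul_maximalMean_le {B κ : ℝ} (hδ : 0 < δ) (hT : 0 < T) (hB : 0 ≤ B)
    (hκ0 : 0 < κ) (hκ1 : κ ≤ 1) (hq0 : 0 ≤ 1 / q) (hq1 : 0 ≤ 1 - 1 / q) (hh : Measurable h) :
    ∫⁻ τ in Ioo 0 T, (ENNReal.ofReal τ ^ (-(1 - κ))) ^ (1 / q)
        * (maximalMean δ (fun y => h y ^ (q / 2)) τ ^ 2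
          + ENNReal.ofReal (B * (δ * √δ / √τ)) * ∫⁻ y, h y ^ q) ^ (1 - 1 / q)
      ≤ (ENNReal.ofReal κ⁻¹ * ENNReal.ofReal (1 + T)) ^ (1 / q)
        * (ENNReal.ofReal (600 + 2 * B) * ENNReal.ofReal (δ * √δ) * ENNReal.ofReal (1 + T)
          * ∫⁻ y, h y ^ q) ^ (1 - 1 / q) := by
  have pow_le : T ^ κ ≤ 1 + T :=
    calc T ^ κ ≤ (1 + T) ^ κ := Real.rpow_le_rpow hT.le (by linarith) hκ0.le
      _ ≤ (1 + T) ^ (1 : ℝ) := Real.rpow_le_rpow_of_exponent_le (by linarith) hκ1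
      _ = 1 + T := Real.rpow_one _
  refine (ENNReal.lintegral_mul_norm_pow_le (by fun_prop)
    (measurable_maximalMean_sq_add B hh).aemeasurable hq0 hq1 (by ring)).trans ?_
  gcongr
  · rw [setLIntegral_Ioo_rpow_neg (by linarith) hT.le, sub_sub_cancel, div_eq_inv_mul,
      ENNReal.ofReal_mul (by positivity)]
    exact mul_le_mul_right (ENNReal.ofReal_le_ofReal pow_le) _
  · exact setLIntegral_maximalMean_sq_add_le hδ hT hB hh

theorem exists_setLIntegral_rpow_lintegral_annularMean_le (hr : 0 < r)
    (hqr : 1 / 2 + 1 / r ≤ 1 / q) (hqr' : 1 / q + 1 / r < 1) :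
    ∃ C : ℝ≥0, ∀ {δ T : ℝ} {h : ℝ² → ℝ≥0∞}, 0 < δ → 0 < T → Measurable h →
      ∫⁻ τ in Ioo 0 T, (∫⁻ x, annularMean δ h τ x ^ r) ^ (1 / r)
        ≤ C * ENNReal.ofReal (1 + T) * ENNReal.ofReal (δ * √δ) ^ (1 - 1 / q + 1 / r)
          * (∫⁻ y, h y ^ q) ^ (1 / q) := by
  have hr' : 0 < 1 / r := by positivity
  have hq : 0 < q := one_div_pos.1 (by linarith)
  have hq0 : 0 ≤ 1 / q := by positivity
  have hq1 : 0 ≤ 1 - 1 / q := by linarith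
  set κ := q * (1 / 2 + 1 / (2 * r))
  have hκ0 : 0 < κ := by positivity
  have hκ1 : κ ≤ 1 :=
    calc q * (1 / 2 + 1 / (2 * r)) ≤ q * (1 / q) := by
          gcongr
          linarith [show 1 / (2 * r) = 1 / r / 2 by ring]
      _ = 1 := mul_one_div_cancel hq.ne'
  set B := 16 * (2 / (1 - 1 / r / (1 - 1 / q)) + 1)
  have hB0 : 0 ≤ B := by
    have : 0 < 1 - 1 / r / (1 - 1 / q) := sub_pos.2 ((div_lt_one (by linarith)).2 (by linarith))
    positivity
  refine ⟨(240 ^ (1 / r) * ENNReal.ofReal κ⁻¹ ^ (1 / q)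
    * ENNReal.ofReal (600 + 2 * B) ^ (1 - 1 / q)).toNNReal, fun {δ T h} hδ hT hh => ?_⟩
  rw [ENNReal.coe_toNNReal (by finiteness)]
  set E := ENNReal.ofReal (δ * √δ)
  set S := ∫⁻ y, h y ^ q
  set U := ENNReal.ofReal (1 + T)
  set R : ℝ → ℝ≥0∞ := fun τ => maximalMean δ (fun y => h y ^ (q / 2)) τ ^ 2
    + ENNReal.ofReal (B * (δ * √δ / √τ)) * S
  have mean_meas : Measurable R := measurable_maximalMean_sq_add B hh
  calc _ ≤ ∫⁻ τ in Ioo 0 T, (240 * E) ^ (1 / r) * S ^ (2 / q - 1)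
          * ((ENNReal.ofReal τ ^ (-(1 - κ))) ^ (1 / q) * R τ ^ (1 - 1 / q)) :=
        setLIntegral_mono' measurableSet_Ioo fun τ hτ =>
          rpow_lintegral_annularMean_le hδ hτ.1 hr hqr hqr' hh
    _ ≤ (240 * E) ^ (1 / r) * S ^ (2 / q - 1) * ((ENNReal.ofReal κ⁻¹ * U) ^ (1 / q)
          * (ENNReal.ofReal (600 + 2 * B) * E * U * S) ^ (1 - 1 / q)) := by
        rw [lintegral_const_mul _ (by fun_prop)]
        gcongr
        exact setLIntegral_rpow_neg_mul_maximalMean_le hδ hT hB0 hκ0 hκ1 hq0 hq1 hh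
    _ = 240 ^ (1 / r) * ENNReal.ofReal κ⁻¹ ^ (1 / q) * ENNReal.ofReal (600 + 2 * B) ^ (1 - 1 / q)
          * (U ^ (1 / q) * U ^ (1 - 1 / q)) * (E ^ (1 - 1 / q) * E ^ (1 / r))
          * (S ^ (2 / q - 1) * S ^ (1 - 1 / q)) := by
        simp only [ENNReal.mul_rpow_of_nonneg _ _ hq1, ENNReal.mul_rpow_of_nonneg _ _ hr'.le,
          ENNReal.mul_rpow_of_nonneg _ _ hq0]
        ring
    _ = _ := by
        rw [← ENNReal.rpow_add_of_nonneg _ _ hq0 hq1, ← ENNReal.rpow_add_of_nonneg _ _ hq1 hr'.le,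
          ← ENNReal.rpow_add_of_nonneg _ _ (by ring_nf at *; linarith) hq1, add_sub_cancel,
          ENNReal.rpow_one, show 2 / q - 1 + (1 - 1 / q) = 1 / q by ring]

end TimeIntegral

section DyadicSum

theorem mul_self_rpow_half (x : ℝ≥0∞) : (x * x) ^ (1 / 2 : ℝ) = x := by
  rw [← sq, ← ENNReal.rpow_natCast_mul]
  norm_num

theorem rpow_half_mul_mul_rpow_half_div {A B : ℝ≥0∞} (hA0 : A ≠ 0) (hA : A ≠ ∞) :
    (A * B) ^ (1 / 2 : ℝ) * (B / A) ^ (1 / 2 : ℝ) = B := by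
  rw [← ENNReal.mul_rpow_of_nonneg _ _ (by norm_num), mul_comm A B, mul_assoc,
    ENNReal.mul_div_cancel hA0 hA, mul_self_rpow_half]

theorem tsum_le_of_le_zpow_rpow {a : ℝ} (ha : 0 < a) {t : ℤ → ℝ≥0∞} {A B : ℝ≥0∞}
    (hA : ∀ j : ℤ, t j ≤ A * (2 ^ j) ^ (-a)) (hB : ∀ j : ℤ, t j ≤ B * (2 ^ j) ^ a) :
    ∑' j, t j ≤ 2 * (1 - 2 ^ (-a))⁻¹ * (A * B) ^ (1 / 2 : ℝ) := by
  rcases eq_or_ne A 0 with rfl | hA0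
  · simp [show t = 0 from funext fun j => by simpa using hA j]
  rcases eq_or_ne B 0 with rfl | hB0
  · simp [show t = 0 from funext fun j => by simpa using hB j]
  rcases eq_or_ne (A * B) ∞ with hAB | hAB
  · simp [hAB, ENNReal.mul_top, ENNReal.inv_eq_zero]
  have hA' : A ≠ ∞ := fun h => hAB (by simp [h, hB0])
  have hB' : B ≠ ∞ := fun h => hAB (by simp [h, hA0])
  set L := (B / A) ^ (1 / (2 * a))
  have hL : L ≠ 0 := (ENNReal.rpow_pos (ENNReal.div_pos hB0 hA') (ENNReal.div_ne_top hB' hA0)).ne'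
  have hLa : L ^ a = (B / A) ^ (1 / 2 : ℝ) := by
    rw [← ENNReal.rpow_mul]
    congr 1
    field_simp
  have upper : (A * B) ^ (1 / 2 : ℝ) * L ^ a = B := by
    rw [hLa, rpow_half_mul_mul_rpow_half_div hA0 hA']
  have lower : (A * B) ^ (1 / 2 : ℝ) * L ^ (-a) = A := by
    rw [ENNReal.rpow_neg, hLa, ← ENNReal.inv_rpow, ENNReal.inv_div (.inl hA') (.inl hA0),
      mul_comm A, rpow_half_mul_mul_rpow_half_div hB0 hB']
  have balanced (j : ℤ) : t j
      ≤ (A * B) ^ (1 / 2 : ℝ) * min ((2 ^ j * L) ^ a) ((2 ^ j * L) ^ (-a)) := by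
    have h2 : (2 : ℝ≥0∞) ^ j ≠ 0 := (ENNReal.zpow_pos two_ne_zero ENNReal.ofNat_ne_top j).ne'
    rcases min_choice ((2 ^ j * L) ^ a) ((2 ^ j * L) ^ (-a)) with hmin | hmin <;>
      rw [hmin, ENNReal.mul_rpow_of_ne_zero h2 hL, mul_left_comm]
    · rw [upper, mul_comm]
      exact hB j
    · rw [lower, mul_comm]
      exact hA j
  calc ∑' j, t j
      ≤ ∑' j : ℤ, (A * B) ^ (1 / 2 : ℝ) * min ((2 ^ j * L) ^ a) ((2 ^ j * L) ^ (-a)) :=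
        ENNReal.tsum_le_tsum balanced
    _ ≤ _ := by
        rw [ENNReal.tsum_mul_left, mul_comm]
        gcongr
        exact tsum_min_zpow_rpow_le ha L

theorem rpow_lintegral_tsum_le {α ι : Type*} [MeasurableSpace α] {μ : Measure α} [SigmaFinite μ]
    [Countable ι] {w : ι → α → ℝ≥0∞} (hw : ∀ i, Measurable (w i)) {p : ℝ} (hp : 1 < p) :
    (∫⁻ x, (∑' i, w i x) ^ p ∂μ) ^ (1 / p) ≤ ∑' i, (∫⁻ x, w i x ^ p ∂μ) ^ (1 / p) := by
  let : MeasurableSpace ι := ⊤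
  simp only [← lintegral_count]
  exact lintegral_rpow_lintegral_le (measurable_from_prod_countable_right hw) hp

end DyadicSum

section ConePotential

/-- The two-dimensional wave potential `∫_{|y - x| ≤ τ} h y / √(τ² - |y - x|²) dy`, in which
`√0⁻¹ = 0` on the boundary of the cone. -/
noncomputable def conePotential (h : ℝ² → ℝ≥0∞) (τ : ℝ) (x : ℝ²) : ℝ≥0∞ :=
  ∫⁻ y in {y | dist y x ≤ τ}, ENNReal.ofReal (√(τ ^ 2 - dist y x ^ 2))⁻¹ * h y

variable {h : ℝ² → ℝ≥0∞}

theorem ofReal_inv_sqrt_le_tsum_annularKernel {τ : ℝ} (hτ : 0 < τ) (z : ℝ²) :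
    ENNReal.ofReal (√(τ ^ 2 - ‖z‖ ^ 2))⁻¹
      ≤ ∑' j : ℤ, ENNReal.ofReal (√(2 ^ j))⁻¹ * annularKernel (2 ^ j) τ z := by
  rcases le_or_gt (τ ^ 2 - ‖z‖ ^ 2) 0 with hs | hs
  · simp [Real.sqrt_eq_zero_of_nonpos hs]
  obtain ⟨j, hj, hj'⟩ := exists_mem_Ico_zpow (div_pos hs hτ) one_lt_two
  rw [le_div_iff₀ hτ] at hj
  rw [div_lt_iff₀ hτ, zpow_add_one₀ two_ne_zero, mul_comm (2 ^ j)] at hj'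
  have hδ : (0 : ℝ) < 2 ^ j := by positivity
  have mem : z ∈ annulus (2 ^ j) τ := ⟨by nlinarith, hj'⟩
  refine le_trans ?_ (ENNReal.le_tsum j)
  rw [annularKernel, indicator_of_mem mem, ← ENNReal.ofReal_mul (by positivity), ← mul_inv,
    ← Real.sqrt_mul hδ.le]
  gcongr

theorem conePotential_le_tsum_annularMean {τ : ℝ} (hτ : 0 < τ) (hh : Measurable h) (x : ℝ²) :
    conePotential h τ x
      ≤ ∑' j : ℤ, ENNReal.ofReal (√(2 ^ j))⁻¹ * annularMean (2 ^ j) h τ x := by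
  have kernel_meas (j : ℤ) : Measurable (annularKernel (2 ^ j) τ) :=
    (measurable_annularKernel _).of_uncurry_left
  calc conePotential h τ x
      ≤ ∫⁻ y, ENNReal.ofReal (√(τ ^ 2 - dist y x ^ 2))⁻¹ * h y := setLIntegral_le_lintegral _ _
    _ ≤ ∫⁻ y, ∑' j : ℤ, ENNReal.ofReal (√(2 ^ j))⁻¹ * (annularKernel (2 ^ j) τ (y - x) * h y) := by
        refine lintegral_mono fun y => ?_
        simp only [← mul_assoc, ENNReal.tsum_mul_right, dist_eq_norm]
        gcongr
        exact ofReal_inv_sqrt_le_tsum_annularKernel hτ _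
    _ = _ := by
        rw [lintegral_tsum fun j => by fun_prop]
        simp only [lintegral_const_mul' _ _ ENNReal.ofReal_ne_top, annularMean]

theorem measurable_rpow_lintegral_annularMean (δ r : ℝ) (hh : Measurable h) :
    Measurable fun τ => (∫⁻ x, annularMean δ h τ x ^ r) ^ (1 / r) :=
  (((measurable_annularMean δ hh).pow_const r).lintegral_prod_right').pow_const _

theorem setLIntegral_conePotential_le_tsum {r : ℝ} (hr : 1 < r) (T : ℝ) (hh : Measurable h) :
    ∫⁻ τ in Ioo 0 T, (∫⁻ x, conePotential h τ x ^ r) ^ (1 / r)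
      ≤ ∑' j : ℤ, ENNReal.ofReal (√(2 ^ j))⁻¹
        * ∫⁻ τ in Ioo 0 T, (∫⁻ x, annularMean (2 ^ j) h τ x ^ r) ^ (1 / r) := by
  have hr0 : 0 < r := by linarith
  calc _ ≤ ∫⁻ τ in Ioo 0 T, ∑' j : ℤ, ENNReal.ofReal (√(2 ^ j))⁻¹
          * (∫⁻ x, annularMean (2 ^ j) h τ x ^ r) ^ (1 / r) := by
        refine setLIntegral_mono' measurableSet_Ioo fun τ hτ => ?_
        have mean_meas (j : ℤ) : Measurable (annularMean (2 ^ j) h τ) :=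
          (measurable_annularMean _ hh).of_uncurry_left
        calc _ ≤ (∫⁻ x, (∑' j : ℤ, ENNReal.ofReal (√(2 ^ j))⁻¹
                * annularMean (2 ^ j) h τ x) ^ r) ^ (1 / r) := by
              gcongr with x
              exact conePotential_le_tsum_annularMean hτ.1 hh x
          _ ≤ ∑' j : ℤ, (∫⁻ x, (ENNReal.ofReal (√(2 ^ j))⁻¹
                * annularMean (2 ^ j) h τ x) ^ r) ^ (1 / r) :=
              rpow_lintegral_tsum_le (fun j => (mean_meas j).const_mul _) hr
          _ = _ := by
              refine tsum_congr fun j => ?_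
              simp only [ENNReal.mul_rpow_of_nonneg _ _ hr0.le]
              rw [lintegral_const_mul' _ _ (by finiteness),
                ENNReal.mul_rpow_of_nonneg _ _ (by positivity), one_div,
                ENNReal.rpow_rpow_inv hr0.ne']
    _ = _ := by
        rw [lintegral_tsum fun j =>
          ((measurable_rpow_lintegral_annularMean _ r hh).const_mul _).aemeasurable]
        simp only [lintegral_const_mul' _ _ ENNReal.ofReal_ne_top]

end ConePotential

theorem rpow_lintegral_mul_rpow_le {α : Type*} [MeasurableSpace α] {μ : Measure α}
    {k g : α → ℝ≥0∞} (hk : Measurable k) (hg : Measurable g) {a b c u v w q : ℝ} (hu : 0 ≤ u)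
    (hv : 0 ≤ v) (hw : 0 ≤ w) (hau : a * u = 1) (hbc : b * v + c * w = 1)
    (hb : 0 ≤ b) (hc : 0 ≤ c) (hq : 0 < q) (huvw : u + v + w = 1 / q) :
    (∫⁻ x, (k x * g x) ^ q ∂μ) ^ (1 / q)
      ≤ (∫⁻ x, k x ^ a ∂μ) ^ u * (∫⁻ x, g x ^ b ∂μ) ^ v * (∫⁻ x, g x ^ c ∂μ) ^ w := by
  have split (x : α) :
      (k x * g x) ^ q = (k x ^ a) ^ (u * q) * (g x ^ b) ^ (v * q) * (g x ^ c) ^ (w * q) := by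
    rw [mul_assoc, ← ENNReal.rpow_mul, ← ENNReal.rpow_mul, ← ENNReal.rpow_mul,
      ← ENNReal.rpow_add_of_nonneg _ _ (by positivity) (by positivity), ← mul_assoc, hau, one_mul,
      ← mul_assoc, ← mul_assoc, ← add_mul, hbc, one_mul, ENNReal.mul_rpow_of_nonneg _ _ hq.le]
  have sum_weights : u * q + v * q + w * q = 1 := by
    rw [← add_mul, ← add_mul, huvw, one_div_mul_cancel hq.ne']
  rw [one_div, ENNReal.rpow_inv_le_iff hq, ENNReal.mul_rpow_of_nonneg _ _ hq.le,
    ENNReal.mul_rpow_of_nonneg _ _ hq.le]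
  simp only [split, ← ENNReal.rpow_mul _ _ q]
  exact lintegral_rpow_mul_rpow_mul_rpow_le (hk.pow_const a).aemeasurable
    (hg.pow_const b).aemeasurable (hg.pow_const c).aemeasurable (by positivity) (by positivity)
    (by positivity) sum_weights

theorem ofReal_inv_sqrt_mul_rpow {δ : ℝ} (hδ : 0 < δ) (e : ℝ) :
    ENNReal.ofReal (√δ)⁻¹ * ENNReal.ofReal (δ * √δ) ^ e
      = ENNReal.ofReal δ ^ (3 / 2 * e - 1 / 2) := by
  rw [ENNReal.ofReal_rpow_of_pos (by positivity), ENNReal.ofReal_rpow_of_pos hδ,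
    ← ENNReal.ofReal_mul (by positivity), Real.sqrt_eq_rpow, ← Real.rpow_neg hδ.le]
  nth_rw 2 [← Real.rpow_one δ]
  rw [← Real.rpow_add hδ, ← Real.rpow_mul hδ.le, ← Real.rpow_add hδ]
  ring_nf

theorem exists_setLIntegral_annularMean_zpow_le {q r : ℝ} (hr : 0 < r)
    (hqr : 1 / 2 + 1 / r ≤ 1 / q) (hqr' : 1 / q + 1 / r < 1) :
    ∃ C : ℝ≥0, ∀ {T : ℝ} {h : ℝ² → ℝ≥0∞}, 0 < T → Measurable h → ∀ j : ℤ,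
      ENNReal.ofReal (√(2 ^ j))⁻¹
          * ∫⁻ τ in Ioo 0 T, (∫⁻ x, annularMean (2 ^ j) h τ x ^ r) ^ (1 / r)
        ≤ C * ENNReal.ofReal (1 + T) * (∫⁻ y, h y ^ q) ^ (1 / q)
          * (2 ^ j) ^ (1 - 3 / 2 * (1 / q - 1 / r)) := by
  obtain ⟨C, hC⟩ := exists_setLIntegral_rpow_lintegral_annularMean_le hr hqr hqr'
  refine ⟨C, fun {T h} hT hh j => ?_⟩
  have hδ : (0 : ℝ) < 2 ^ j := by positivity
  calc _ ≤ ENNReal.ofReal (√(2 ^ j))⁻¹ * (C * ENNReal.ofReal (1 + T)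
          * ENNReal.ofReal (2 ^ j * √(2 ^ j)) ^ (1 - 1 / q + 1 / r)
          * (∫⁻ y, h y ^ q) ^ (1 / q)) := by
        gcongr
        exact hC hδ hT hh
    _ = C * ENNReal.ofReal (1 + T) * (∫⁻ y, h y ^ q) ^ (1 / q)
          * (ENNReal.ofReal (√(2 ^ j))⁻¹
            * ENNReal.ofReal (2 ^ j * √(2 ^ j)) ^ (1 - 1 / q + 1 / r)) := by ring
    _ = _ := by
        have ofReal_two_zpow : ENNReal.ofReal (2 ^ j) = 2 ^ j := by
          rw [← Real.rpow_intCast, ← ENNReal.ofReal_rpow_of_pos two_pos, ENNReal.ofReal_ofNat,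
            ENNReal.rpow_intCast]
        rw [ofReal_inv_sqrt_mul_rpow hδ, ofReal_two_zpow]
        ring_nf

theorem exists_setLIntegral_annularMean_mul_zpow_le {r v w : ℝ} (hr : 0 < r) (hv : 0 ≤ v)
    (hw : 0 ≤ w) (hvw : 3 * v + r * w = 1) (hle : 1 / r ≤ v + w) (hlt : v + w < 1 / 2 - 1 / r) :
    ∃ C : ℝ≥0, ∀ {T : ℝ} {k g : ℝ² → ℝ≥0∞}, 0 < T → Measurable k → Measurable g → ∀ j : ℤ,
      ENNReal.ofReal (√(2 ^ j))⁻¹ * ∫⁻ τ in Ioo 0 T,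
          (∫⁻ x, annularMean (2 ^ j) (fun y => k y * g y) τ x ^ r) ^ (1 / r)
        ≤ C * (ENNReal.ofReal (1 + T) * (∫⁻ y, k y ^ (2 : ℝ)) ^ (1 / 2 : ℝ))
          * ((∫⁻ y, g y ^ (3 : ℝ)) ^ v * (∫⁻ y, g y ^ r) ^ w)
          * (2 ^ j) ^ (1 / 4 - 3 / 2 * (v + w - 1 / r)) := by
  set q := 1 / (1 / 2 + v + w)
  have hq_inv : 1 / q = 1 / 2 + v + w := one_div_one_div _
  obtain ⟨C, hC⟩ := exists_setLIntegral_annularMean_zpow_le (q := q) hr (by linarith) (by linarith)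
  refine ⟨C, fun {T k g} hT hk hg j => (hC hT (hk.mul hg) j).trans ?_⟩
  have holder := rpow_lintegral_mul_rpow_le (μ := volume) hk hg (a := 2) (u := 1 / 2)
    (by norm_num) hv hw (by norm_num) hvw (by norm_num) hr.le (by positivity) hq_inv.symm
  calc _ ≤ C * ENNReal.ofReal (1 + T) * ((∫⁻ y, k y ^ (2 : ℝ)) ^ (1 / 2 : ℝ)
          * (∫⁻ y, g y ^ (3 : ℝ)) ^ v * (∫⁻ y, g y ^ r) ^ w)
          * (2 ^ j) ^ (1 - 3 / 2 * (1 / q - 1 / r)) := by gcongr; exact holder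
    _ = _ := by
        rw [hq_inv]
        ring_nf

theorem rpow_half_mul_mul_mul (c₁ c₂ x y z : ℝ≥0∞) :
    (c₁ * x * y * (c₂ * x * z)) ^ (1 / 2 : ℝ)
      = (c₁ * c₂) ^ (1 / 2 : ℝ) * x * (y * z) ^ (1 / 2 : ℝ) := by
  rw [show c₁ * x * y * (c₂ * x * z) = c₁ * c₂ * (x * x) * (y * z) by ring,
    ENNReal.mul_rpow_of_nonneg _ _ one_half_pos.le, ENNReal.mul_rpow_of_nonneg _ _ one_half_pos.le,
    mul_self_rpow_half]

theorem rpow_half_rpow_mul_rpow {v v' w w' : ℝ} (hv : 0 ≤ v) (hv' : 0 ≤ v') (hw : 0 ≤ w)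
    (hw' : 0 ≤ w') (x y : ℝ≥0∞) :
    (x ^ v * y ^ w * (x ^ v' * y ^ w')) ^ (1 / 2 : ℝ)
      = x ^ ((v + v') / 2) * y ^ ((w + w') / 2) := by
  rw [mul_mul_mul_comm, ← ENNReal.rpow_add_of_nonneg _ _ hv hv',
    ← ENNReal.rpow_add_of_nonneg _ _ hw hw', ENNReal.mul_rpow_of_nonneg _ _ one_half_pos.le,
    ← ENNReal.rpow_mul, ← ENNReal.rpow_mul, mul_one_div, mul_one_div]

theorem two_mul_inv_one_sub_rpow_neg_ne_top {a : ℝ} (ha : 0 < a) :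
    (2 * (1 - 2 ^ (-a))⁻¹ : ℝ≥0∞) ≠ ∞ :=
  ENNReal.mul_ne_top ENNReal.ofNat_ne_top <| ENNReal.inv_ne_top.2 <| tsub_pos_iff_lt.2
    (ENNReal.rpow_lt_one_of_one_lt_of_neg ENNReal.one_lt_two (neg_lt_zero.2 ha)) |>.ne'

theorem exists_setLIntegral_conePotential_mul_le {r : ℝ} (hr : 6 < r) :
    ∃ C : ℝ≥0, ∀ {T : ℝ} {k g : ℝ² → ℝ≥0∞}, 0 < T → Measurable k → Measurable g →
      ∫⁻ τ in Ioo 0 T, (∫⁻ x, conePotential (fun y => k y * g y) τ x ^ r) ^ (1 / r)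
        ≤ C * (ENNReal.ofReal (1 + T) * (∫⁻ y, k y ^ (2 : ℝ)) ^ (1 / 2 : ℝ))
          * ((∫⁻ y, g y ^ (3 : ℝ)) ^ (r / (6 * (r - 3)))
            * (∫⁻ y, g y ^ r) ^ ((r - 6) / (2 * r * (r - 3)))) := by
  have hr0 : 0 < r := by linarith
  have hr3 : 0 < r - 3 := by linarith
  have : 0 < r - 6 := by linarith
  have r_inv_lt : 1 / r < 1 / 6 := by gcongr
  have r_inv_pos : 0 < 1 / r := by positivity
  obtain ⟨C₁, decay⟩ := exists_setLIntegral_annularMean_mul_zpow_le (v := 1 / 3) (w := 0) hr0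
    (by norm_num) le_rfl (by norm_num) (by linarith) (by linarith)
  have weights_sum : 1 / (r - 3) + (r - 6) / (r * (r - 3)) = 2 * (1 / r) := by
    field_simp
    ring
  obtain ⟨C₂, growth⟩ := exists_setLIntegral_annularMean_mul_zpow_le (v := 1 / (r - 3))
    (w := (r - 6) / (r * (r - 3))) hr0 (by positivity) (by positivity) (by field_simp; ring)
    (by linarith) (by linarith)
  set a := (r - 6) / (4 * r)
  have ha : 0 < a := by positivity
  have decay_exponent : 1 / 4 - 3 / 2 * (1 / 3 + 0 - 1 / r) = -a := by
    simp only [a]; field_simp; ring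
  have growth_exponent :
      1 / 4 - 3 / 2 * (1 / (r - 3) + (r - 6) / (r * (r - 3)) - 1 / r) = a := by
    rw [weights_sum]; simp only [a]; field_simp; ring
  rw [decay_exponent] at decay
  rw [growth_exponent] at growth
  have three_exponent : (1 / 3 + 1 / (r - 3)) / 2 = r / (6 * (r - 3)) := by
    field_simp; ring
  have r_exponent : (0 + (r - 6) / (r * (r - 3))) / 2 = (r - 6) / (2 * r * (r - 3)) := by
    field_simp; ring
  have const_ne_top := two_mul_inv_one_sub_rpow_neg_ne_top ha
  refine ⟨(2 * (1 - 2 ^ (-a))⁻¹ : ℝ≥0∞).toNNReal * (C₁ * C₂) ^ (1 / 2 : ℝ),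
    fun {T k g} hT hk hg => ?_⟩
  calc _ ≤ _ := setLIntegral_conePotential_le_tsum (by linarith) T (hk.mul hg)
    _ ≤ _ := tsum_le_of_le_zpow_rpow ha (decay hT hk hg) (growth hT hk hg)
    _ = _ := by
        rw [rpow_half_mul_mul_mul, rpow_half_rpow_mul_rpow (by norm_num) (by positivity) le_rfl
          (by positivity), three_exponent, r_exponent, ENNReal.coe_mul,
          ENNReal.coe_toNNReal const_ne_top, ENNReal.coe_rpow_of_nonneg _ one_half_pos.le,
          ENNReal.coe_mul]
        simp only [mul_assoc]

section MomentumIntegral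

theorem rpow_add_one_le_of_forall_le_add {b : ℝ} (hb : 0 ≤ b) {x m : ℝ≥0∞} {A : ℝ≥0}
    (h : ∀ R : ℝ, 0 < R → x ≤ A * ENNReal.ofReal R + ENNReal.ofReal R ^ (-b) * m) :
    x ^ (b + 1) ≤ (A + 1) ^ (b + 1) * m := by
  have hb1 : 0 < b + 1 := by linarith
  rcases eq_or_ne m 0 with rfl | hm0
  · have hx : x ≤ 0 := by
      refine ENNReal.le_of_forall_pos_le_add fun ε hε _ => ?_
      calc x ≤ A * ENNReal.ofReal (ε / (A + 1)) := by simpa using h (ε / (A + 1)) (by positivity)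
        _ = ENNReal.ofReal (A * (ε / (A + 1))) := by
            rw [ENNReal.ofReal_mul A.coe_nonneg, ENNReal.ofReal_coe_nnreal]
        _ ≤ 0 + ENNReal.ofReal ε := by
            rw [zero_add]
            gcongr
            rw [mul_div_left_comm]
            exact mul_le_of_le_one_right ε.coe_nonneg (div_le_one_of_le₀ (by simp) (by positivity))
        _ = 0 + ε := by rw [ENNReal.ofReal_coe_nnreal]
    simp [nonpos_iff_eq_zero.1 hx, hb1]
  rcases eq_or_ne m ∞ with rfl | hm
  · simp [ENNReal.mul_top]
  set R := m ^ (1 / (b + 1)) with hR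
  have hR0 : R ≠ 0 := (ENNReal.rpow_pos hm0.bot_lt hm).ne'
  have hRtop : R ≠ ∞ := by finiteness
  have hRpow : R ^ (b + 1) = m := by rw [hR, one_div, ENNReal.rpow_inv_rpow hb1.ne']
  have balanced : R ^ (-b) * m = R := by
    rw [← hRpow, ← ENNReal.rpow_add _ _ hR0 hRtop, neg_add_cancel_left, ENNReal.rpow_one]
  have hx : x ≤ (A + 1) * R := by
    simpa [ENNReal.ofReal_toReal hRtop, balanced, add_mul] using h R.toReal
      (ENNReal.toReal_pos hR0 hRtop)
  calc x ^ (b + 1) ≤ ((A + 1) * R) ^ (b + 1) := by gcongr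
    _ = (A + 1) ^ (b + 1) * m := by rw [ENNReal.mul_rpow_of_nonneg _ _ hb1.le, hRpow]

theorem setLIntegral_ball_inv_norm {R : ℝ} (hR : 0 ≤ R) :
    ∫⁻ p in Metric.ball (0 : ℝ²) R, ENNReal.ofReal ‖p‖⁻¹ = 2 * NNReal.pi * ENNReal.ofReal R := by
  have radial : EqOn (fun y : ℝ => y ^ (Module.finrank ℝ ℝ² - 1) • y⁻¹) 1 (Ioi 0) := by
    intro y hy
    simp [mul_inv_cancel₀ (mem_Ioi.1 hy).ne']
  have integrable : IntegrableOn (fun p : ℝ² => ‖p‖⁻¹) (Metric.ball 0 R) := by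
    rw [integrableOn_fun_norm_addHaar volume (f := fun y => y⁻¹),
      integrableOn_congr_fun (radial.mono Ioo_subset_Ioi_self) measurableSet_Ioo]
    exact integrableOn_const (by simp) (by simp)
  have indicator_ball : (Metric.ball (0 : ℝ²) R).indicator (fun p => ‖p‖⁻¹)
      = fun p => (Iio R).indicator (fun y : ℝ => y⁻¹) ‖p‖ := by
    ext p
    simp [indicator]
  have radial_integral : ∫ y in Ioi (0 : ℝ),
      y ^ (Module.finrank ℝ ℝ² - 1) • (Iio R).indicator (fun y : ℝ => y⁻¹) y = R := by
    have : EqOn (fun y : ℝ => y ^ (Module.finrank ℝ ℝ² - 1) • (Iio R).indicator (fun y => y⁻¹) y)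
        ((Iio R).indicator 1) (Ioi 0) := fun y hy => by
      by_cases hyR : y < R
      · simpa [hyR] using radial hy
      · simp [hyR]
    rw [setIntegral_congr_fun measurableSet_Ioi this, setIntegral_indicator measurableSet_Iio,
      Ioi_inter_Iio]
    simp [hR]
  rw [← ofReal_integral_eq_lintegral_ofReal integrable (ae_of_all _ fun p => by positivity),
    ← integral_indicator measurableSet_ball, indicator_ball, integral_fun_norm_addHaar volume,
    radial_integral]
  have ofReal_pi : ENNReal.ofReal Real.pi = NNReal.pi :=
    ENNReal.ofReal_coe_nnreal (p := NNReal.pi)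
  simp [Measure.real, Real.pi_nonneg, ENNReal.ofReal_mul, mul_assoc, ofReal_pi]

theorem measurable_pZero : Measurable pZero := by
  unfold pZero
  fun_prop

theorem pZero_pos (p : ℝ²) : 0 < pZero p := Real.sqrt_pos.2 (by positivity)

theorem norm_le_pZero (p : ℝ²) : ‖p‖ ≤ pZero p := Real.le_sqrt_of_sq_le (by linarith)

variable {φ : ℝ² → ℝ≥0∞} {C₀ : ℝ≥0}

theorem setLIntegral_inv_pZero_le {R : ℝ} (hR : 0 ≤ R) :
    ∫⁻ p in {p : ℝ² | pZero p < R}, (ENNReal.ofReal (pZero p))⁻¹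
      ≤ 2 * NNReal.pi * ENNReal.ofReal R := by
  have : {p : ℝ² | pZero p < R} ⊆ Metric.ball 0 R := fun p hp =>
    mem_ball_zero_iff.2 ((norm_le_pZero p).trans_lt hp)
  calc _ ≤ ∫⁻ p in Metric.ball (0 : ℝ²) R, (ENNReal.ofReal (pZero p))⁻¹ := lintegral_mono_set this
    _ ≤ ∫⁻ p in Metric.ball (0 : ℝ²) R, ENNReal.ofReal ‖p‖⁻¹ := by
        refine lintegral_mono_ae ?_
        filter_upwards [ae_restrict_of_ae (Measure.ae_ne volume (0 : ℝ²))] with p hp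
        rw [ENNReal.ofReal_inv_of_pos (norm_pos_iff.2 hp)]
        gcongr
        exact norm_le_pZero p
    _ = _ := setLIntegral_ball_inv_norm hR

theorem lintegral_div_pZero_le (hφ : ∀ᵐ p, φ p ≤ C₀) {a R : ℝ} (ha : -1 ≤ a) (hR : 0 < R) :
    ∫⁻ p, φ p / ENNReal.ofReal (pZero p)
      ≤ C₀ * (2 * NNReal.pi * ENNReal.ofReal R)
        + ENNReal.ofReal R ^ (-(a + 1)) * ∫⁻ p, φ p * ENNReal.ofReal (pZero p) ^ a := by
  rw [← lintegral_add_compl _ (measurableSet_lt measurable_pZero measurable_const :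
    MeasurableSet {p | pZero p < R})]
  gcongr
  · calc _ ≤ ∫⁻ p in {p : ℝ² | pZero p < R}, C₀ * (ENNReal.ofReal (pZero p))⁻¹ := by
          refine lintegral_mono_ae ?_
          filter_upwards [ae_restrict_of_ae hφ] with p hp
          rw [ENNReal.div_eq_inv_mul, mul_comm]
          gcongr
      _ ≤ _ := by
          rw [lintegral_const_mul' _ _ ENNReal.coe_ne_top]
          gcongr
          exact setLIntegral_inv_pZero_le hR.le
  · rw [← lintegral_const_mul' _ _ (by finiteness)]
    refine (setLIntegral_mono' ?_ fun p hp => ?_).trans (setLIntegral_le_lintegral _ _)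
    · exact (measurableSet_lt measurable_pZero measurable_const).compl
    have hw : ENNReal.ofReal (pZero p) ≠ 0 := ENNReal.ofReal_ne_zero_iff.2 (pZero_pos p)
    have le_weight : ENNReal.ofReal R ≤ ENNReal.ofReal (pZero p) :=
      ENNReal.ofReal_le_ofReal (not_lt.1 hp)
    calc φ p / ENNReal.ofReal (pZero p)
        = ENNReal.ofReal (pZero p) ^ (-(a + 1)) * (φ p * ENNReal.ofReal (pZero p) ^ a) := by
          rw [mul_left_comm, ← ENNReal.rpow_add _ _ hw ENNReal.ofReal_ne_top, neg_add_rev,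
            neg_add_cancel_right, ENNReal.rpow_neg_one, div_eq_mul_inv]
      _ ≤ _ := by
          rw [ENNReal.rpow_neg, ENNReal.rpow_neg]
          gcongr
          linarith

theorem rpow_lintegral_div_pZero_le (hφ : ∀ᵐ p, φ p ≤ C₀) {a : ℝ} (ha : -1 ≤ a) :
    (∫⁻ p, φ p / ENNReal.ofReal (pZero p)) ^ (a + 2)
      ≤ (C₀ * (2 * NNReal.pi) + 1) ^ (a + 2) * ∫⁻ p, φ p * ENNReal.ofReal (pZero p) ^ a := by
  rw [show a + 2 = a + 1 + 1 by ring]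
  refine rpow_add_one_le_of_forall_le_add (A := C₀ * (2 * NNReal.pi)) (by linarith)
    fun R hR => (lintegral_div_pZero_le hφ ha hR).trans_eq ?_
  push_cast
  ring

end MomentumIntegral

section Duhamel

theorem setLIntegral_setLIntegral_sub_le {G : ℝ → ℝ → ℝ≥0∞} (hG : Measurable (Function.uncurry G))
    (T : ℝ) :
    ∫⁻ t in Ico 0 T, ∫⁻ s in Ioc 0 t, G s (t - s)
      ≤ ∫⁻ s in Ioo 0 T, ∫⁻ τ in Ioo 0 T, G s τ := by
  have indicator_meas : Measurable fun z : ℝ × ℝ => (Ioo 0 T).indicator (G z.2) (z.1 - z.2) :=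
    (hG.comp (measurable_snd.prodMk (measurable_fst.sub measurable_snd))).indicator
      (measurableSet_Ioo.preimage (measurable_fst.sub measurable_snd))
  calc _ ≤ ∫⁻ t in Ico 0 T, ∫⁻ s in Ioo 0 T, (Ioo 0 T).indicator (G s) (t - s) := by
        refine setLIntegral_mono' measurableSet_Ico fun t ht => ?_
        rw [setLIntegral_congr Ioo_ae_eq_Ioc.symm]
        refine (setLIntegral_mono' measurableSet_Ioo fun s hs => ?_).trans
          (lintegral_mono_set (Ioo_subset_Ioo_right ht.2.le))
        rw [indicator_of_mem (show t - s ∈ Ioo 0 T from ⟨sub_pos.2 hs.2, by linarith [hs.1, ht.2]⟩)]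
    _ ≤ ∫⁻ t, ∫⁻ s in Ioo 0 T, (Ioo 0 T).indicator (G s) (t - s) := setLIntegral_le_lintegral _ _
    _ = ∫⁻ s in Ioo 0 T, ∫⁻ t, (Ioo 0 T).indicator (G s) (t - s) :=
        lintegral_lintegral_swap indicator_meas.aemeasurable
    _ = _ := by
        simp only [lintegral_sub_right_eq_self, lintegral_indicator measurableSet_Ioo]

theorem setLIntegral_rpow_lintegral_duhamel_le {α : Type*} [MeasurableSpace α] {μ : Measure α}
    [SigmaFinite μ] {Φ : ℝ → ℝ → α → ℝ≥0∞}
    (hΦ : Measurable fun z : ℝ × ℝ × α => Φ z.1 z.2.1 z.2.2) {r : ℝ} (hr : 1 < r) (T : ℝ) :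
    ∫⁻ t in Ico 0 T, (∫⁻ x, (∫⁻ s in Ioc 0 t, Φ s (t - s) x) ^ r ∂μ) ^ (1 / r)
      ≤ ∫⁻ s in Ioo 0 T, ∫⁻ τ in Ioo 0 T, (∫⁻ x, Φ s τ x ^ r ∂μ) ^ (1 / r) := by
  have norm_meas : Measurable (Function.uncurry fun s τ => (∫⁻ x, Φ s τ x ^ r ∂μ) ^ (1 / r)) := by
    have : Measurable fun z : (ℝ × ℝ) × α => Φ z.1.1 z.1.2 z.2 ^ r :=
      (hΦ.comp (f := fun z : (ℝ × ℝ) × α => (z.1.1, z.1.2, z.2)) (by fun_prop)).pow_const r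
    exact this.lintegral_prod_right'.pow_const _
  refine (lintegral_mono fun t => ?_).trans (setLIntegral_setLIntegral_sub_le norm_meas T)
  exact lintegral_rpow_lintegral_le (w := fun s x => Φ s (t - s) x)
    (hΦ.comp (f := fun z : ℝ × α => (z.1, t - z.1, z.2)) (by fun_prop)) hr

theorem measurable_conePotential {H : ℝ → ℝ² → ℝ≥0∞} (hH : Measurable (Function.uncurry H)) :
    Measurable fun z : ℝ × ℝ × ℝ² => conePotential (H z.1) z.2.1 z.2.2 := by
  have cone_meas : MeasurableSet {w : (ℝ × ℝ × ℝ²) × ℝ² | dist w.2 w.1.2.2 ≤ w.1.2.1} :=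
    measurableSet_le (by fun_prop) (by fun_prop)
  have integrand_meas : Measurable fun w : (ℝ × ℝ × ℝ²) × ℝ² =>
      ENNReal.ofReal (√(w.1.2.1 ^ 2 - dist w.2 w.1.2.2 ^ 2))⁻¹ * H w.1.1 w.2 := by
    have : Measurable fun w : (ℝ × ℝ × ℝ²) × ℝ² => H w.1.1 w.2 :=
      hH.comp (f := fun w : (ℝ × ℝ × ℝ²) × ℝ² => (w.1.1, w.2)) (by fun_prop)
    fun_prop
  convert (integrand_meas.indicator cone_meas).lintegral_prod_right' (ν := volume) using 2 with z
  exact (lintegral_indicator (measurableSet_le (by fun_prop) measurable_const) _).symm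

end Duhamel

section MomentEstimate

theorem measurable_lintegral_div_pZero {α : Type*} [MeasurableSpace α] {φ : α → ℝ² → ℝ≥0∞}
    (hφ : Measurable (Function.uncurry φ)) :
    Measurable fun y => ∫⁻ p, φ y p / ENNReal.ofReal (pZero p) := by
  have := measurable_pZero
  exact Measurable.lintegral_prod_right' (f := fun z : α × ℝ² =>
    φ z.1 z.2 / ENNReal.ofReal (pZero z.2)) (by fun_prop)

theorem lintegral_rpow_lintegral_div_pZero_le {α : Type*} [MeasurableSpace α] {μ : Measure α}
    {φ : α → ℝ² → ℝ≥0∞} {C₀ : ℝ≥0} (hφ : ∀ᵐ y ∂μ, ∀ᵐ p, φ y p ≤ C₀) {a : ℝ} (ha : -1 ≤ a) :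
    ∫⁻ y, (∫⁻ p, φ y p / ENNReal.ofReal (pZero p)) ^ (a + 2) ∂μ
      ≤ (C₀ * (2 * NNReal.pi) + 1) ^ (a + 2)
        * ∫⁻ y, (∫⁻ p, φ y p * ENNReal.ofReal (pZero p) ^ a) ∂μ := by
  have const_ne_top : (C₀ * (2 * NNReal.pi) + 1 : ℝ≥0∞) ^ (a + 2) ≠ ∞ :=
    ENNReal.rpow_ne_top_of_nonneg (by linarith) (by exact_mod_cast ENNReal.coe_ne_top)
  rw [← lintegral_const_mul' _ _ const_ne_top]
  refine lintegral_mono_ae ?_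
  filter_upwards [hφ] with y hy using rpow_lintegral_div_pZero_le hy ha

theorem exists_setLIntegral_conePotential_le_moment {N : ℝ} (hN : 4 < N) (C₀ C₁ C₂ : ℝ≥0) :
    ∃ C : ℝ≥0, ∀ {T : ℝ} {k : ℝ² → ℝ≥0∞} {φ : ℝ² → ℝ² → ℝ≥0∞}, 0 < T → Measurable k →
      Measurable (Function.uncurry φ) → (∀ᵐ y, ∀ᵐ p, φ y p ≤ C₀) →
      ∫⁻ y, ∫⁻ p, φ y p * ENNReal.ofReal (pZero p) ≤ C₁ →
      (∫⁻ y, k y ^ (2 : ℝ)) ^ (1 / 2 : ℝ) ≤ C₂ →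
      ∫⁻ τ in Ioo 0 T, (∫⁻ x, conePotential
          (fun y => k y * ∫⁻ p, φ y p / ENNReal.ofReal (pZero p)) τ x ^ (N + 2)) ^ (1 / (N + 2))
        ≤ C * ENNReal.ofReal (1 + T) * (∫⁻ y, ∫⁻ p, φ y p * ENNReal.ofReal (pZero p) ^ N)
          ^ ((N - 4) / (2 * (N - 1)) / (N + 2)) := by
  have hN1 : 0 < N - 1 := by linarith
  have hN2 : 0 < N + 2 := by linarith
  have : 0 < N - 4 := by linarith
  obtain ⟨C, hC⟩ := exists_setLIntegral_conePotential_mul_le (r := N + 2) (by linarith)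
  set B : ℝ≥0 := C₀ * (2 * NNReal.pi) + 1
  set u := (N + 2) / (6 * (N - 1))
  set v := (N - 4) / (2 * (N - 1)) / (N + 2)
  have hu : 0 ≤ u := by positivity
  have hv : 0 ≤ v := by positivity
  have u_eq : (N + 2) / (6 * (N + 2 - 3)) = u := by
    simp only [u, show N + 2 - 3 = N - 1 by ring]
  have v_eq : (N + 2 - 6) / (2 * (N + 2) * (N + 2 - 3)) = v := by
    simp only [v, show N + 2 - 3 = N - 1 by ring]
    field_simp
    ring
  rw [u_eq, v_eq] at hC
  refine ⟨C * C₂ * (B ^ (3 : ℝ) * C₁) ^ u * (B ^ (N + 2)) ^ v,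
    fun {T k φ} hT hk hφ hbound henergy hfield => ?_⟩
  set g := fun y => ∫⁻ p, φ y p / ENNReal.ofReal (pZero p)
  have cube_le := calc
    ∫⁻ y, g y ^ (3 : ℝ) ≤ B ^ (3 : ℝ)
        * ∫⁻ y, ∫⁻ p, φ y p * ENNReal.ofReal (pZero p) ^ (1 : ℝ) := by
        simpa [B, g, show (1 + 2 : ℝ) = 3 by norm_num] using
          lintegral_rpow_lintegral_div_pZero_le hbound (show (-1 : ℝ) ≤ 1 by norm_num)
    _ ≤ B ^ (3 : ℝ) * C₁ := by
        simp only [ENNReal.rpow_one]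
        gcongr
  have power_le : ∫⁻ y, g y ^ (N + 2) ≤ B ^ (N + 2)
      * ∫⁻ y, ∫⁻ p, φ y p * ENNReal.ofReal (pZero p) ^ N := by
    simpa [B, g] using lintegral_rpow_lintegral_div_pZero_le hbound (show -1 ≤ N by linarith)
  calc _ ≤ C * (ENNReal.ofReal (1 + T) * C₂) * ((B ^ (3 : ℝ) * C₁) ^ u * (B ^ (N + 2)
          * ∫⁻ y, ∫⁻ p, φ y p * ENNReal.ofReal (pZero p) ^ N) ^ v) := by
        refine (hC hT hk (measurable_lintegral_div_pZero hφ)).trans ?_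
        gcongr
    _ = _ := by
        push_cast [ENNReal.coe_rpow_of_nonneg _ hu, ENNReal.coe_rpow_of_nonneg _ hv,
          ENNReal.coe_rpow_of_nonneg _ hN2.le, ENNReal.coe_rpow_of_nonneg _ zero_le_three]
        rw [ENNReal.mul_rpow_of_nonneg _ (∫⁻ y, _) hv]
        ring

theorem exists_setLIntegral_duhamel_conePotential_le {N : ℝ} (hN : 4 < N) (C₀ C₁ C₂ : ℝ≥0) :
    ∃ C : ℝ≥0, ∀ {T : ℝ} {κ : ℝ → ℝ² → ℝ≥0∞} {φ : ℝ → ℝ² → ℝ² → ℝ≥0∞} {M : ℝ≥0∞}, 0 < T →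
      Measurable (Function.uncurry κ) → Measurable (fun z : ℝ × ℝ² × ℝ² => φ z.1 z.2.1 z.2.2) →
      (∀ᵐ z : ℝ × ℝ² × ℝ², φ z.1 z.2.1 z.2.2 ≤ C₀) →
      (∀ s ∈ Ioo 0 T, ∫⁻ y, ∫⁻ p, φ s y p * ENNReal.ofReal (pZero p) ≤ C₁) →
      (∀ s ∈ Ioo 0 T, (∫⁻ y, κ s y ^ (2 : ℝ)) ^ (1 / 2 : ℝ) ≤ C₂) →
      (∀ s ∈ Ioo 0 T, ∫⁻ y, ∫⁻ p, φ s y p * ENNReal.ofReal (pZero p) ^ N ≤ M) →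
      ∫⁻ t in Ico 0 T, (∫⁻ x, (∫⁻ s in Ioc 0 t, conePotential
          (fun y => κ s y * ∫⁻ p, φ s y p / ENNReal.ofReal (pZero p)) (t - s) x) ^ (N + 2))
            ^ (1 / (N + 2))
        ≤ C * ENNReal.ofReal (1 + T) ^ 2 * M ^ ((N - 4) / (2 * (N - 1)) / (N + 2)) := by
  obtain ⟨C, hC⟩ := exists_setLIntegral_conePotential_le_moment hN C₀ C₁ C₂
  refine ⟨C, fun {T κ φ M} hT hκ hφ hbound henergy hfield hmoment => ?_⟩
  set e := (N - 4) / (2 * (N - 1)) / (N + 2)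
  have e_nonneg : 0 ≤ e := div_nonneg (div_nonneg (by linarith) (by linarith)) (by linarith)
  have bound_ae : ∀ᵐ s, s ∈ Ioo 0 T → ∀ᵐ y, ∀ᵐ p, φ s y p ≤ C₀ :=
    (Measure.ae_ae_of_ae_prod hbound).mono fun s hs _ => Measure.ae_ae_of_ae_prod hs
  have source_meas : Measurable (Function.uncurry fun s y =>
      κ s y * ∫⁻ p, φ s y p / ENNReal.ofReal (pZero p)) :=
    hκ.mul (measurable_lintegral_div_pZero (φ := fun (z : ℝ × ℝ²) p => φ z.1 z.2 p)
      (hφ.comp (f := fun w : (ℝ × ℝ²) × ℝ² => (w.1.1, w.1.2, w.2)) (by fun_prop)))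
  calc _ ≤ ∫⁻ s in Ioo 0 T, ∫⁻ τ in Ioo 0 T, (∫⁻ x, conePotential
          (fun y => κ s y * ∫⁻ p, φ s y p / ENNReal.ofReal (pZero p)) τ x ^ (N + 2))
            ^ (1 / (N + 2)) :=
        setLIntegral_rpow_lintegral_duhamel_le (measurable_conePotential source_meas)
          (by linarith) T
    _ ≤ ∫⁻ _ in Ioo 0 T, C * ENNReal.ofReal (1 + T) * M ^ e := by
        refine setLIntegral_mono_ae' measurableSet_Ioo ?_
        filter_upwards [bound_ae] with s hs mem
        have hφs : Measurable (Function.uncurry (φ s)) :=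
          hφ.comp (f := fun w : ℝ² × ℝ² => (s, w)) (by fun_prop)
        refine (hC hT hκ.of_uncurry_left hφs (hs mem) (henergy s mem) (hfield s mem)).trans ?_
        gcongr
        exact hmoment s mem
    _ = C * ENNReal.ofReal (1 + T) * M ^ e * ENNReal.ofReal T := by
        rw [setLIntegral_const, Real.volume_Ioo, sub_zero]
    _ ≤ C * ENNReal.ofReal (1 + T) * M ^ e * ENNReal.ofReal (1 + T) := by
        gcongr
        linarith
    _ = _ := by ring

variable {N : ℝ} {K : ℝ → ℝ² → ℝ} {f : ℝ → ℝ² → ℝ² → ℝ}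

theorem WS1_eq_setLIntegral_conePotential (hK : ∀ s y, 0 ≤ K s y) (t : ℝ) (x : ℝ²) :
    WS1 K f t x = ∫⁻ s in Ioc 0 t, conePotential (fun y => ENNReal.ofReal (K s y)
      * ∫⁻ p, ENNReal.ofReal (f s y p) / ENNReal.ofReal (pZero p)) (t - s) x := by
  unfold WS1 conePotential
  congr! 4 with s y
  rw [← mul_assoc, ← lintegral_const_mul' _ _ (by finiteness)]
  refine lintegral_congr fun p => ?_
  rw [← ENNReal.ofReal_div_of_pos (pZero_pos p), ← ENNReal.ofReal_mul (by positivity),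
    ← ENNReal.ofReal_mul (mul_nonneg (by positivity) (hK s y))]
  congr 1
  ring

theorem momentN_eq_lintegral (hf : ∀ t x p, 0 ≤ f t x p) (t : ℝ) :
    momentN f N t
      = ∫⁻ x, ∫⁻ p, ENNReal.ofReal (f t x p) * ENNReal.ofReal (pZero p) ^ N := by
  simp only [momentN, ENNReal.ofReal_mul (hf t _ _), ENNReal.ofReal_rpow_of_pos (pZero_pos _)]

end MomentEstimate

end VlasovMaxwell

open VlasovMaxwell in
theorem KS1_moment_estimate_general {N : ℝ} (hN : 4 < N) (C₀ C₁ C₂ : ℝ) :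
    ∃ C : ℝ≥0, 0 < C ∧ ∃ k : ℝ, 0 ≤ k ∧ ∀ T : ℝ, 0 < T → ∀ f : ℝ → ℝ² → ℝ² → ℝ,
      Measurable (fun z : ℝ × ℝ² × ℝ² => f z.1 z.2.1 z.2.2) →
      (∀ t x p, 0 ≤ f t x p) →
      (∀ᵐ z : ℝ × ℝ² × ℝ², f z.1 z.2.1 z.2.2 ≤ C₀) →
      (∀ t, 0 ≤ t → t < T →
        ∫⁻ x, ∫⁻ p, ENNReal.ofReal (pZero p * f t x p) ≤ ENNReal.ofReal C₁) →
      ∀ K : ℝ → ℝ² → ℝ, Measurable (Function.uncurry K) → (∀ t x, 0 ≤ K t x) →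
      (∀ t, 0 ≤ t → t < T →
        (∫⁻ x, ENNReal.ofReal (K t x ^ 2)) ^ (1 / 2 : ℝ) ≤ ENNReal.ofReal C₂) →
      (∫⁻ t in Ico 0 T, (∫⁻ x, WS1 K f t x ^ (N + 2)) ^ (1 / (N + 2))) ^ (N + 2)
        ≤ C * ENNReal.ofReal (1 + T) ^ k
          * (⨆ t ∈ Ico 0 T, momentN f N t) ^ ((N - 4) / (2 * (N - 1))) := by
  have hN2 : 0 < N + 2 := by linarith
  obtain ⟨C, hC⟩ := exists_setLIntegral_duhamel_conePotential_le hN C₀.toNNReal C₁.toNNReal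
    C₂.toNNReal
  refine ⟨C ^ (N + 2) + 1, by positivity, 2 * (N + 2), by positivity,
    fun T hT f hf hf0 hbound henergy K hK hK0 hfield => ?_⟩
  calc _ ≤ (C * ENNReal.ofReal (1 + T) ^ 2 * (⨆ t ∈ Ico 0 T, momentN f N t)
          ^ ((N - 4) / (2 * (N - 1)) / (N + 2))) ^ (N + 2) := by
        gcongr
        simp only [WS1_eq_setLIntegral_conePotential hK0]
        refine hC hT hK.ennreal_ofReal hf.ennreal_ofReal
          (hbound.mono fun z hz => ENNReal.ofReal_le_ofReal hz) (fun s hs => ?_) (fun s hs => ?_)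
          fun s hs => ?_
        · simpa only [ENNReal.ofReal_mul (pZero_pos _).le, ENNReal.ofNNReal_toNNReal,
            mul_comm (ENNReal.ofReal (pZero _))] using henergy s hs.1.le hs.2
        · simpa [ENNReal.ofReal_pow (hK0 s _), ENNReal.ofNNReal_toNNReal]
            using hfield s hs.1.le hs.2
        · rw [← momentN_eq_lintegral hf0]
          exact le_iSup₂_of_le s ⟨hs.1.le, hs.2⟩ le_rfl
    _ = C ^ (N + 2) * ENNReal.ofReal (1 + T) ^ (2 * (N + 2))
          * (⨆ t ∈ Ico 0 T, momentN f N t) ^ ((N - 4) / (2 * (N - 1))) := by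
        rw [ENNReal.mul_rpow_of_nonneg _ _ hN2.le, ENNReal.mul_rpow_of_nonneg _ _ hN2.le,
          ← ENNReal.rpow_mul, div_mul_cancel₀ _ hN2.ne', ENNReal.rpow_mul, ENNReal.rpow_ofNat]
    _ ≤ _ := by
        push_cast [ENNReal.coe_rpow_of_nonneg _ hN2.le]
        gcongr
        exact le_self_add

/-- **Moment estimate for `K_{S,1}`** (Proposition 5.6).  Let `N > 13`, `f ≤ C₀` a.e.
with energy `sup_{t<T} ∫∫ p₀ f ≤ C₁`, and let `K ≥ 0` with `sup_{t<T} ‖K(t)‖_{L²_x} ≤ C₂`.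
Then there are constants `C > 0` and `k ≥ 0` depending only on `N, C₀, C₁, C₂` (not on
`T`) with `‖W_{S,1}‖_{L¹_t([0,T);L^{N+2}_x)}^{N+2}
  ≤ C (1+T)^k ‖f p₀^N‖_{L^∞_t([0,T);L¹_xL¹_p)}^{(N−4)/(2(N−1))}`. -/
theorem KS1_moment_estimate (N C₀ C₁ C₂ : ℝ) (hN : 13 < N) (hC₀ : 0 < C₀)
    (hC₁ : 0 < C₁) (hC₂ : 0 < C₂) :
    ∃ C : ℝ≥0, 0 < C ∧ ∃ k : ℝ, 0 ≤ k ∧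
      ∀ (T : ℝ), 0 < T →
      ∀ (f : ℝ → EuclideanSpace ℝ (Fin 2) → EuclideanSpace ℝ (Fin 2) → ℝ),
        Measurable (fun z : ℝ × EuclideanSpace ℝ (Fin 2) × EuclideanSpace ℝ (Fin 2) =>
          f z.1 z.2.1 z.2.2) →
        (∀ t x p, 0 ≤ f t x p) →
        (∀ᵐ z : ℝ × EuclideanSpace ℝ (Fin 2) × EuclideanSpace ℝ (Fin 2),
          f z.1 z.2.1 z.2.2 ≤ C₀) →
        (∀ t, 0 ≤ t → t < T →
          (∫⁻ x, ∫⁻ p, ENNReal.ofReal (pZero p * f t x p)) ≤ ENNReal.ofReal C₁) →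
      ∀ (K : ℝ → EuclideanSpace ℝ (Fin 2) → ℝ),
        Measurable (Function.uncurry K) → (∀ t x, 0 ≤ K t x) →
        (∀ t, 0 ≤ t → t < T →
          (∫⁻ x, ENNReal.ofReal (K t x ^ 2)) ^ ((1 : ℝ) / 2) ≤ ENNReal.ofReal C₂) →
        (∫⁻ t in Ico (0 : ℝ) T,
            (∫⁻ x, WS1 K f t x ^ (N + 2)) ^ (1 / (N + 2))) ^ (N + 2)
          ≤ C * ENNReal.ofReal (1 + T) ^ k
            * (⨆ t ∈ Ico (0 : ℝ) T, momentN f N t) ^ ((N - 4) / (2 * (N - 1))) :=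
  KS1_moment_estimate_general (by linarith) C₀ C₁ C₂
end

section
/- Let δ > 0 and C₀ > 0, and let f : ℝ³ → [0,∞) be measurable such that sup_{(p₁,p₂) ∈ ℝ²} ∫_ℝ f(p₁,p₂,p₃) ⟨p₃⟩^{5+δ} dp₃ ≤ C₀. Let ξ ∈ ℝ² with |ξ| ≤ 1. Then there is a constant C, depending only on C₀ and δ, such that: (i) if |ξ| < 1, then ∫_{ℝ³} f(p) ⟨p₃⟩³ / ( p_0 (1 + p̂·ξ) ) dp ≤ C (1 − |ξ|²)^{−2/5} ( ∫_{ℝ³} p_0² f(p) dp )^{2/5}; and (ii) ∫_{ℝ³} f(p) ⟨p₃⟩³ / ( p_0 (1 + p̂·ξ) ) dp ≤ C ( ∫_{ℝ³} p_0⁴ f(p) dp )^{2/5}. -/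
open MeasureTheory
open scoped NNReal ENNReal

/-- `p₀ = √(1 + |p|²)` for `p ∈ ℝ³`. -/
noncomputable def pZero3 (p : EuclideanSpace ℝ (Fin 3)) : ℝ := Real.sqrt (1 + ‖p‖ ^ 2)

/-- The vector `(p₁, p₂, p₃) ∈ ℝ³`. -/
noncomputable def vec3 (p₁ p₂ p₃ : ℝ) : EuclideanSpace ℝ (Fin 3) :=
  (EuclideanSpace.equiv (Fin 3) ℝ).symm ![p₁, p₂, p₃]

/-!
Write `P = p₀`, `a = ⟨p₃⟩`, and let `x`, `y` be the components of `(p₁, p₂)` along and across `ξ`,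
so that `P² = a² + x² + y²` and `p̂ · ξ = |ξ| x / P`. Since `(u + v)² ≥ 0`, one has
`1 + u v ≥ (1 - u²) / 2` whenever `|v| ≤ 1`. Taking `u = x / P` gives
`1 + p̂ · ξ ≥ (a² + y²) / (2 P²)`, and taking `u = |ξ|` gives `1 + p̂ · ξ ≥ (1 - |ξ|²) / 2`.

By these lower bounds, both estimates follow from
`∫ f a³ / (P (1 + p̂ · ξ)) ≤ C (∫ f P² / (1 + p̂ · ξ))^{2/5}`.
To prove it, split at `P = R a`. Where `P ≥ R a`, replace `a³` by `(P / R)³`. Where `P < R a`, the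
first lower bound leaves `2 R a⁴ / (1 + y²)`, and `|x| < R a` lets the surplus `a^{1+δ}` pay for the
decay `(1 + (x / R)²)^{-(1+δ)/2}`, whose integral in `x` is of order `R`. This gives a bound
`C R² + R⁻³ ∫ f P² / (1 + p̂ · ξ)`, which is optimised over `R`.
-/

section General

open Filter Topology

lemma exists_norm_eq_one_and_eq_norm_smul {E : Type*} [NormedAddCommGroup E] [NormedSpace ℝ E]
    [Nontrivial E] (v : E) : ∃ e : E, ‖e‖ = 1 ∧ v = ‖v‖ • e := by
  rcases eq_or_ne v 0 with rfl | hv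
  · obtain ⟨e, he⟩ := exists_norm_eq E zero_le_one
    exact ⟨e, he, by simp⟩
  · exact ⟨‖v‖⁻¹ • v, norm_smul_inv_norm hv, by simp [hv]⟩

lemma one_sub_sq_div_two_le_one_add_mul {u v : ℝ} (hv : |v| ≤ 1) :
    (1 - u ^ 2) / 2 ≤ 1 + u * v := by
  nlinarith [sq_nonneg (u + v), (sq_le_one_iff_abs_le_one v).2 hv]

lemma one_add_sq_rpow_le {r a t : ℝ} (hr : 0 ≤ r) (ha : 1 ≤ a) (ht : |t| ≤ a) :
    (1 + t ^ 2) ^ (r / 2) ≤ 2 ^ (r / 2) * a ^ r := by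
  have ha0 : 0 ≤ a := zero_le_one.trans ha
  have hsq : 1 + t ^ 2 ≤ 2 * a ^ 2 := by nlinarith [sq_le_sq' (abs_le.1 ht).1 (abs_le.1 ht).2]
  calc (1 + t ^ 2) ^ (r / 2) ≤ (2 * a ^ 2) ^ (r / 2) := by gcongr
    _ = 2 ^ (r / 2) * a ^ r := by
        rw [Real.mul_rpow (by positivity) (by positivity), ← Real.rpow_natCast_mul ha0]
        congr 2
        push_cast
        ring

lemma le_mul_rpow_of_forall_le_add {a b : ℝ} (ha : 0 < a) (hb : 0 ≤ b) {A N X : ℝ≥0∞} (hA : A ≠ ∞)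
    (h : ∀ R : ℝ, 0 < R → X ≤ A * ENNReal.ofReal (R ^ a) + ENNReal.ofReal (R ^ (-b)) * N) :
    X ≤ (A + 1) * N ^ (a / (a + b)) := by
  have hab : 0 < a + b := by linarith
  rcases eq_or_ne N 0 with rfl | hN0
  · have htendsto : Tendsto (fun R : ℝ => A * ENNReal.ofReal (R ^ a)) (𝓝[>] 0) (𝓝 0) := by
      have hcont : Continuous fun R : ℝ => A * ENNReal.ofReal (R ^ a) :=
        (ENNReal.continuous_const_mul hA).comp
          (ENNReal.continuous_ofReal.comp (Real.continuous_rpow_const ha.le))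
      simpa [Real.zero_rpow ha.ne'] using (hcont.tendsto 0).mono_left nhdsWithin_le_nhds
    have hX : X ≤ 0 := ge_of_tendsto htendsto <| by
      filter_upwards [self_mem_nhdsWithin] with R hR
      simpa using h R hR
    exact hX.trans zero_le
  rcases eq_or_ne N ∞ with rfl | hNtop
  · rw [ENNReal.top_rpow_of_pos (div_pos ha hab), ENNReal.mul_top (by simp)]
    exact le_top
  have hN : 0 < N.toReal := ENNReal.toReal_pos hN0 hNtop
  have hpow (c : ℝ) :
      ENNReal.ofReal ((N.toReal ^ (1 / (a + b))) ^ c) = N ^ (c / (a + b)) := by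
    rw [← Real.rpow_mul hN.le, ← ENNReal.ofReal_rpow_of_pos hN, ENNReal.ofReal_toReal hNtop,
      one_div_mul_eq_div]
  have hsplit : N ^ (-b / (a + b)) * N = N ^ (a / (a + b)) := by
    conv_lhs => rw [← ENNReal.rpow_one N, ← ENNReal.rpow_mul, ← ENNReal.rpow_add _ _ hN0 hNtop]
    congr 1
    field_simp
    ring
  calc X ≤ A * N ^ (a / (a + b)) + N ^ (-b / (a + b)) * N := by
        simpa only [hpow] using h (N.toReal ^ (1 / (a + b))) (by positivity)
    _ = (A + 1) * N ^ (a / (a + b)) := by rw [hsplit, add_mul, one_mul]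

end General

section PlaneRotation

/-- The coordinates `(q · e, q · e^⊥)` of `q ∈ ℝ²` relative to the direction `e` and its
counterclockwise normal `e^⊥ = (-e₂, e₁)`. -/
def rotatedCoords (e : EuclideanSpace ℝ (Fin 2)) (q : ℝ × ℝ) : ℝ × ℝ :=
  (q.1 * e 0 + q.2 * e 1, q.2 * e 0 - q.1 * e 1)

lemma sq_add_sq_eq_one_of_norm_eq_one {e : EuclideanSpace ℝ (Fin 2)} (he : ‖e‖ = 1) :
    e 0 ^ 2 + e 1 ^ 2 = 1 := by
  simpa [he] using (EuclideanSpace.real_norm_sq_eq e).symm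

lemma rotatedCoords_sq_add_sq {e : EuclideanSpace ℝ (Fin 2)} (he : ‖e‖ = 1) (q : ℝ × ℝ) :
    (rotatedCoords e q).1 ^ 2 + (rotatedCoords e q).2 ^ 2 = q.1 ^ 2 + q.2 ^ 2 := by
  simp only [rotatedCoords]
  linear_combination (q.1 ^ 2 + q.2 ^ 2) * sq_add_sq_eq_one_of_norm_eq_one he

lemma measurePreserving_rotatedCoords {e : EuclideanSpace ℝ (Fin 2)} (he : ‖e‖ = 1) :
    MeasurePreserving (rotatedCoords e) := by
  let L : ℝ × ℝ →ₗ[ℝ] ℝ × ℝ :=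
    Matrix.toLin (.finTwoProd ℝ) (.finTwoProd ℝ) !![e 0, e 1; -e 1, e 0]
  have hL : ⇑L = rotatedCoords e := by
    ext q <;> simp [L, rotatedCoords, Matrix.toLin_finTwoProd_apply] <;> ring
  have hdet : LinearMap.det L = 1 := by
    rw [LinearMap.det_toLin, Matrix.det_fin_two_of]
    linear_combination sq_add_sq_eq_one_of_norm_eq_one he
  refine ⟨by unfold rotatedCoords; fun_prop, ?_⟩
  rw [← hL, Measure.map_linearMap_addHaar_eq_smul_addHaar _ (by simp [hdet]), hdet]
  simp

end PlaneRotation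

section SlabProfile

/-- The profile on `ℝ²` concentrated on the slab `|q₁| ≲ R`, `|q₂| ≲ 1`, which dominates the
singular weight on the set `p₀ < R⟨p₃⟩`. -/
noncomputable def slabProfile (r R : ℝ) (q : ℝ × ℝ) : ℝ :=
  (1 + (q.1 / R) ^ 2) ^ (-r / 2) * (1 + q.2 ^ 2)⁻¹

/-- The constant for which `2 ^ (1 + r / 2) * R * slabProfile r R`, the majorant of the singular
weight up to a power of `⟨p₃⟩`, has integral `slabConstant r * R ^ 2`. -/
noncomputable def slabConstant (r : ℝ) : ℝ≥0 :=
  Real.toNNReal (2 ^ (1 + r / 2) * (∫ t : ℝ, (1 + t ^ 2) ^ (-r / 2)) * Real.pi)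

@[fun_prop]
lemma measurable_slabProfile (r R : ℝ) : Measurable (slabProfile r R) := by
  unfold slabProfile; fun_prop

lemma lintegral_one_add_div_sq_rpow {r R : ℝ} (hr : 1 < r) (hR : 0 < R) :
    ∫⁻ t : ℝ, ENNReal.ofReal ((1 + (t / R) ^ 2) ^ (-r / 2))
      = ENNReal.ofReal (R * ∫ t : ℝ, (1 + t ^ 2) ^ (-r / 2)) := by
  have hint : Integrable fun t : ℝ => (1 + t ^ 2) ^ (-r / 2) := by
    simpa using integrable_rpow_neg_one_add_norm_sq (E := ℝ) (μ := volume) (r := r) (by simpa)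
  rw [← ofReal_integral_eq_lintegral_ofReal (hint.comp_div hR.ne')
      (.of_forall fun t => by positivity),
    Measure.integral_comp_div (fun t : ℝ => (1 + t ^ 2) ^ (-r / 2)) R, abs_of_pos hR, smul_eq_mul]

lemma lintegral_inv_one_add_sq :
    ∫⁻ t : ℝ, ENNReal.ofReal (1 + t ^ 2)⁻¹ = ENNReal.ofReal Real.pi := by
  rw [← ofReal_integral_eq_lintegral_ofReal integrable_inv_one_add_sq
    (.of_forall fun t => by positivity), integral_univ_inv_one_add_sq]

lemma lintegral_slabProfile {r R : ℝ} (hr : 1 < r) (hR : 0 < R) :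
    ∫⁻ q, ENNReal.ofReal (slabProfile r R q)
      = ENNReal.ofReal (R * (∫ t : ℝ, (1 + t ^ 2) ^ (-r / 2)) * Real.pi) := by
  have hfactor (q : ℝ × ℝ) : ENNReal.ofReal (slabProfile r R q) =
      ENNReal.ofReal ((1 + (q.1 / R) ^ 2) ^ (-r / 2)) * ENNReal.ofReal (1 + q.2 ^ 2)⁻¹ :=
    ENNReal.ofReal_mul (by positivity)
  simp only [hfactor]
  rw [Measure.volume_eq_prod,
    lintegral_prod_mul (f := fun t => ENNReal.ofReal ((1 + (t / R) ^ 2) ^ (-r / 2)))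
      (g := fun t => ENNReal.ofReal (1 + t ^ 2)⁻¹) (by fun_prop) (by fun_prop),
    lintegral_one_add_div_sq_rpow hr hR, lintegral_inv_one_add_sq,
    ← ENNReal.ofReal_mul (by positivity)]

lemma lintegral_slabProfile_rotatedCoords {r R : ℝ} (hr : 1 < r) (hR : 0 < R)
    {e : EuclideanSpace ℝ (Fin 2)} (he : ‖e‖ = 1) :
    ∫⁻ q, ENNReal.ofReal (2 ^ (1 + r / 2) * R * slabProfile r R (rotatedCoords e q))
      = slabConstant r * ENNReal.ofReal (R ^ 2) := by
  rw [(measurePreserving_rotatedCoords he).lintegral_comp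
    (f := fun q => ENNReal.ofReal (2 ^ (1 + r / 2) * R * slabProfile r R q)) (by fun_prop)]
  simp only [ENNReal.ofReal_mul (show 0 ≤ (2 : ℝ) ^ (1 + r / 2) * R by positivity)]
  rw [lintegral_const_mul _ (by fun_prop), lintegral_slabProfile hr hR,
    ← ENNReal.ofReal_mul (by positivity), slabConstant, ← ENNReal.ofReal,
    ← ENNReal.ofReal_mul (by positivity)]
  congr 1
  ring

end SlabProfile

section Slicing

lemma measurePreserving_vec3 :
    MeasurePreserving fun z : (ℝ × ℝ) × ℝ => vec3 z.1.1 z.1.2 z.2 := by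
  have hcomp := (PiLp.volume_preserving_toLp (Fin 3)).comp <|
    (volume_preserving_piFinSuccAbove (fun _ : Fin 3 => ℝ) 2).symm.comp <|
    ((MeasurePreserving.id (volume : Measure ℝ)).prod
      (volume_preserving_finTwoArrow ℝ).symm).comp
    (Measure.measurePreserving_swap (μ := (volume : Measure (ℝ × ℝ))) (ν := (volume : Measure ℝ)))
  convert! hcomp using 1
  ext z i
  fin_cases i <;> rfl

lemma lintegral_mul_comp_le_of_slice_le {G : EuclideanSpace ℝ (Fin 3) → ℝ≥0∞} (hG : Measurable G)
    {J : ℝ × ℝ → ℝ≥0∞} (hJ : Measurable J) {M : ℝ≥0∞}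
    (hslice : ∀ p₁ p₂ : ℝ, ∫⁻ p₃ : ℝ, G (vec3 p₁ p₂ p₃) ≤ M) :
    ∫⁻ p, G p * J (p 0, p 1) ≤ M * ∫⁻ q, J q := by
  have hvec : Measurable fun z : (ℝ × ℝ) × ℝ => vec3 z.1.1 z.1.2 z.2 :=
    measurePreserving_vec3.measurable
  calc ∫⁻ p, G p * J (p 0, p 1)
      = ∫⁻ z : (ℝ × ℝ) × ℝ, G (vec3 z.1.1 z.1.2 z.2) * J z.1 :=
        (measurePreserving_vec3.lintegral_comp (by fun_prop)).symm
    _ = ∫⁻ q : ℝ × ℝ, ∫⁻ p₃ : ℝ, G (vec3 q.1 q.2 p₃) * J q := by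
        rw [Measure.volume_eq_prod, lintegral_prod _ (by fun_prop)]
    _ = ∫⁻ q : ℝ × ℝ, (∫⁻ p₃ : ℝ, G (vec3 q.1 q.2 p₃)) * J q :=
        lintegral_congr fun q => lintegral_mul_const _ (hG.comp (hvec.comp measurable_prodMk_left))
    _ ≤ ∫⁻ q, M * J q := by gcongr with q; exact hslice q.1 q.2
    _ = M * ∫⁻ q, J q := lintegral_const_mul _ hJ

end Slicing

section SingularWeight

/-- The Japanese bracket `⟨a⟩`. -/
noncomputable def japaneseBracket (a : ℝ) : ℝ := √(1 + a ^ 2)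

/-- `p̂ · ξ`, the component along `ξ ∈ ℝ²` of the relativistic velocity `p̂ = p / p₀`. -/
noncomputable def velocityDot (p : EuclideanSpace ℝ (Fin 3)) (ξ : EuclideanSpace ℝ (Fin 2)) : ℝ :=
  (p 0 * ξ 0 + p 1 * ξ 1) / pZero3 p

/-- The weight `⟨p₃⟩³ / (p₀ (1 + p̂ · ξ))` against which `f` is integrated. -/
noncomputable def singularWeight (ξ : EuclideanSpace ℝ (Fin 2)) (p : EuclideanSpace ℝ (Fin 3)) :
    ℝ :=
  japaneseBracket (p 2) ^ 3 / (pZero3 p * (1 + velocityDot p ξ))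

lemma sq_japaneseBracket (a : ℝ) : japaneseBracket a ^ 2 = 1 + a ^ 2 :=
  Real.sq_sqrt (by positivity)

lemma one_le_japaneseBracket (a : ℝ) : 1 ≤ japaneseBracket a :=
  Real.one_le_sqrt.2 (by nlinarith)

lemma japaneseBracket_pos (a : ℝ) : 0 < japaneseBracket a :=
  one_pos.trans_le (one_le_japaneseBracket a)

@[fun_prop]
lemma measurable_japaneseBracket : Measurable japaneseBracket := by
  unfold japaneseBracket; fun_prop

lemma pZero3_pos (p : EuclideanSpace ℝ (Fin 3)) : 0 < pZero3 p := by
  unfold pZero3; positivity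

@[fun_prop]
lemma measurable_pZero3 : Measurable pZero3 := by
  unfold pZero3; fun_prop

@[fun_prop]
lemma measurable_velocityDot (ξ : EuclideanSpace ℝ (Fin 2)) :
    Measurable fun p => velocityDot p ξ := by
  unfold velocityDot; fun_prop

variable {p : EuclideanSpace ℝ (Fin 3)} {ξ e : EuclideanSpace ℝ (Fin 2)}

lemma sq_pZero3_eq (he : ‖e‖ = 1) : pZero3 p ^ 2 = japaneseBracket (p 2) ^ 2 +
    (rotatedCoords e (p 0, p 1)).1 ^ 2 + (rotatedCoords e (p 0, p 1)).2 ^ 2 := by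
  rw [add_assoc, rotatedCoords_sq_add_sq he, sq_japaneseBracket, pZero3,
    Real.sq_sqrt (by positivity), EuclideanSpace.real_norm_sq_eq, Fin.sum_univ_three]
  ring

lemma velocityDot_eq_norm_mul (hξe : ξ = ‖ξ‖ • e) :
    velocityDot p ξ = ‖ξ‖ * ((rotatedCoords e (p 0, p 1)).1 / pZero3 p) := by
  have hcoord (i : Fin 2) : ξ i = ‖ξ‖ * e i := by simpa using congrArg (· i) hξe
  rw [velocityDot, hcoord 0, hcoord 1, rotatedCoords]
  ring

lemma one_sub_norm_sq_div_two_le_one_add_velocityDot :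
    (1 - ‖ξ‖ ^ 2) / 2 ≤ 1 + velocityDot p ξ := by
  obtain ⟨e, he, hξe⟩ := exists_norm_eq_one_and_eq_norm_smul ξ
  rw [velocityDot_eq_norm_mul hξe]
  apply one_sub_sq_div_two_le_one_add_mul
  rw [abs_div, abs_of_pos (pZero3_pos p), div_le_one (pZero3_pos p)]
  refine abs_le_of_sq_le_sq ?_ (pZero3_pos p).le
  nlinarith [sq_pZero3_eq (p := p) he]

lemma sq_add_sq_div_le_one_add_velocityDot (he : ‖e‖ = 1) (hξe : ξ = ‖ξ‖ • e) (hξ : ‖ξ‖ ≤ 1) :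
    (japaneseBracket (p 2) ^ 2 + (rotatedCoords e (p 0, p 1)).2 ^ 2) / (2 * pZero3 p ^ 2)
      ≤ 1 + velocityDot p ξ := by
  have hP := pZero3_pos p
  calc _ = (1 - ((rotatedCoords e (p 0, p 1)).1 / pZero3 p) ^ 2) / 2 := by
        field_simp
        linarith [sq_pZero3_eq (p := p) he]
    _ ≤ 1 + (rotatedCoords e (p 0, p 1)).1 / pZero3 p * ‖ξ‖ :=
        one_sub_sq_div_two_le_one_add_mul (by simpa using hξ)
    _ = 1 + velocityDot p ξ := by rw [velocityDot_eq_norm_mul hξe, mul_comm]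

lemma inv_two_mul_sq_pZero3_le_one_add_velocityDot (hξ : ‖ξ‖ ≤ 1) :
    (2 * pZero3 p ^ 2)⁻¹ ≤ 1 + velocityDot p ξ := by
  obtain ⟨e, he, hξe⟩ := exists_norm_eq_one_and_eq_norm_smul ξ
  have hP := pZero3_pos p
  refine le_trans ?_ (sq_add_sq_div_le_one_add_velocityDot he hξe hξ)
  rw [inv_eq_one_div, sq_japaneseBracket]
  gcongr
  nlinarith

lemma one_add_velocityDot_pos (hξ : ‖ξ‖ ≤ 1) : 0 < 1 + velocityDot p ξ := by
  have hP := pZero3_pos p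
  exact lt_of_lt_of_le (by positivity) (inv_two_mul_sq_pZero3_le_one_add_velocityDot hξ)

lemma singularWeight_le_of_lt_mul {r R : ℝ} (hr : 0 ≤ r) (hR : 0 < R) (he : ‖e‖ = 1)
    (hξe : ξ = ‖ξ‖ • e) (hξ : ‖ξ‖ ≤ 1) (hp : pZero3 p < R * japaneseBracket (p 2)) :
    singularWeight ξ p ≤ japaneseBracket (p 2) ^ (4 + r) *
      (2 ^ (1 + r / 2) * R * slabProfile r R (rotatedCoords e (p 0, p 1))) := by
  have hlower := sq_add_sq_div_le_one_add_velocityDot (p := p) he hξe hξ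
  have hsq := sq_pZero3_eq (p := p) he
  have hP := pZero3_pos p
  have ha := one_le_japaneseBracket (p 2)
  have ha0 := japaneseBracket_pos (p 2)
  rw [singularWeight, slabProfile]
  set P := pZero3 p
  set a := japaneseBracket (p 2)
  set x := (rotatedCoords e (p 0, p 1)).1
  set y := (rotatedCoords e (p 0, p 1)).2
  have hx : |x / R| ≤ a := by
    rw [abs_div, abs_of_pos hR, div_le_iff₀ hR, mul_comm]
    exact (abs_le_of_sq_le_sq (by nlinarith) hP.le).trans hp.le
  have hslab : 1 ≤ 2 ^ (r / 2) * a ^ r * (1 + (x / R) ^ 2) ^ (-r / 2) := by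
    rw [neg_div, Real.rpow_neg (by positivity), ← div_eq_mul_inv, one_le_div (by positivity)]
    exact one_add_sq_rpow_le hr ha hx
  calc a ^ 3 / (P * (1 + velocityDot p ξ))
      ≤ a ^ 3 / (P * ((1 + y ^ 2) / (2 * P ^ 2))) := by
        gcongr
        exact le_trans (by gcongr; nlinarith) hlower
    _ = 2 * P * a ^ 3 * (1 + y ^ 2)⁻¹ := by field_simp
    _ ≤ 2 * (R * a) * a ^ 3 * (1 + y ^ 2)⁻¹ := by gcongr
    _ ≤ 2 * (R * a) * a ^ 3 * (1 + y ^ 2)⁻¹ *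
          (2 ^ (r / 2) * a ^ r * (1 + (x / R) ^ 2) ^ (-r / 2)) :=
        le_mul_of_one_le_right (by positivity) hslab
    _ = _ := by
        rw [Real.rpow_add ha0, Real.rpow_add two_pos, Real.rpow_one, Real.rpow_ofNat]
        ring

lemma singularWeight_le_of_mul_le {R : ℝ} (hR : 0 < R) (hξ : ‖ξ‖ ≤ 1)
    (hp : R * japaneseBracket (p 2) ≤ pZero3 p) :
    singularWeight ξ p ≤ R ^ (-3 : ℝ) * (pZero3 p ^ 2 / (1 + velocityDot p ξ)) := by
  have hP := pZero3_pos p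
  have hv := one_add_velocityDot_pos (p := p) hξ
  have hle : japaneseBracket (p 2) ≤ pZero3 p / R := by rwa [le_div_iff₀' hR]
  have ha := japaneseBracket_pos (p 2)
  calc singularWeight ξ p ≤ (pZero3 p / R) ^ 3 / (pZero3 p * (1 + velocityDot p ξ)) := by
        unfold singularWeight; gcongr
    _ = R ^ (-3 : ℝ) * (pZero3 p ^ 2 / (1 + velocityDot p ξ)) := by
        rw [Real.rpow_neg hR.le, Real.rpow_ofNat]
        field_simp

lemma ofReal_singularWeight_le_add {r R : ℝ} (hr : 0 ≤ r) (hR : 0 < R) (he : ‖e‖ = 1)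
    (hξe : ξ = ‖ξ‖ • e) (hξ : ‖ξ‖ ≤ 1) :
    ENNReal.ofReal (singularWeight ξ p) ≤
      ENNReal.ofReal (japaneseBracket (p 2) ^ (4 + r)) *
          ENNReal.ofReal (2 ^ (1 + r / 2) * R * slabProfile r R (rotatedCoords e (p 0, p 1))) +
        ENNReal.ofReal (R ^ (-3 : ℝ)) *
          ENNReal.ofReal (pZero3 p ^ 2 / (1 + velocityDot p ξ)) := by
  have ha := japaneseBracket_pos (p 2)
  rw [← ENNReal.ofReal_mul (by positivity), ← ENNReal.ofReal_mul (by positivity)]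
  rcases lt_or_ge (pZero3 p) (R * japaneseBracket (p 2)) with hp | hp
  · exact (ENNReal.ofReal_le_ofReal (singularWeight_le_of_lt_mul hr hR he hξe hξ hp)).trans
      le_self_add
  · exact (ENNReal.ofReal_le_ofReal (singularWeight_le_of_mul_le hR hξ hp)).trans le_add_self

end SingularWeight

section Estimates

variable {F : EuclideanSpace ℝ (Fin 3) → ℝ≥0∞} {M : ℝ≥0} {r : ℝ} {ξ : EuclideanSpace ℝ (Fin 2)}

lemma lintegral_singularWeight_le_add (hF : Measurable F) (hr : 1 < r)
    (hslice : ∀ p₁ p₂ : ℝ,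
      ∫⁻ p₃, F (vec3 p₁ p₂ p₃) * ENNReal.ofReal (japaneseBracket p₃ ^ (4 + r)) ≤ M)
    (hξ : ‖ξ‖ ≤ 1) {R : ℝ} (hR : 0 < R) :
    ∫⁻ p, F p * ENNReal.ofReal (singularWeight ξ p) ≤
      (M * slabConstant r : ℝ≥0) * ENNReal.ofReal (R ^ 2) + ENNReal.ofReal (R ^ (-3 : ℝ)) *
        ∫⁻ p, F p * ENNReal.ofReal (pZero3 p ^ 2 / (1 + velocityDot p ξ)) := by
  obtain ⟨e, he, hξe⟩ := exists_norm_eq_one_and_eq_norm_smul ξ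
  let G : EuclideanSpace ℝ (Fin 3) → ℝ≥0∞ :=
    fun p => F p * ENNReal.ofReal (japaneseBracket (p 2) ^ (4 + r))
  let J : ℝ × ℝ → ℝ≥0∞ :=
    fun q => ENNReal.ofReal (2 ^ (1 + r / 2) * R * slabProfile r R (rotatedCoords e q))
  have hG : Measurable G := by fun_prop
  have hJ : Measurable J := by
    have hrot := (measurePreserving_rotatedCoords he).measurable
    fun_prop
  calc ∫⁻ p, F p * ENNReal.ofReal (singularWeight ξ p)
      ≤ ∫⁻ p, (G p * J (p 0, p 1) + ENNReal.ofReal (R ^ (-3 : ℝ)) *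
          (F p * ENNReal.ofReal (pZero3 p ^ 2 / (1 + velocityDot p ξ)))) := by
        refine lintegral_mono fun p => ?_
        refine (mul_le_mul_right (ofReal_singularWeight_le_add (r := r) (by linarith)
          hR he hξe hξ) (F p)).trans_eq ?_
        simp only [G, J]
        ring
    _ = (∫⁻ p, G p * J (p 0, p 1)) + ENNReal.ofReal (R ^ (-3 : ℝ)) *
          ∫⁻ p, F p * ENNReal.ofReal (pZero3 p ^ 2 / (1 + velocityDot p ξ)) := by
        rw [lintegral_add_right _ (by fun_prop), lintegral_const_mul _ (by fun_prop)]
    _ ≤ M * (∫⁻ q, J q) + _ := by gcongr; exact lintegral_mul_comp_le_of_slice_le hG hJ hslice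
    _ = _ := by
        rw [lintegral_slabProfile_rotatedCoords hr hR he, ENNReal.coe_mul, mul_assoc]

lemma lintegral_singularWeight_le (hF : Measurable F) (hr : 1 < r)
    (hslice : ∀ p₁ p₂ : ℝ,
      ∫⁻ p₃, F (vec3 p₁ p₂ p₃) * ENNReal.ofReal (japaneseBracket p₃ ^ (4 + r)) ≤ M)
    (hξ : ‖ξ‖ ≤ 1) :
    ∫⁻ p, F p * ENNReal.ofReal (singularWeight ξ p) ≤ (M * slabConstant r + 1 : ℝ≥0) *
      (∫⁻ p, F p * ENNReal.ofReal (pZero3 p ^ 2 / (1 + velocityDot p ξ))) ^ (2 / 5 : ℝ) := by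
  have hexponent : (2 / 5 : ℝ) = 2 / (2 + 3) := by norm_num
  rw [hexponent, ENNReal.coe_add, ENNReal.coe_one]
  refine le_mul_rpow_of_forall_le_add two_pos zero_le_three ENNReal.coe_ne_top fun R hR => ?_
  simpa only [Real.rpow_two] using lintegral_singularWeight_le_add hF hr hslice hξ hR

lemma sq_pZero3_div_le_of_norm_lt_one (hξ : ‖ξ‖ < 1) (p : EuclideanSpace ℝ (Fin 3)) :
    pZero3 p ^ 2 / (1 + velocityDot p ξ) ≤ 2 * (1 - ‖ξ‖ ^ 2)⁻¹ * pZero3 p ^ 2 := by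
  have hpos : 0 < 1 - ‖ξ‖ ^ 2 := by nlinarith [norm_nonneg ξ]
  calc pZero3 p ^ 2 / (1 + velocityDot p ξ) ≤ pZero3 p ^ 2 / ((1 - ‖ξ‖ ^ 2) / 2) := by
        gcongr
        exact one_sub_norm_sq_div_two_le_one_add_velocityDot
    _ = 2 * (1 - ‖ξ‖ ^ 2)⁻¹ * pZero3 p ^ 2 := by field_simp

lemma sq_pZero3_div_le (hξ : ‖ξ‖ ≤ 1) (p : EuclideanSpace ℝ (Fin 3)) :
    pZero3 p ^ 2 / (1 + velocityDot p ξ) ≤ 2 * pZero3 p ^ 4 := by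
  have hP := pZero3_pos p
  calc pZero3 p ^ 2 / (1 + velocityDot p ξ) ≤ pZero3 p ^ 2 / (2 * pZero3 p ^ 2)⁻¹ := by
        gcongr
        exact inv_two_mul_sq_pZero3_le_one_add_velocityDot hξ
    _ = 2 * pZero3 p ^ 4 := by field_simp

/-- The constant of both estimates, for slice bound `M` and weight exponent `4 + r`. -/
noncomputable def singularityConstant (M : ℝ≥0) (r : ℝ) : ℝ≥0 :=
  (M * slabConstant r + 1) * 2 ^ (2 / 5 : ℝ)

lemma singularityConstant_pos (M : ℝ≥0) (r : ℝ) : 0 < singularityConstant M r := by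
  unfold singularityConstant; positivity

lemma lintegral_singularWeight_le_of_div_le (hF : Measurable F) (hr : 1 < r)
    (hslice : ∀ p₁ p₂ : ℝ,
      ∫⁻ p₃, F (vec3 p₁ p₂ p₃) * ENNReal.ofReal (japaneseBracket p₃ ^ (4 + r)) ≤ M)
    (hξ : ‖ξ‖ ≤ 1) {c : ℝ} (hc : 0 ≤ c) {k : ℕ}
    (hle : ∀ p, pZero3 p ^ 2 / (1 + velocityDot p ξ) ≤ 2 * c * pZero3 p ^ k) :
    ∫⁻ p, F p * ENNReal.ofReal (singularWeight ξ p) ≤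
      singularityConstant M r * ENNReal.ofReal c ^ (2 / 5 : ℝ) *
        (∫⁻ p, ENNReal.ofReal (pZero3 p ^ k) * F p) ^ (2 / 5 : ℝ) := by
  have hmoment : ∫⁻ p, F p * ENNReal.ofReal (pZero3 p ^ 2 / (1 + velocityDot p ξ)) ≤
      2 * ENNReal.ofReal c * ∫⁻ p, ENNReal.ofReal (pZero3 p ^ k) * F p := by
    rw [← lintegral_const_mul _ (by fun_prop)]
    refine lintegral_mono fun p => ?_
    calc F p * ENNReal.ofReal (pZero3 p ^ 2 / (1 + velocityDot p ξ))
        ≤ F p * ENNReal.ofReal (2 * c * pZero3 p ^ k) := by gcongr; exact hle p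
      _ = 2 * ENNReal.ofReal c * (ENNReal.ofReal (pZero3 p ^ k) * F p) := by
          rw [ENNReal.ofReal_mul (by positivity), ENNReal.ofReal_mul two_pos.le,
            ENNReal.ofReal_ofNat]
          ring
  calc _ ≤ (M * slabConstant r + 1 : ℝ≥0) *
        (∫⁻ p, F p * ENNReal.ofReal (pZero3 p ^ 2 / (1 + velocityDot p ξ))) ^ (2 / 5 : ℝ) :=
        lintegral_singularWeight_le hF hr hslice hξ
    _ ≤ (M * slabConstant r + 1 : ℝ≥0) *
        (2 * ENNReal.ofReal c * ∫⁻ p, ENNReal.ofReal (pZero3 p ^ k) * F p) ^ (2 / 5 : ℝ) := by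
        gcongr
    _ = _ := by
        rw [ENNReal.mul_rpow_of_nonneg _ _ (by norm_num),
          ENNReal.mul_rpow_of_nonneg _ _ (by norm_num), singularityConstant, ENNReal.coe_mul,
          ENNReal.coe_rpow_of_nonneg _ (by norm_num), ENNReal.coe_ofNat]
        ring

end Estimates

/-- **Momentum-singularity estimates in two-and-one-half dimensions** (Lemma 7.9).
Let `f : ℝ³ → [0,∞)` be measurable with `sup_{p₁,p₂} ∫ f ⟨p₃⟩^{5+δ} dp₃ ≤ C₀`, and let
`ξ ∈ ℝ²`, `|ξ| ≤ 1`.  Then there is `C = C(C₀, δ)` such that, writing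
`p̂·ξ = (p₁ξ₁ + p₂ξ₂)/p₀`:
(i) if `|ξ| < 1` then `∫ f ⟨p₃⟩³/(p₀(1+p̂·ξ)) dp ≤ C (1−|ξ|²)^{−2/5} (∫ p₀² f dp)^{2/5}`;
(ii) `∫ f ⟨p₃⟩³/(p₀(1+p̂·ξ)) dp ≤ C (∫ p₀⁴ f dp)^{2/5}`. -/
theorem singularity_estimates_2_5d (δ C₀ : ℝ) (hδ : 0 < δ) (hC₀ : 0 < C₀) :
    ∃ C : ℝ≥0, 0 < C ∧
      ∀ (f : EuclideanSpace ℝ (Fin 3) → ℝ),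
        Measurable f → (∀ p, 0 ≤ f p) →
        (∀ p₁ p₂ : ℝ,
          (∫⁻ p₃ : ℝ, ENNReal.ofReal
              (f (vec3 p₁ p₂ p₃) * Real.sqrt (1 + p₃ ^ 2) ^ (5 + δ)))
            ≤ ENNReal.ofReal C₀) →
        ∀ (ξ : EuclideanSpace ℝ (Fin 2)), ‖ξ‖ ≤ 1 →
          ((‖ξ‖ < 1 →
            (∫⁻ p, ENNReal.ofReal (f p * Real.sqrt (1 + (p 2) ^ 2) ^ 3 /
                (pZero3 p * (1 + (p 0 * ξ 0 + p 1 * ξ 1) / pZero3 p))))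
              ≤ C * ENNReal.ofReal (1 - ‖ξ‖ ^ 2) ^ (-(2 / 5) : ℝ)
                * (∫⁻ p, ENNReal.ofReal (pZero3 p ^ 2 * f p)) ^ ((2 : ℝ) / 5))
          ∧ (∫⁻ p, ENNReal.ofReal (f p * Real.sqrt (1 + (p 2) ^ 2) ^ 3 /
                (pZero3 p * (1 + (p 0 * ξ 0 + p 1 * ξ 1) / pZero3 p))))
              ≤ C * (∫⁻ p, ENNReal.ofReal (pZero3 p ^ 4 * f p)) ^ ((2 : ℝ) / 5)) := by
  refine ⟨singularityConstant C₀.toNNReal (1 + δ), singularityConstant_pos _ _,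
    fun f hf hf0 hb ξ hξ => ?_⟩
  have hslice (p₁ p₂ : ℝ) : ∫⁻ p₃, ENNReal.ofReal (f (vec3 p₁ p₂ p₃)) *
      ENNReal.ofReal (japaneseBracket p₃ ^ (4 + (1 + δ))) ≤ C₀.toNNReal := by
    simp only [← ENNReal.ofReal_mul (hf0 _), japaneseBracket, show 4 + (1 + δ) = 5 + δ by ring]
    exact hb p₁ p₂
  have hweight (p : EuclideanSpace ℝ (Fin 3)) :
      ENNReal.ofReal (f p * Real.sqrt (1 + (p 2) ^ 2) ^ 3 /
        (pZero3 p * (1 + (p 0 * ξ 0 + p 1 * ξ 1) / pZero3 p)))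
        = ENNReal.ofReal (f p) * ENNReal.ofReal (singularWeight ξ p) := by
    rw [← ENNReal.ofReal_mul (hf0 p), mul_div_assoc]; rfl
  have hmoment (k : ℕ) (p : EuclideanSpace ℝ (Fin 3)) : ENNReal.ofReal (pZero3 p ^ k * f p) =
      ENNReal.ofReal (pZero3 p ^ k) * ENNReal.ofReal (f p) :=
    ENNReal.ofReal_mul (pow_nonneg (pZero3_pos p).le k)
  have hbound {c : ℝ} (hc : 0 ≤ c) {k : ℕ} :=
    lintegral_singularWeight_le_of_div_le hf.ennreal_ofReal (by linarith) hslice hξ hc (k := k)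
  simp only [hweight, hmoment]
  refine ⟨fun hξ1 => ?_, ?_⟩
  · have hpos : 0 < 1 - ‖ξ‖ ^ 2 := by nlinarith [norm_nonneg ξ]
    simpa only [ENNReal.ofReal_inv_of_pos hpos, ENNReal.inv_rpow, ENNReal.rpow_neg]
      using hbound (inv_nonneg.2 hpos.le) (sq_pZero3_div_le_of_norm_lt_one hξ1)
  · simpa using hbound zero_le_one (k := 4) (by simpa using sq_pZero3_div_le hξ)
end
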